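/- arXiv:1211.3442 — 3 statements merged into one kernel-verified Lean document; each statement's English description precedes it below -/
import Mathlib

section
/- Let A(z) = Σ_{n≥0} |M_n(312)| zⁿ be the generating function (as a formal power series over ℚ) for 312-avoiding perfect matchings. Then A(z) satisfies the polynomial identity (2(1+4z)² A(z) − (1+36z))² = (1−12z)³; equivalently, A(z) = 54z / (1 + 36z − (1−12z)^{3/2}) = (1 + 36z + (1−12z)^{3/2}) / (2(1+4z)²). -/
/-! ### Patterns of length 3 and 4 as permutations (0-indexed values) -/

def p123 : Equiv.Perm (Fin 3) :=
  ⟨![0,1,2], ![0,1,2], by intro x; fin_cases x <;> rfl, by intro x; fin_cases x <;> rfl⟩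
def p132 : Equiv.Perm (Fin 3) :=
  ⟨![0,2,1], ![0,2,1], by intro x; fin_cases x <;> rfl, by intro x; fin_cases x <;> rfl⟩
def p213 : Equiv.Perm (Fin 3) :=
  ⟨![1,0,2], ![1,0,2], by intro x; fin_cases x <;> rfl, by intro x; fin_cases x <;> rfl⟩
def p231 : Equiv.Perm (Fin 3) :=
  ⟨![1,2,0], ![2,0,1], by intro x; fin_cases x <;> rfl, by intro x; fin_cases x <;> rfl⟩
def p312 : Equiv.Perm (Fin 3) :=
  ⟨![2,0,1], ![1,2,0], by intro x; fin_cases x <;> rfl, by intro x; fin_cases x <;> rfl⟩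
def p321 : Equiv.Perm (Fin 3) :=
  ⟨![2,1,0], ![2,1,0], by intro x; fin_cases x <;> rfl, by intro x; fin_cases x <;> rfl⟩
def p1342 : Equiv.Perm (Fin 4) :=
  ⟨![0,2,3,1], ![0,3,1,2], by intro x; fin_cases x <;> rfl, by intro x; fin_cases x <;> rfl⟩
def p1324 : Equiv.Perm (Fin 4) :=
  ⟨![0,2,1,3], ![0,2,1,3], by intro x; fin_cases x <;> rfl, by intro x; fin_cases x <;> rfl⟩

/-! ### Perfect matchings of `[2n] = {1, …, 2n}` as finsets of pairs `(i,j)`, `i < j` -/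

/-- `M` is a perfect matching of `{1, …, 2n}`. -/
def IsPerfectMatching (n : ℕ) (M : Finset (ℕ × ℕ)) : Prop :=
  (∀ p ∈ M, p.1 < p.2 ∧ 1 ≤ p.1 ∧ p.2 ≤ 2 * n) ∧
  ∀ x, 1 ≤ x → x ≤ 2 * n → ∃! p, p ∈ M ∧ (p.1 = x ∨ p.2 = x)

/-- The matching `M` contains the pattern `τ ∈ S_k`: there are
`i_1 < i_2 < ⋯ < i_{2k}` with `(i_a, i_{2k+1-τ(a)}) ∈ M` for all `1 ≤ a ≤ k`
(written here 0-indexed). -/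
def MatchContains {k : ℕ} (τ : Equiv.Perm (Fin k)) (M : Finset (ℕ × ℕ)) : Prop :=
  ∃ f : Fin (2 * k) → ℕ, StrictMono f ∧
    ∀ a : Fin k,
      (f ⟨a.1, by have := a.isLt; omega⟩,
       f ⟨2 * k - 1 - (τ a).1, by have := (τ a).isLt; omega⟩) ∈ M

def MatchAvoids {k : ℕ} (τ : Equiv.Perm (Fin k)) (M : Finset (ℕ × ℕ)) : Prop :=
  ¬ MatchContains τ M

/-! ### Dyck paths as lists of booleans (`true` = east step, `false` = south step) -/

/-- A Dyck path of semilength `n`, from `(0,n)` to `(n,0)`, staying weakly above `y = n - x`. -/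
def IsDyckPath (n : ℕ) (t : List Bool) : Prop :=
  t.length = 2 * n ∧ t.count true = n ∧
  ∀ i, (t.take i).count false ≤ (t.take i).count true

/-- The height (distance above the diagonal) of the `i`-th vertex of the path `t`. -/
def pathHeight (t : List Bool) (i : ℕ) : ℤ :=
  ((t.take i).count true : ℤ) - ((t.take i).count false : ℤ)

/-- `s` lies weakly below `t` (for paths of the same semilength). -/
def WeaklyBelow (s t : List Bool) : Prop := ∀ i, pathHeight s i ≤ pathHeight t i

/-- The shape of a matching of `[2n]`: an east step for each opener, a south step for
each closer. -/
def shapeOf (n : ℕ) (M : Finset (ℕ × ℕ)) : List Bool :=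
  (List.range (2 * n)).map fun x => decide ((x + 1) ∈ M.image Prod.fst)

/-- Number of returns of a path: south steps ending on the diagonal. -/
def returnsOf (t : List Bool) : ℕ :=
  ((Finset.range t.length).filter fun i =>
    t[i]? = some false ∧ (t.take (i+1)).count true = (t.take (i+1)).count false).card

/-- Height sequence of a path, as natural numbers. -/
def hseq (t : List Bool) (i : ℕ) : ℕ := (t.take i).count true - (t.take i).count false

/-- `η(F)`: the number of indices `0 ≤ i ≤ 2n` with `h_i = 2`. -/
def etaOf (n : ℕ) (t : List Bool) : ℕ :=
  ((Finset.range (2 * n + 1)).filter fun i => hseq t i = 2).card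

/-! ### Full rook placements on Ferrers boards -/

/-- The square in column `c`, row `r` (both 1-indexed from the bottom left) belongs to the
Ferrers board with border path `t ∈ F_n`. -/
def InBoard (n : ℕ) (t : List Bool) (c r : ℕ) : Prop :=
  1 ≤ c ∧ 1 ≤ r ∧ ∃ i, c ≤ (t.take i).count true ∧ (t.take i).count false + r ≤ n

/-- `R` is a full rook placement on the Ferrers board with border path `t ∈ F_n`:
one rook in each of the `n` rows and `n` columns. -/
def IsFullRookPlacement (n : ℕ) (t : List Bool) (R : Finset (ℕ × ℕ)) : Prop :=
  (∀ p ∈ R, InBoard n t p.1 p.2) ∧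
  (∀ c, 1 ≤ c → c ≤ n → ∃! p, p ∈ R ∧ p.1 = c) ∧
  (∀ r, 1 ≤ r → r ≤ n → ∃! p, p ∈ R ∧ p.2 = r)

/-- The rooks of `R` lying in the rectangle `Γ(V_i)` determined by the `i`-th border vertex. -/
def rectRooks (n : ℕ) (t : List Bool) (R : Finset (ℕ × ℕ)) (i : ℕ) : Finset (ℕ × ℕ) :=
  R.filter fun p => p.1 ≤ (t.take i).count true ∧ p.2 + (t.take i).count false ≤ n

/-- Length of the longest increasing sequence (in both coordinates) in a finite point set. -/
def lisLen (S : Finset (ℕ × ℕ)) : ℕ :=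
  (S.powerset.filter fun T => ∀ p ∈ T, ∀ q ∈ T, p.1 < q.1 → p.2 < q.2).sup Finset.card

/-- The full rook placement `R` on the board with border `t ∈ F_n` contains the pattern `τ`:
some rectangle `Γ(V_i)` contains an occurrence of `τ`. -/
def PlacementContains {k : ℕ} (τ : Equiv.Perm (Fin k)) (n : ℕ) (t : List Bool)
    (R : Finset (ℕ × ℕ)) : Prop :=
  ∃ i ≤ 2 * n, ∃ f : Fin k → ℕ × ℕ,
    (∀ a, f a ∈ R ∧ (f a).1 ≤ (t.take i).count true ∧ (f a).2 + (t.take i).count false ≤ n) ∧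
    (∀ a b : Fin k, a < b → (f a).1 < (f b).1) ∧
    (∀ a b : Fin k, τ a < τ b → (f a).2 < (f b).2)

def PlacementAvoids {k : ℕ} (τ : Equiv.Perm (Fin k)) (n : ℕ) (t : List Bool)
    (R : Finset (ℕ × ℕ)) : Prop :=
  ¬ PlacementContains τ n t R

/-- `R` is board-minimal on the board with border `t`: every peak corner square holds a rook. -/
def BoardMinimal (n : ℕ) (t : List Bool) (R : Finset (ℕ × ℕ)) : Prop :=
  ∀ i, t[i]? = some true → t[i+1]? = some false →
    ((t.take (i+1)).count true, n - (t.take (i+1)).count false) ∈ R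

/-- Board-minimal full rook placements on boards of `F_n` avoiding the pattern `σ`,
recorded as pairs (border path, rook set). -/
def MinPlacements (n : ℕ) {k : ℕ} (σ : Equiv.Perm (Fin k)) :
    Set (List Bool × Finset (ℕ × ℕ)) :=
  {tR | IsDyckPath n tR.1 ∧ IsFullRookPlacement n tR.1 tR.2 ∧ BoardMinimal n tR.1 tR.2 ∧
        PlacementAvoids σ n tR.1 tR.2}

/-! ### Pattern avoidance in permutations -/

def PermContains {n k : ℕ} (τ : Equiv.Perm (Fin k)) (π : Equiv.Perm (Fin n)) : Prop :=
  ∃ f : Fin k → Fin n, StrictMono f ∧ ∀ a b : Fin k, τ a < τ b → π (f a) < π (f b)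

def PermAvoids {n k : ℕ} (τ : Equiv.Perm (Fin k)) (π : Equiv.Perm (Fin n)) : Prop :=
  ¬ PermContains τ π

/-- The full rook placement associated to a permutation of `[n]`. -/
def permPlacement {n : ℕ} (π : Equiv.Perm (Fin n)) : Finset (ℕ × ℕ) :=
  Finset.univ.image fun i : Fin n => ((i : ℕ) + 1, (π i : ℕ) + 1)

/-! ### Matchings with fixed points -/

/-- A (not necessarily perfect) matching on `{1, …, m}`: pairwise disjoint pairs. -/
def IsPartialMatching (m : ℕ) (M : Finset (ℕ × ℕ)) : Prop :=
  (∀ p ∈ M, p.1 < p.2 ∧ 1 ≤ p.1 ∧ p.2 ≤ m) ∧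
  ∀ p ∈ M, ∀ q ∈ M, p ≠ q → p.1 ≠ q.1 ∧ p.1 ≠ q.2 ∧ p.2 ≠ q.1 ∧ p.2 ≠ q.2

/-- The fixed points (unmatched vertices) of a matching on `{1, …, m}`. -/
def fixedPts (m : ℕ) (M : Finset (ℕ × ℕ)) : Finset ℕ :=
  (Finset.Icc 1 m).filter fun x => ∀ p ∈ M, p.1 ≠ x ∧ p.2 ≠ x

/-- The matched vertices of a matching on `{1, …, m}`. -/
def matchedSet (m : ℕ) (M : Finset (ℕ × ℕ)) : Finset ℕ :=
  (Finset.Icc 1 m).filter fun x => ∃ p ∈ M, p.1 = x ∨ p.2 = x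

/-- The rank (1-based) of `x` inside the finset `S`. -/
def rankIn (S : Finset ℕ) (x : ℕ) : ℕ := (S.filter (· ≤ x)).card

/-- The matching obtained by removing the fixed points and relabeling increasingly. -/
def relabeled (m : ℕ) (M : Finset (ℕ × ℕ)) : Finset (ℕ × ℕ) :=
  M.image fun p => (rankIn (matchedSet m M) p.1, rankIn (matchedSet m M) p.2)

/-! ### Set partitions -/

/-- `(i,j)` is an arc of the set partition `P` of `{1, …, n}`: `i < j` lie in a common block
with no element of that block strictly between them. -/
def PartArc {n : ℕ} (P : Finpartition (Finset.Icc 1 n)) (i j : ℕ) : Prop :=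
  i < j ∧ ∃ B ∈ P.parts, i ∈ B ∧ j ∈ B ∧ ∀ x ∈ B, ¬(i < x ∧ x < j)

/-- The set partition `P` contains the pattern `τ ∈ S_k`. -/
def PartContains {k n : ℕ} (τ : Equiv.Perm (Fin k)) (P : Finpartition (Finset.Icc 1 n)) : Prop :=
  ∃ f : Fin (2 * k) → ℕ, StrictMono f ∧
    ∀ a : Fin k,
      PartArc P (f ⟨a.1, by have := a.isLt; omega⟩)
        (f ⟨2 * k - 1 - (τ a).1, by have := (τ a).isLt; omega⟩)

def PartAvoids {k n : ℕ} (τ : Equiv.Perm (Fin k)) (P : Finpartition (Finset.Icc 1 n)) : Prop :=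
  ¬ PartContains τ P

/-! ### Counting functions -/

/-- `|M_n(τ)|`: the number of `τ`-avoiding perfect matchings of `[2n]`. -/
noncomputable def mcount {k : ℕ} (τ : Equiv.Perm (Fin k)) (n : ℕ) : ℕ :=
  {M : Finset (ℕ × ℕ) | IsPerfectMatching n M ∧ MatchAvoids τ M}.ncard

/-- `|M_n(σ,τ)|`: the number of perfect matchings of `[2n]` avoiding both `σ` and `τ`. -/
noncomputable def mcount2 {k : ℕ} (σ τ : Equiv.Perm (Fin k)) (n : ℕ) : ℕ :=
  {M : Finset (ℕ × ℕ) | IsPerfectMatching n M ∧ MatchAvoids σ M ∧ MatchAvoids τ M}.ncard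

/-- `|P_n(τ)|`: the number of `τ`-avoiding set partitions of `[n]`. -/
noncomputable def pcount {k : ℕ} (τ : Equiv.Perm (Fin k)) (n : ℕ) : ℕ :=
  Nat.card {P : Finpartition (Finset.Icc 1 n) // PartAvoids τ P}

/-- `|P_n(σ,τ)|`: the number of set partitions of `[n]` avoiding both `σ` and `τ`. -/
noncomputable def pcount2 {k : ℕ} (σ τ : Equiv.Perm (Fin k)) (n : ℕ) : ℕ :=
  Nat.card {P : Finpartition (Finset.Icc 1 n) // PartAvoids σ P ∧ PartAvoids τ P}

/-- `|S_n(τ)|`: the number of `τ`-avoiding permutations of `[n]`. -/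
noncomputable def scount {k : ℕ} (τ : Equiv.Perm (Fin k)) (n : ℕ) : ℕ :=
  Nat.card {π : Equiv.Perm (Fin n) // PermAvoids τ π}

/-- The generating function `A(z) = Σ_{n≥0} |M_n(312)| zⁿ` over `ℚ`. -/
noncomputable def A312 : PowerSeries ℚ := PowerSeries.mk fun n => (mcount p312 n : ℚ)

/-!
Scan the vertices from left to right and write, for each vertex that is still unmatched, newest
first, a flag `1` or `0` telling whether it may be matched with the next vertex without forcing a
pattern `312`. Opening a vertex prepends a `1`. Closing the vertex of the `1` in `u1v` blocks all
newer unmatched vertices except the smallest of them and does not affect the older ones, so the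
flags become `0ᵏ⁻¹1v` with `k = |u|`, or `v` if `u` is empty. Hence the flags alone carry
a transfer recursion for the number of ways to reach a given word of flags.

This recursion is solved by a weight that is multiplicative over the blocks `0ᵏ1`. Its block
factors form a power series `G` that solves a quadratic equation with the unknown coefficient
`a = A(z)`; a power series solution exists for `z = y(1 - 3y)` and `a(1 - 2y)² = 1 - 3y`, and
eliminating `y` gives the stated identity.
-/

section Algebra

open PowerSeries
open Finset.HasAntidiagonal (antidiagonal)

variable {R : Type*} [CommRing R]

theorem exists_eq_one_add_mul_sq {f : R⟦X⟧} (hf : constantCoeff f = 0) :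
    ∃ c : R⟦X⟧, c = 1 + f * c ^ 2 := by
  have hs : HasSubst f := .of_constantCoeff_zero' hf
  have hcat := congrArg (substAlgHom (R := R) hs ∘ map (Nat.castRingHom R))
    catalanSeries_sq_mul_X_add_one
  simp only [Function.comp_apply, map_add, map_mul, map_pow, map_one, map_X, substAlgHom_X]
    at hcat
  exact ⟨_, hcat.symm.trans (by ring)⟩

variable (R) in
theorem exists_parametrization :
    ∃ y a : R⟦X⟧, X = y * (1 - 3 * y) ∧ IsUnit (1 - 3 * y) ∧
      a * (1 - 2 * y) ^ 2 = 1 - 3 * y := by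
  obtain ⟨c, hc⟩ := exists_eq_one_add_mul_sq (R := R) (f := 3 * X) (by simp)
  have hunit (k : R⟦X⟧) : IsUnit (1 - k * (X * c)) :=
    isUnit_iff_constantCoeff.2 (by simp)
  obtain ⟨e, he⟩ := ((hunit 2).pow 2).exists_left_inv
  refine ⟨X * c, (1 - 3 * (X * c)) * e, ?_, hunit 3, ?_⟩
  · linear_combination -X * hc
  · rw [mul_assoc, he, mul_one]

theorem sq_eq_of_parametrization {x y a : R} (hx : x = y * (1 - 3 * y))
    (ha : a * (1 - 2 * y) ^ 2 = 1 - 3 * y) :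
    (2 * (1 + 4 * x) ^ 2 * a - (1 + 36 * x)) ^ 2 = (1 - 12 * x) ^ 3 := by
  have hxa : (1 + 4 * x) ^ 2 * a = (1 - 3 * y) * (1 + 6 * y) ^ 2 := by
    subst hx
    linear_combination (1 + 6 * y) ^ 2 * ha
  rw [mul_assoc, hxa, hx]
  ring

theorem exists_quadratic_root {y a : R} (hy : IsUnit (1 - 3 * y))
    (ha : a * (1 - 2 * y) ^ 2 = 1 - 3 * y) :
    ∃ G : R⟦X⟧, constantCoeff G = 1 ∧
      C a * C (y * (1 - 3 * y)) * G ^ 2 + C a * (X ^ 2 - X - C (y * (1 - 3 * y))) * G + X = 0 := by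
  -- With `(1 - 3y) G = 1 - 3y + X (1 + (X - y) w)` the quadratic becomes
  -- `(1 - 3y - X) w = 1 + X y w²`, which has a power series solution since `1 - 3y` is a unit.
  obtain ⟨e, he⟩ := hy.exists_left_inv
  obtain ⟨E, hE⟩ : ∃ E : R⟦X⟧, E * (C (1 - 3 * y) - X) = 1 :=
    (isUnit_iff_constantCoeff.2 (by simpa using hy)).exists_left_inv
  obtain ⟨c, hc⟩ := exists_eq_one_add_mul_sq (f := X * C y * E ^ 2) (by simp)
  have hw : (C (1 - 3 * y) - X) * (E * c) = 1 + X * C y * (E * c) ^ 2 := by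
    linear_combination c * hE + hc
  set w := E * c
  refine ⟨1 + C e * X * (1 + (X - C y) * w), by simp, ?_⟩
  replace he := congrArg C he
  replace ha := congrArg C ha
  simp only [map_mul, map_sub, map_pow, map_one, map_ofNat] at he ha hw ⊢
  generalize hG : 1 + C e * X * (1 + (X - C y) * w) = G
  have hsG : (1 - 3 * C y) * G = 1 - 3 * C y + X * (1 + (X - C y) * w) := by
    linear_combination X * (1 + (X - C y) * w) * he - (1 - 3 * C y) * hG
  have hkey : C y * ((1 - 3 * C y) * G) ^ 2
      + (X ^ 2 - X - C y * (1 - 3 * C y)) * ((1 - 3 * C y) * G) + X * (1 - 2 * C y) ^ 2 = 0 := by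
    rw [hsG]
    linear_combination -X * (X - C y) ^ 2 * hw
  linear_combination C a * C e * hkey - X * C e * ha
    - (C a * C y * (1 - 3 * C y) * G ^ 2
      + C a * (X ^ 2 - X - C y * (1 - 3 * C y)) * G + X) * he

/-- The equations under which the product weight below counts partial matchings by their flags,
`z` being the weight of an arc: `a` is the weight of the empty word of flags, `t k` is the factor
contributed by a block `0ᵏ1`, and `g k` is the total factor of all words of length `k` that are
products of such blocks. -/
structure IsBlockSystem (z a : R) (t g : ℕ → R) : Prop where
  g_zero : g 0 = 1
  g_succ (k : ℕ) : g (k + 1) = ∑ p ∈ antidiagonal k, t p.1 * g p.2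
  a_eq : a = 1 + z * (t 0 * a)
  t_eq (k : ℕ) : t k = (if k = 0 then 1 else 0) + z * (t 0 * t k + g (k + 2))

theorem isBlockSystem_of_quadratic {z a : R} {G : R⟦X⟧} (hG₀ : constantCoeff G = 1)
    (hG : C a * C z * G ^ 2 + C a * (X ^ 2 - X - C z) * G + X = 0) :
    IsBlockSystem z a (fun k => a * ((if k = 0 then 1 else 0) + z * coeff (k + 2) G))
      (fun k => coeff k G) := by
  set t : ℕ → R := fun k => a * ((if k = 0 then 1 else 0) + z * coeff (k + 2) G) with ht
  have hG₁ : a * (z * coeff 1 G) = a - 1 := by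
    have h := congrArg (coeff 1) hG
    simp only [mul_assoc, map_add, coeff_C_mul, coeff_one_pow, Nat.cast_ofNat, hG₀,
      Nat.add_one_sub_one, one_pow, mul_one, coeff_one_mul, map_sub, coeff_X_pow,
      OfNat.one_ne_ofNat, ↓reduceIte, coeff_one_X, zero_sub, coeff_succ_C, sub_zero, map_pow,
      constantCoeff_X, ne_eq, OfNat.ofNat_ne_zero, not_false_eq_true, zero_pow, sub_self,
      constantCoeff_C, mul_neg, map_zero] at h
    linear_combination h
  have hT : X * (X * mk t) = C a * X ^ 2 + C a * C z * G - C (a * z) - C (a - 1) * X := by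
    ext (_ | _ | k)
    · simp [hG₀]
    · simp [coeff_X_pow, mul_assoc, hG₁]
    · simp [coeff_X_pow, coeff_succ_X_mul, ht, mul_add, mul_assoc]
  have hTG : G = 1 + X * (mk t * G) := by
    refine X_mul_cancel ?_
    simp only [map_sub, map_mul, map_one] at hT
    linear_combination -G * hT - hG
  have hG_succ (k : ℕ) :
      coeff (k + 1) G = ∑ p ∈ antidiagonal k, t p.1 * coeff p.2 G := by
    conv_lhs => rw [hTG]
    rw [map_add, coeff_succ_X_mul, coeff_mul, coeff_one, if_neg k.succ_ne_zero, zero_add]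
    simp only [coeff_mk]
  have ha : a = 1 + z * (t 0 * a) := by
    have ht₀ : coeff 1 G = t 0 := by simpa [hG₀] using hG_succ 0
    rw [← ht₀]
    linear_combination -hG₁
  refine ⟨by simp [hG₀], hG_succ, ha, fun k => ?_⟩
  linear_combination ((if k = 0 then 1 else 0) + z * coeff (k + 2) G) * ha

theorem exists_isBlockSystem {y a : R} (hy : IsUnit (1 - 3 * y))
    (ha : a * (1 - 2 * y) ^ 2 = 1 - 3 * y) :
    ∃ t g : ℕ → R, IsBlockSystem (y * (1 - 3 * y)) a t g :=
  have ⟨_, hG₀, hG⟩ := exists_quadratic_root hy ha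
  ⟨_, _, isBlockSystem_of_quadratic hG₀ hG⟩

end Algebra

section Words

open Finset.HasAntidiagonal (antidiagonal)

/-- The flags of `k` open vertices lying above a vertex that has just been closed: only the
smallest of them is still closable. -/
def fresh : ℕ → List Bool
  | 0 => []
  | k + 1 => List.replicate k false ++ [true]

/-- The words of length `k`. -/
noncomputable def words (k : ℕ) : Finset (List Bool) :=
  (List.finite_length_eq Bool k).toFinset

/-- The flags `u` that the open vertices above a closable vertex may have, if closing that vertex
leads to the flags `w`. -/
noncomputable def closers (w : List Bool) : Finset (List Bool) :=
  {u ∈ (List.finite_length_le Bool w.length).toFinset | fresh u.length <+: w}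

theorem mem_words {k : ℕ} {u : List Bool} : u ∈ words k ↔ u.length = k := by
  simp [words]

theorem length_fresh (k : ℕ) : (fresh k).length = k := by
  cases k <;> simp [fresh]

theorem mem_closers {w u : List Bool} : u ∈ closers w ↔ fresh u.length <+: w := by
  simp only [closers, Finset.mem_filter, Set.Finite.mem_toFinset, Set.mem_ofPred_eq,
    and_iff_right_iff_imp]
  intro h
  simpa [length_fresh] using h.length_le

theorem length_append_true_cons_drop {w u : List Bool} (hu : u ∈ closers w) :
    (u ++ true :: w.drop u.length).length = w.length + 1 := by
  have hle : u.length ≤ w.length := by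
    simpa only [length_fresh] using (mem_closers.1 hu).length_le
  rw [List.length_append, List.length_cons, List.length_drop]
  omega

theorem eq_replicate_false_or (w : List Bool) :
    (∃ k, w = List.replicate k false) ∨ ∃ k r, w = List.replicate k false ++ true :: r := by
  induction w with
  | nil => exact .inl ⟨0, rfl⟩
  | cons b w ih =>
    obtain _ | _ := b
    · obtain ⟨k, rfl⟩ | ⟨k, r, rfl⟩ := ih
      · exact .inl ⟨k + 1, rfl⟩
      · exact .inr ⟨k + 1, r, rfl⟩
    · exact .inr ⟨0, w, rfl⟩

theorem closers_replicate_false (k : ℕ) : closers (List.replicate k false) = {[]} := by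
  ext u
  rw [mem_closers, Finset.mem_singleton, ← List.length_eq_zero_iff]
  cases u.length with
  | zero => simp [fresh]
  | succ j =>
    simp only [fresh, Nat.add_one_ne_zero, iff_false]
    intro h
    simpa using h.subset (List.mem_append_right _ (List.mem_singleton_self true))

theorem closers_replicate_false_append (k : ℕ) (r : List Bool) :
    closers (List.replicate k false ++ true :: r) = insert [] (words (k + 1)) := by
  ext u
  rw [mem_closers, Finset.mem_insert, mem_words, ← List.length_eq_zero_iff]
  cases u.length with
  | zero => simp [fresh]
  | succ j =>
    simp only [fresh, Nat.add_one_ne_zero, Nat.add_right_cancel_iff, false_or]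
    induction k generalizing j with
    | zero => cases j <;> simp [List.replicate_succ]
    | succ k ih => cases j <;> simp [List.replicate_succ, ih]

theorem sum_words_succ {A : Type*} [AddCommMonoid A] (k : ℕ) (f : List Bool → A) :
    ∑ u ∈ words (k + 1), f u = ∑ u ∈ words k, f (false :: u) + ∑ u ∈ words k, f (true :: u) := by
  have hwords : words (k + 1) =
      (words k).image (List.cons false) ∪ (words k).image (List.cons true) := by
    ext (_ | ⟨_ | _, u⟩) <;> simp [mem_words]
  have hdisj : Disjoint ((words k).image (List.cons false)) ((words k).image (List.cons true)) := by
    simp [Finset.disjoint_left]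
  rw [hwords, Finset.sum_union hdisj, Finset.sum_image (by simp), Finset.sum_image (by simp)]

/-- The summand of the transfer recursion for opening a vertex, which prepends `true` to the
flags. -/
def openTerm {A : Type*} [Zero A] (P : List Bool → A) : List Bool → A
  | true :: w => P w
  | _ => 0

/-- The summand of the transfer recursion for closing a vertex: the sum of `P` over the flags
from which closing leads to `w`. -/
noncomputable def closeTerm {A : Type*} [AddCommMonoid A] (P : List Bool → A) (w : List Bool) : A :=
  ∑ u ∈ closers w, P (u ++ true :: w.drop u.length)

variable {R : Type*} [CommRing R]

/-- The product weight of a word of flags: `t k₁ ⋯ t kᵣ * a` for the product of the blocks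
`0ᵏ1`, `k = k₁, …, kᵣ`, and `0` for a word ending in `0`, since the smallest open vertex is always
closable. The numerical argument is the number of zeros already read. -/
def weight (a : R) (t : ℕ → R) : ℕ → List Bool → R
  | c, [] => if c = 0 then a else 0
  | c, false :: w => weight a t (c + 1) w
  | c, true :: w => t c * weight a t 0 w

theorem weight_replicate_false_append (a : R) (t : ℕ → R) (c k : ℕ) (w : List Bool) :
    weight a t c (List.replicate k false ++ w) = weight a t (c + k) w := by
  induction k generalizing c with
  | zero => rfl
  | succ k ih => rw [List.replicate_succ, List.cons_append, weight, ih, add_right_comm, add_assoc]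

namespace IsBlockSystem

variable {z a : R} {t g : ℕ → R}

theorem sum_words_weight (h : IsBlockSystem z a t g) (k c : ℕ) (r : List Bool) :
    ∑ u ∈ words k, weight a t c (u ++ true :: r) =
      (∑ p ∈ antidiagonal k, t (c + p.1) * g p.2) * weight a t 0 r := by
  induction k generalizing c with
  | zero =>
    have h₀ : words 0 = {[]} := by ext; simp [mem_words]
    simp [h₀, weight, h.g_zero]
  | succ k ih =>
    rw [sum_words_succ, Finset.Nat.sum_antidiagonal_succ, add_mul, add_comm]
    simp only [List.cons_append, weight, ← Finset.mul_sum, ih, zero_add, ← h.g_succ, add_zero,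
      mul_assoc, add_assoc, add_comm 1]

theorem closeTerm_weight (h : IsBlockSystem z a t g) (k : ℕ) (r : List Bool) :
    closeTerm (weight a t 0) (List.replicate k false ++ true :: r) =
      (t 0 * t k + g (k + 2)) * weight a t 0 r := by
  have hnil : [] ∉ words (k + 1) := by simp [mem_words]
  have hdrop : (List.replicate k false ++ true :: r).drop (k + 1) = r := by
    simp [List.drop_append]
  have hwords : ∑ u ∈ words (k + 1),
      weight a t 0 (u ++ true :: (List.replicate k false ++ true :: r).drop u.length) =
      g (k + 2) * weight a t 0 r := by
    have hsum := h.sum_words_weight (k + 1) 0 r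
    simp only [zero_add, ← h.g_succ] at hsum
    rw [← hsum]
    exact Finset.sum_congr rfl fun u hu => by rw [mem_words.1 hu, hdrop]
  rw [closeTerm, closers_replicate_false_append, Finset.sum_insert hnil, hwords]
  simp only [List.nil_append, List.length_nil, List.drop_zero, weight,
    weight_replicate_false_append, zero_add]
  ring

theorem weight_eq (h : IsBlockSystem z a t g) (w : List Bool) :
    weight a t 0 w = (if w = [] then 1 else 0) + openTerm (weight a t 0) w
      + z * closeTerm (weight a t 0) w := by
  obtain ⟨k, rfl⟩ | ⟨k, r, rfl⟩ := eq_replicate_false_or w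
  · have hweight (c : ℕ) : weight a t c (List.replicate k false) = if c + k = 0 then a else 0 := by
      rw [← List.append_nil (List.replicate k false), weight_replicate_false_append, weight]
    have hclose : closeTerm (weight a t 0) (List.replicate k false) =
        t 0 * weight a t 0 (List.replicate k false) := by
      simp [closeTerm, closers_replicate_false, weight]
    rw [hclose, hweight]
    cases k with
    | zero => simpa [openTerm] using h.a_eq
    | succ k => simp [openTerm, List.replicate_succ]
  · rw [h.closeTerm_weight, weight_replicate_false_append, weight, zero_add]
    have hopen : openTerm (weight a t 0) (List.replicate k false ++ true :: r) =
        (if k = 0 then 1 else 0) * weight a t 0 r := by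
      cases k <;> simp [openTerm, List.replicate_succ]
    rw [hopen, if_neg (by simp)]
    linear_combination weight a t 0 r * h.t_eq k

end IsBlockSystem

end Words

section Matchings

/-- `M` avoids 312 as far as it has been built: whenever a vertex `b` lies in the first gap of a
crossing `p.1 < q.1 < p.2 < q.2`, it is matched before `q.2`. An open vertex `b` would be closed
after `q.2` and thereby complete a 312 pattern. -/
def CrossingsClosed (M : Finset (ℕ × ℕ)) : Prop :=
  ∀ p ∈ M, ∀ q ∈ M, ∀ b, p.1 < b → b < q.1 → q.1 < p.2 → p.2 < q.2 →
    ∃ r ∈ M, (r.1 = b ∨ r.2 = b) ∧ r.2 < q.2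

/-- The open vertex `c` of the matching `M` on `{1, …, m}` can be matched with `m + 1` without
creating a crossing that violates `CrossingsClosed`. -/
def Closable (m : ℕ) (M : Finset (ℕ × ℕ)) (c : ℕ) : Prop :=
  ∀ p ∈ M, ∀ b ∈ fixedPts m M, p.1 < b → b < c → p.2 < c

/-- The unmatched vertices of a matching on `{1, …, m}`, from the largest to the smallest. -/
def openList (m : ℕ) (M : Finset (ℕ × ℕ)) : List ℕ :=
  (fixedPts m M).sort (· ≥ ·)

instance (m : ℕ) (M : Finset (ℕ × ℕ)) : DecidablePred (Closable m M) :=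
  fun c => by unfold Closable; infer_instance

/-- The flags of a matching on `{1, …, m}`, recording for each unmatched vertex, from the largest
to the smallest, whether it is closable. -/
def flags (m : ℕ) (M : Finset (ℕ × ℕ)) : List Bool :=
  (openList m M).map fun c => decide (Closable m M c)

variable {m a c : ℕ} {M : Finset (ℕ × ℕ)} {U D : List ℕ}

theorem mem_fixedPts : c ∈ fixedPts m M ↔ 1 ≤ c ∧ c ≤ m ∧ ∀ p ∈ M, p.1 ≠ c ∧ p.2 ≠ c := by
  rw [fixedPts, Finset.mem_filter, Finset.mem_Icc, and_assoc]

theorem IsPartialMatching.succ (hM : IsPartialMatching m M) : IsPartialMatching (m + 1) M :=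
  ⟨fun p hp => ⟨(hM.1 p hp).1, (hM.1 p hp).2.1, (hM.1 p hp).2.2.trans m.le_succ⟩, hM.2⟩

theorem IsPartialMatching.insert_succ (hM : IsPartialMatching m M) (ha : a ∈ fixedPts m M) :
    IsPartialMatching (m + 1) (insert (a, m + 1) M) := by
  obtain ⟨ha₁, ham, ha⟩ := mem_fixedPts.1 ha
  constructor
  · intro p hp
    obtain rfl | hp := Finset.mem_insert.1 hp
    · exact ⟨Nat.lt_succ_of_le ham, ha₁, le_rfl⟩
    · exact hM.succ.1 p hp
  · intro p hp q hq hpq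
    obtain rfl | hp := Finset.mem_insert.1 hp <;> obtain rfl | hq := Finset.mem_insert.1 hq
    · exact absurd rfl hpq
    · grind [hM.1 q hq, ha q hq]
    · grind [hM.1 p hp, ha p hp]
    · exact hM.2 p hp q hq hpq

theorem IsPartialMatching.exists_eq_insert (hM : IsPartialMatching (m + 1) M)
    (hm : ¬ IsPartialMatching m M) :
    ∃ a M', IsPartialMatching m M' ∧ a ∈ fixedPts m M' ∧ M = insert (a, m + 1) M' := by
  obtain ⟨⟨a, b⟩, hab, hb⟩ : ∃ p ∈ M, m < p.2 := by
    by_contra! h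
    exact hm ⟨fun p hp => ⟨(hM.1 p hp).1, (hM.1 p hp).2.1, h p hp⟩, hM.2⟩
  obtain rfl : b = m + 1 := le_antisymm (hM.1 _ hab).2.2 hb
  have hdisj (p) (hp : p ∈ M.erase (a, m + 1)) :=
    hM.2 p (Finset.mem_of_mem_erase hp) _ hab (Finset.ne_of_mem_erase hp)
  refine ⟨a, M.erase (a, m + 1), ⟨fun p hp => ?_, fun p hp q hq => ?_⟩, ?_,
    (Finset.insert_erase hab).symm⟩
  · have := hM.1 p (Finset.mem_of_mem_erase hp)
    grind
  · exact hM.2 p (Finset.mem_of_mem_erase hp) q (Finset.mem_of_mem_erase hq)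
  · have := hM.1 _ hab
    exact mem_fixedPts.2 ⟨this.2.1, by grind, fun p hp => ⟨(hdisj p hp).1, (hdisj p hp).2.2.1⟩⟩

theorem fixedPts_succ (hM : IsPartialMatching m M) :
    fixedPts (m + 1) M = insert (m + 1) (fixedPts m M) := by
  ext x
  have h (p) (hp : p ∈ M) := hM.1 p hp
  grind [mem_fixedPts]

theorem fixedPts_insert :
    fixedPts (m + 1) (insert (a, m + 1) M) = (fixedPts m M).erase a := by
  ext x
  simp only [mem_fixedPts, Finset.mem_erase, Finset.mem_insert, forall_eq_or_imp]
  grind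

theorem crossingsClosed_insert (hM : IsPartialMatching m M) (ha : a ∈ fixedPts m M) :
    CrossingsClosed (insert (a, m + 1) M) ↔ CrossingsClosed M ∧ Closable m M a := by
  have hlt (p) (hp : p ∈ M) : p.2 < m + 1 := Nat.lt_succ_of_le (hM.1 p hp).2.2
  constructor
  · refine fun h => ⟨fun p hp q hq b hpb hbq hqp hpq => ?_, fun p hp b hb hpb hba => ?_⟩
    · obtain ⟨r, hr, hrb, hrq⟩ :=
        h p (Finset.mem_insert_of_mem hp) q (Finset.mem_insert_of_mem hq) b hpb hbq hqp hpq
      have hrm : r ≠ (a, m + 1) := by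
        rintro rfl
        exact lt_asymm hrq (hlt q hq)
      exact ⟨r, Finset.mem_of_mem_insert_of_ne hr hrm, hrb, hrq⟩
    · by_contra! hap
      have hap : a < p.2 := lt_of_le_of_ne hap ((mem_fixedPts.1 ha).2.2 p hp).2.symm
      obtain ⟨r, hr, hrb, hrm⟩ := h p (Finset.mem_insert_of_mem hp) (a, m + 1)
        (Finset.mem_insert_self _ _) b hpb hba hap (hlt p hp)
      obtain rfl | hr := Finset.mem_insert.1 hr
      · exact lt_irrefl _ hrm
      · have := (mem_fixedPts.1 hb).2.2 r hr
        tauto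
  · rintro ⟨hM', hclos⟩ p hp q hq b hpb hbq hqp hpq
    obtain rfl | hp := Finset.mem_insert.1 hp
    · obtain rfl | hq := Finset.mem_insert.1 hq
      · exact absurd hpq (lt_irrefl _)
      · exact absurd (hlt q hq) hpq.not_gt
    obtain rfl | hq := Finset.mem_insert.1 hq
    · have hb : b ∉ fixedPts m M := fun hb => lt_asymm hqp (hclos p hp b hb hpb hbq)
      have hpos := (hM.1 p hp).2.1
      have ham := (mem_fixedPts.1 ha).2.1
      obtain ⟨r, hr, hrb⟩ : ∃ r ∈ M, r.1 = b ∨ r.2 = b := by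
        by_contra! hno
        exact hb (mem_fixedPts.2 ⟨by omega, (hbq.trans_le ham).le, hno⟩)
      exact ⟨r, Finset.mem_insert_of_mem hr, hrb, hlt r hr⟩
    · obtain ⟨r, hr, h⟩ := hM' p hp q hq b hpb hbq hqp hpq
      exact ⟨r, Finset.mem_insert_of_mem hr, h⟩

theorem pairwise_openList (m : ℕ) (M : Finset (ℕ × ℕ)) : (openList m M).Pairwise (· > ·) :=
  (Finset.sortedGT_sort _).pairwise

theorem mem_openList : c ∈ openList m M ↔ c ∈ fixedPts m M :=
  Finset.mem_sort _

theorem openList_succ (hM : IsPartialMatching m M) :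
    openList (m + 1) M = (m + 1) :: openList m M := by
  rw [openList, fixedPts_succ hM]
  have hle (b) (hb : b ∈ fixedPts m M) : b ≤ m := (mem_fixedPts.1 hb).2.1
  exact Finset.sort_insert (· ≥ ·) (fun b hb => (hle b hb).trans m.le_succ)
    fun h => absurd (hle _ h) m.not_succ_le_self

theorem openList_insert (hU : openList m M = U ++ a :: D) :
    openList (m + 1) (insert (a, m + 1) M) = U ++ D := by
  have hsort : (U ++ a :: D).Pairwise (· > ·) := hU ▸ pairwise_openList m M
  have haUD : a ∉ U ++ D := (List.nodup_middle.1 hsort.nodup).notMem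
  refine (pairwise_openList _ _).eq_of_mem_iff (hsort.sublist (by simp)) fun x => ?_
  have hx : x ∈ fixedPts m M ↔ x ∈ U ++ a :: D := by rw [← hU, mem_openList]
  rw [mem_openList, fixedPts_insert, Finset.mem_erase, hx]
  grind

theorem flags_eq_nil_iff : flags m M = [] ↔ fixedPts m M = ∅ := by
  rw [flags, List.map_eq_nil_iff, List.eq_nil_iff_forall_not_mem,
    Finset.eq_empty_iff_forall_notMem]
  simp only [mem_openList]

theorem map_decide_isLeast {U : List ℕ} (hU : U.Pairwise (· > ·)) {P : ℕ → Prop} [DecidablePred P]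
    (hP : ∀ c ∈ U, P c ↔ ∀ b ∈ U, c ≤ b) : U.map (fun c => decide (P c)) = fresh U.length := by
  obtain rfl | ⟨V, x, rfl⟩ := U.eq_nil_or_concat'
  · rfl
  have hlt : ∀ c ∈ V, x < c := by simpa using (List.pairwise_append.1 hU).2.2
  have hx : P x := (hP x (by simp)).2 fun b hb => by grind
  have hV : ∀ c ∈ V, decide (P c) = false := fun c hc => by
    have := hP c (by simp [hc])
    simpa [this] using .inr (hlt c hc)
  have hmap : V.map (fun c => decide (P c)) = List.replicate V.length false :=
    List.eq_replicate_iff.2 ⟨by simp, by simpa using hV⟩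
  rw [List.map_append, hmap, List.length_append]
  simp [fresh, hx]

theorem flags_succ (hM : IsPartialMatching m M) : flags (m + 1) M = true :: flags m M := by
  have hclos (c : ℕ) (hc : c ≤ m + 1) : Closable (m + 1) M c ↔ Closable m M c := by
    rw [Closable, Closable, fixedPts_succ hM]
    refine forall₂_congr fun p _ =>
      ⟨fun h b hb => h b (Finset.mem_insert_of_mem hb), fun h b hb => ?_⟩
    obtain rfl | hb := Finset.mem_insert.1 hb
    · exact fun _ hlt => absurd hlt hc.not_gt
    · exact h b hb
  have hnew : Closable (m + 1) M (m + 1) := fun p hp _ _ _ _ =>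
    Nat.lt_succ_of_le (hM.1 p hp).2.2
  rw [flags, openList_succ hM, List.map_cons, decide_eq_true hnew, flags]
  refine congrArg _ (List.map_congr_left fun c hc => decide_eq_decide.2 (hclos c ?_))
  exact (mem_fixedPts.1 (mem_openList.1 hc)).2.1.trans m.le_succ

theorem closable_insert_of_lt (hca : c < a) :
    Closable (m + 1) (insert (a, m + 1) M) c ↔ Closable m M c := by
  rw [Closable, Closable, fixedPts_insert, Finset.forall_mem_insert]
  constructor
  · exact fun h p hp b hb hpb hbc => h.2 p hp b (Finset.mem_erase.2 ⟨by omega, hb⟩) hpb hbc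
  · exact fun h => ⟨fun b _ hab hbc => absurd hca (hab.trans hbc).not_gt,
      fun p hp b hb => h p hp b (Finset.mem_of_mem_erase hb)⟩

theorem closable_insert_of_gt (ha : Closable m M a) (hac : a < c) (hcm : c ≤ m) :
    Closable (m + 1) (insert (a, m + 1) M) c ↔ ∀ b ∈ fixedPts m M, a < b → c ≤ b := by
  rw [Closable, fixedPts_insert, Finset.forall_mem_insert]
  constructor
  · intro h b hb hab
    by_contra! hbc
    have := h.1 b (Finset.mem_erase.2 ⟨hab.ne', hb⟩) hab hbc
    omega
  · intro h
    refine ⟨fun b hb hab hbc => ?_, fun p hp b hb hpb hbc => ?_⟩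
    · exact absurd (h b (Finset.mem_of_mem_erase hb) hab) hbc.not_ge
    · obtain ⟨hba, hb⟩ := Finset.mem_erase.1 hb
      obtain hba | hab := hba.lt_or_gt
      · exact (ha p hp b hb hpb hba).trans hac
      · exact absurd (h b hb hab) hbc.not_ge

theorem flags_insert (hU : openList m M = U ++ a :: D) (ha : Closable m M a) :
    flags (m + 1) (insert (a, m + 1) M) =
      fresh U.length ++ D.map fun c => decide (Closable m M c) := by
  have hsort : (U ++ a :: D).Pairwise (· > ·) := hU ▸ pairwise_openList m M
  have hmem (c) : c ∈ fixedPts m M ↔ c ∈ U ++ a :: D := by rw [← mem_openList, hU]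
  obtain ⟨hsortU, hsortD, hUD⟩ := List.pairwise_append.1 hsort
  have hD : ∀ c ∈ D, c < a := (List.pairwise_cons.1 hsortD).1
  rw [flags, openList_insert hU, List.map_append]
  congr 1
  · refine map_decide_isLeast hsortU fun c hc => ?_
    have hac : a < c := hUD c hc a List.mem_cons_self
    have hcm : c ≤ m := (mem_fixedPts.1 ((hmem c).2 (by simp [hc]))).2.1
    rw [closable_insert_of_gt ha hac hcm]
    refine ⟨fun h b hb => h b ((hmem b).2 (by simp [hb])) (hUD b hb a List.mem_cons_self),
      fun h b hb hab => h b ?_⟩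
    have := (hmem b).1 hb
    grind
  · exact List.map_congr_left fun c hc => decide_eq_decide.2 (closable_insert_of_lt (hD c hc))

theorem exists_openList_eq_append {u d : List Bool} (h : flags m M = u ++ true :: d) :
    ∃ U a D, openList m M = U ++ a :: D ∧ U.length = u.length ∧ a ∈ fixedPts m M ∧
      Closable m M a ∧ (D.map fun c => decide (Closable m M c)) = d := by
  obtain ⟨U, V, hUV, rfl, hV⟩ := List.map_eq_append_iff.1 h
  obtain ⟨a, D, rfl, ha, hD⟩ := List.map_eq_cons_iff.1 hV
  exact ⟨U, a, D, hUV, by simp, mem_openList.1 (by simp [hUV]), of_decide_eq_true ha, hD⟩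

open Classical in
/-- The matchings on `{1, …, m}` with flags `w` that avoid 312 as far as they have been built, in
the sense of `CrossingsClosed`. -/
noncomputable def partialAvoiders (m : ℕ) (w : List Bool) : Finset (Finset (ℕ × ℕ)) :=
  {M ∈ (Finset.Icc 1 m ×ˢ Finset.Icc 1 m).powerset |
    IsPartialMatching m M ∧ CrossingsClosed M ∧ flags m M = w}

theorem mem_partialAvoiders {w : List Bool} : M ∈ partialAvoiders m w ↔
    IsPartialMatching m M ∧ CrossingsClosed M ∧ flags m M = w := by
  simp only [partialAvoiders, Finset.mem_filter, Finset.mem_powerset, and_iff_right_iff_imp]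
  rintro ⟨hM, -⟩ p hp
  have := hM.1 p hp
  simp only [Finset.mem_product, Finset.mem_Icc]
  omega

/-- The matching obtained from `M` by joining its open vertex number `j` (counted from `0`, from
the largest one) to `m + 1`; only meaningful if there are more than `j` open vertices. -/
def closeAt (m j : ℕ) (M : Finset (ℕ × ℕ)) : Finset (ℕ × ℕ) :=
  insert ((openList m M).getD j 0, m + 1) M

theorem closeAt_eq (hU : openList m M = U ++ a :: D) :
    closeAt m U.length M = insert (a, m + 1) M := by
  simp [closeAt, hU]

theorem partialAvoiders_eq_empty {w : List Bool} (h : m < w.length) : partialAvoiders m w = ∅ := by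
  refine Finset.eq_empty_of_forall_notMem fun M hM => h.not_ge ?_
  have hcard : (fixedPts m M).card ≤ m :=
    (Finset.card_filter_le _ _).trans_eq (Nat.card_Icc 1 m)
  rw [← (mem_partialAvoiders.1 hM).2.2, flags, List.length_map, openList, Finset.length_sort]
  exact hcard

theorem partialAvoiders_zero (w : List Bool) :
    partialAvoiders 0 w = if w = [] then {∅} else ∅ := by
  ext M
  rw [mem_partialAvoiders]
  constructor
  · rintro ⟨hM, -, rfl⟩
    obtain rfl : M = ∅ := Finset.eq_empty_of_forall_notMem fun p hp => by
      have := hM.1 p hp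
      omega
    simp [flags, openList, fixedPts]
  · split_ifs with hw
    · rw [Finset.mem_singleton]
      rintro rfl
      simp [IsPartialMatching, CrossingsClosed, flags, openList, fixedPts, hw]
    · simp

open Classical in
theorem card_filter_partialAvoiders_succ (m : ℕ) (w : List Bool) :
    {M ∈ partialAvoiders (m + 1) w | IsPartialMatching m M}.card =
      openTerm (fun v => (partialAvoiders m v).card) w := by
  have hflags : ∀ M ∈ partialAvoiders (m + 1) w, IsPartialMatching m M →
      w = true :: flags m M := fun M hM hm => by
    rw [← (mem_partialAvoiders.1 hM).2.2, flags_succ hm]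
  match w, hflags with
  | true :: w, _ =>
    refine congrArg Finset.card (Finset.ext fun M => ?_)
    simp only [Finset.mem_filter, mem_partialAvoiders]
    constructor
    · rintro ⟨⟨-, hM, hw⟩, hm⟩
      exact ⟨hm, hM, List.cons_injective ((flags_succ hm).symm.trans hw)⟩
    · rintro ⟨hm, hM, rfl⟩
      exact ⟨⟨hm.succ, hM, flags_succ hm⟩, hm⟩
  | [], hflags | false :: w, hflags =>
    refine Finset.card_eq_zero.2 (Finset.filter_eq_empty_iff.2 fun M hM hm => ?_)
    simpa using hflags M hM hm

theorem closeAt_mem_partialAvoiders {w u : List Bool} (hu : u ∈ closers w)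
    (hM : M ∈ partialAvoiders m (u ++ true :: w.drop u.length)) :
    closeAt m u.length M ∈ partialAvoiders (m + 1) w := by
  obtain ⟨hm, hM, hflags⟩ := mem_partialAvoiders.1 hM
  obtain ⟨U, a, D, hU, hUu, ha, hclos, hD⟩ := exists_openList_eq_append hflags
  rw [← hUu, closeAt_eq hU, mem_partialAvoiders, crossingsClosed_insert hm ha,
    flags_insert hU hclos, hD, hUu]
  refine ⟨hm.insert_succ ha, ⟨hM, hclos⟩, ?_⟩
  have := List.prefix_append_drop (mem_closers.1 hu)
  rwa [length_fresh, eq_comm] at this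

theorem exists_closeAt_eq {w : List Bool} (hM : M ∈ partialAvoiders (m + 1) w)
    (hm : ¬ IsPartialMatching m M) :
    ∃ u ∈ closers w, ∃ M' ∈ partialAvoiders m (u ++ true :: w.drop u.length),
      closeAt m u.length M' = M := by
  obtain ⟨hM₁, hcross, rfl⟩ := mem_partialAvoiders.1 hM
  obtain ⟨a, M, hpm, ha, rfl⟩ := hM₁.exists_eq_insert hm
  obtain ⟨hM', hac⟩ := (crossingsClosed_insert hpm ha).1 hcross
  obtain ⟨U, D, hU⟩ := List.append_of_mem (mem_openList.2 ha)
  refine ⟨U.map fun c => decide (Closable m M c), ?_, M, ?_, ?_⟩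
  · simp [mem_closers, flags_insert hU hac]
  · have hdrop : (flags (m + 1) (insert (a, m + 1) M)).drop U.length =
        D.map fun c => decide (Closable m M c) := by
      rw [flags_insert hU hac, List.drop_left' (length_fresh _)]
    rw [mem_partialAvoiders, List.length_map, hdrop]
    exact ⟨hpm, hM', by simp [flags, hU, hac]⟩
  · rw [List.length_map, closeAt_eq hU]

theorem insert_succ_inj {a₁ a₂ : ℕ} {M₁ M₂ : Finset (ℕ × ℕ)} (hM₁ : IsPartialMatching m M₁)
    (hM₂ : IsPartialMatching m M₂) (h : insert (a₁, m + 1) M₁ = insert (a₂, m + 1) M₂) :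
    a₁ = a₂ ∧ M₁ = M₂ := by
  have hfilter {a M} (hM : IsPartialMatching m M) :
      {p ∈ insert (a, m + 1) M | p.2 ≤ m} = M := by
    rw [Finset.filter_insert, if_neg (by simp),
      Finset.filter_true_of_mem fun p hp => (hM.1 p hp).2.2]
  obtain rfl : M₁ = M₂ := by rw [← hfilter hM₁, h, hfilter hM₂]
  refine ⟨?_, rfl⟩
  have hnot : (a₁, m + 1) ∉ M₁ := fun hmem => absurd (hM₁.1 _ hmem).2.2 (by simp)
  have hmem : (a₁, m + 1) ∈ insert (a₂, m + 1) M₁ := h ▸ Finset.mem_insert_self _ _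
  simpa [hnot] using hmem

theorem closeAt_inj {M₁ M₂ : Finset (ℕ × ℕ)} {w u₁ u₂ : List Bool}
    (hM₁ : M₁ ∈ partialAvoiders m (u₁ ++ true :: w.drop u₁.length))
    (hM₂ : M₂ ∈ partialAvoiders m (u₂ ++ true :: w.drop u₂.length))
    (h : closeAt m u₁.length M₁ = closeAt m u₂.length M₂) : u₁ = u₂ ∧ M₁ = M₂ := by
  obtain ⟨hm₁, -, hflags₁⟩ := mem_partialAvoiders.1 hM₁
  obtain ⟨hm₂, -, hflags₂⟩ := mem_partialAvoiders.1 hM₂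
  obtain ⟨U₁, a, D₁, hU₁, hlen₁, -⟩ := exists_openList_eq_append hflags₁
  obtain ⟨U₂, b, D₂, hU₂, hlen₂, -⟩ := exists_openList_eq_append hflags₂
  rw [← hlen₁, ← hlen₂, closeAt_eq hU₁, closeAt_eq hU₂] at h
  obtain ⟨rfl, rfl⟩ := insert_succ_inj hm₁ hm₂ h
  have hidx {U D : List ℕ} (hU : openList m M₁ = U ++ a :: D) :
      (openList m M₁).idxOf a = U.length := by
    have hnodup := hU ▸ (pairwise_openList m M₁).nodup
    have haU : a ∉ U := fun ha => (List.nodup_middle.1 hnodup).notMem (List.mem_append_left _ ha)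
    rw [hU, List.idxOf_append_of_notMem haU, List.idxOf_cons_self, add_zero]
  have hlen : u₁.length = u₂.length := by rw [← hlen₁, ← hlen₂, ← hidx hU₁, hidx hU₂]
  exact ⟨List.append_inj_left (hflags₁.symm.trans hflags₂) hlen, rfl⟩

open Classical in
theorem card_filter_not_partialAvoiders_succ (m : ℕ) (w : List Bool) :
    {M ∈ partialAvoiders (m + 1) w | ¬ IsPartialMatching m M}.card =
      closeTerm (fun v => (partialAvoiders m v).card) w := by
  rw [closeTerm, ← Finset.card_sigma]
  symm
  refine Finset.card_nbij (fun x => closeAt m x.1.length x.2) ?_ ?_ ?_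
  · rintro ⟨u, M⟩ hx
    obtain ⟨hu, hM⟩ := Finset.mem_sigma.1 hx
    refine Finset.mem_filter.2 ⟨closeAt_mem_partialAvoiders hu hM, fun h => ?_⟩
    exact absurd (h.1 _ (Finset.mem_insert_self _ _)).2.2 m.not_succ_le_self
  · rintro ⟨u₁, M₁⟩ hx₁ ⟨u₂, M₂⟩ hx₂ h
    obtain ⟨rfl, rfl⟩ := closeAt_inj (Finset.mem_sigma.1 hx₁).2 (Finset.mem_sigma.1 hx₂).2 h
    rfl
  · intro M hM
    obtain ⟨hM, hm⟩ := Finset.mem_filter.1 hM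
    obtain ⟨u, hu, M', hM', h⟩ := exists_closeAt_eq hM hm
    exact ⟨⟨u, M'⟩, Finset.mem_sigma.2 ⟨hu, hM'⟩, h⟩

theorem card_partialAvoiders_succ (m : ℕ) (w : List Bool) :
    (partialAvoiders (m + 1) w).card =
      openTerm (fun v => (partialAvoiders m v).card) w +
        closeTerm (fun v => (partialAvoiders m v).card) w := by
  classical
  rw [← card_filter_partialAvoiders_succ, ← card_filter_not_partialAvoiders_succ,
    Finset.card_filter_add_card_filter_not]

open PowerSeries in
theorem card_partialAvoiders_eq_coeff {R : Type*} [CommRing R] {P : List Bool → R⟦X⟧}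
    (hP : ∀ w, P w = (if w = [] then 1 else 0) + openTerm P w + X * closeTerm P w)
    {n : ℕ} {w : List Bool} (hm : m = 2 * n + w.length) :
    ((partialAvoiders m w).card : R) = coeff n (P w) := by
  induction m generalizing n w with
  | zero =>
    obtain rfl : n = 0 := by omega
    obtain rfl : w = [] := List.length_eq_zero_iff.1 (by omega)
    rw [hP, partialAvoiders_zero]
    simp [openTerm]
  | succ m ih =>
    have hone : coeff n (if w = [] then 1 else 0 : R⟦X⟧) = 0 := by
      split_ifs with hw
      · subst hw
        rw [List.length_nil] at hm
        rw [coeff_one, if_neg (by omega)]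
      · exact map_zero _
    have hopen : ((openTerm (fun v => (partialAvoiders m v).card) w : ℕ) : R) =
        coeff n (openTerm P w) := by
      match w, hm with
      | true :: w, hm => exact ih (Nat.succ_injective hm)
      | [], _ | false :: w, _ => simp [openTerm]
    have hclose : ((closeTerm (fun v => (partialAvoiders m v).card) w : ℕ) : R) =
        coeff n (X * closeTerm P w) := by
      have hlen {u} (hu : u ∈ closers w) := length_append_true_cons_drop hu
      cases n with
      | zero =>
        rw [coeff_zero_X_mul, closeTerm, Finset.sum_eq_zero, Nat.cast_zero]
        intro u hu
        rw [partialAvoiders_eq_empty (by rw [hlen hu]; omega), Finset.card_empty]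
      | succ n =>
        rw [coeff_succ_X_mul, closeTerm, closeTerm, map_sum, Nat.cast_sum]
        exact Finset.sum_congr rfl fun u hu => ih (by rw [hlen hu]; omega)
    rw [card_partialAvoiders_succ, hP, Nat.cast_add, hopen, hclose, map_add, map_add, hone,
      zero_add]

theorem matchContains_p312_iff : MatchContains p312 M ↔
    ∃ p ∈ M, ∃ q ∈ M, ∃ r ∈ M,
      p.1 < q.1 ∧ q.1 < r.1 ∧ r.1 < p.2 ∧ p.2 < r.2 ∧ r.2 < q.2 := by
  constructor
  · rintro ⟨f, hf, h⟩
    refine ⟨_, h 0, _, h 1, _, h 2, hf ?_, hf ?_, hf ?_, hf ?_, hf ?_⟩ <;>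
      simp [p312, Fin.lt_def]
  · rintro ⟨p, hp, q, hq, r, hr, hpq, hqr, hrp, hpr, hrq⟩
    refine ⟨![p.1, q.1, r.1, p.2, r.2, q.2], Fin.strictMono_iff_lt_succ.2 fun i => ?_, fun a => ?_⟩
    · fin_cases i <;> assumption
    · fin_cases a <;> assumption

theorem isPerfectMatching_iff {n : ℕ} :
    IsPerfectMatching n M ↔ IsPartialMatching (2 * n) M ∧ fixedPts (2 * n) M = ∅ := by
  simp only [Finset.eq_empty_iff_forall_notMem, mem_fixedPts, not_and, not_forall]
  constructor
  · rintro ⟨hM, huniq⟩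
    refine ⟨⟨hM, fun p hp q hq hpq => ?_⟩, fun x hx hxn => ?_⟩
    · have hp' := hM p hp
      have := (huniq p.1 (by omega) (by omega)).unique ⟨hp, .inl rfl⟩ (y₂ := q)
      have := (huniq p.2 (by omega) (by omega)).unique ⟨hp, .inr rfl⟩ (y₂ := q)
      grind
    · obtain ⟨p, ⟨hp, hpx⟩, -⟩ := huniq x hx hxn
      exact ⟨p, hp, by tauto⟩
  · rintro ⟨⟨hM, hdisj⟩, hcover⟩
    refine ⟨hM, fun x hx hxn => ?_⟩
    obtain ⟨p, hp, hpx⟩ := hcover x hx hxn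
    refine ⟨p, ⟨hp, by tauto⟩, fun q hq => ?_⟩
    by_contra hne
    have := hdisj q hq.1 p hp hne
    grind

theorem matchAvoids_p312_iff (hM : IsPartialMatching m M) (hfix : fixedPts m M = ∅) :
    MatchAvoids p312 M ↔ CrossingsClosed M := by
  rw [MatchAvoids, matchContains_p312_iff]
  constructor
  · intro h p hp q hq b hpb hbq hqp hpq
    have hb : b ∉ fixedPts m M := by simp [hfix]
    obtain ⟨r, hr, hrb⟩ : ∃ r ∈ M, r.1 = b ∨ r.2 = b := by
      have := hM.1 p hp
      have := hM.1 q hq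
      by_contra! hno
      exact hb (mem_fixedPts.2 ⟨by omega, by omega, hno⟩)
    refine ⟨r, hr, hrb, ?_⟩
    by_contra! hqr
    have hrb : r.1 = b := hrb.resolve_right (by have := hM.1 q hq; omega)
    have hqr : q.2 < r.2 := hqr.lt_of_ne (hM.2 q hq r hr (by grind)).2.2.2
    exact h ⟨p, hp, r, hr, q, hq, hrb ▸ hpb, hrb ▸ hbq, hqp, hpq, hqr⟩
  · rintro h ⟨p, hp, q, hq, r, hr, hpq, hqr, hrp, hpr, hrq⟩
    obtain ⟨s, hs, hsq, hsr⟩ := h p hp r hr q.1 hpq hqr hrp hpr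
    have := hM.2 s hs q hq (by grind)
    tauto

theorem mcount_p312 (n : ℕ) : mcount p312 n = (partialAvoiders (2 * n) []).card := by
  rw [mcount, ← Set.ncard_coe_finset]
  congr 1
  ext M
  rw [Set.mem_ofPred_eq, Finset.mem_coe, mem_partialAvoiders, flags_eq_nil_iff,
    isPerfectMatching_iff, and_assoc, and_congr_right_iff]
  intro hM
  rw [and_comm (a := CrossingsClosed M), and_congr_right_iff]
  exact matchAvoids_p312_iff hM

end Matchings

/-- `(2(1+4z)² A(z) − (1+36z))² = (1−12z)³`, i.e.
`A(z) = 54z / (1 + 36z − (1−12z)^{3/2})`. -/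
theorem gf_matchings_312 :
    (2 * (1 + 4 * PowerSeries.X) ^ 2 * A312 - (1 + 36 * PowerSeries.X)) ^ 2 =
      (1 - 12 * PowerSeries.X : PowerSeries ℚ) ^ 3 := by
  obtain ⟨y, a, hX, hy, ha⟩ := exists_parametrization ℚ
  obtain ⟨t, g, h⟩ := exists_isBlockSystem hy ha
  rw [← hX] at h
  have hA : A312 = a := by
    ext n
    rw [A312, PowerSeries.coeff_mk, mcount_p312,
      card_partialAvoiders_eq_coeff h.weight_eq (n := n) (w := []) (by rfl), weight, if_pos rfl]
  rw [hA]
  exact sq_eq_of_parametrization hX ha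
end

section
/- Let B(z) = Σ_{n≥0} |P_n(312)| zⁿ be the generating function (as a formal power series over ℚ) for 312-avoiding set partitions. Then B(z) is a root of the cubic polynomial (z−1)(5z²−2z+1)² B³ + (−9z⁵+54z⁴−85z³+59z²−14z+3) B² + (−9z⁴+60z³−64z²+13z−3) B + (−9z³+23z²−4z+1); that is, substituting B(z) for B in this polynomial yields the zero power series. -/
/-- The generating function `B(z) = Σ_{n≥0} |P_n(312)| zⁿ` over `ℚ`. -/
noncomputable def B312 : PowerSeries ℚ := PowerSeries.mk fun n => (pcount p312 n : ℚ)

/-!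
Scan the points of a `312`-avoiding set partition from left to right. Once an opener `p` is closed,
the openers pending to the right of `p` have to be closed first in, first out, so the pending
openers form a stack of queues: a new opener is a new queue on top, and only the oldest opener of a
queue can be closed, which merges all queues above that queue into it. Only the lengths of the
queues matter for the count.

Normalized by its value at the empty shape, the series of scans ending in a given shape is
multiplicative over the queues, and the one-queue shapes then satisfy an equation that is quadratic
in their generating function, with a catalytic variable for the length of the queue. Its
discriminant is a square, so by Brown's quadratic method it has a double root `u` in the catalytic
variable. Elimination gives `z = u / ((1 + 2 u) (1 + u + u²))` and
`B - 1 = u / ((1 + u) (1 + u²)²)`, and `(z, B)` lies on the cubic.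
-/

section ArcDiagrams

/-- `A` is the set of arcs of some set partition of a set of integers between `l` and `u`: every
arc runs from left to right, and every point is the left end of at most one arc and the right end
of at most one arc. -/
structure IsArcDiagram (l u : ℕ) (A : Finset (ℕ × ℕ)) : Prop where
  le_left {i j : ℕ} : (i, j) ∈ A → l ≤ i
  lt {i j : ℕ} : (i, j) ∈ A → i < j
  right_le {i j : ℕ} : (i, j) ∈ A → j ≤ u
  right_unique {i j j' : ℕ} : (i, j) ∈ A → (i, j') ∈ A → j = j'
  left_unique {i i' j : ℕ} : (i, j) ∈ A → (i', j) ∈ A → i = i'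

/-- `A` contains no three arcs forming the pattern `312`. -/
def Avoids312 (A : Finset (ℕ × ℕ)) : Prop :=
  ∀ ⦃a b c x w y⦄, a < b → b < c → c < x → x < w → w < y →
    (a, x) ∈ A → (b, y) ∈ A → (c, w) ∈ A → False

/-- `j` is reached from `i` by following arcs of `A` to the right. -/
abbrev ArcReachable (A : Finset (ℕ × ℕ)) : ℕ → ℕ → Prop :=
  Relation.ReflTransGen fun i j => (i, j) ∈ A

open Classical in
/-- The arcs of the set partition `P`. -/
noncomputable def arcSet {n : ℕ} (P : Finpartition (Finset.Icc 1 n)) : Finset (ℕ × ℕ) :=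
  (Finset.Icc 1 n ×ˢ Finset.Icc 1 n).filter fun p => PartArc P p.1 p.2

variable {n : ℕ} {P Q : Finpartition (Finset.Icc 1 n)} {i j k : ℕ}

lemma partArc_iff :
    PartArc P i j ↔ i < j ∧ i ∈ P.part j ∧ ∀ x ∈ P.part j, ¬(i < x ∧ x < j) := by
  refine and_congr_right fun _ => ⟨?_, fun ⟨hi, hb⟩ => ?_⟩
  · rintro ⟨B, hB, hi, hj, hb⟩
    obtain rfl := P.part_eq_of_mem hB hj
    exact ⟨hi, hb⟩
  · have hj : j ∈ Finset.Icc 1 n := P.part_nonempty.mp ⟨i, hi⟩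
    exact ⟨_, P.part_mem.mpr hj, hi, P.mem_part hj, hb⟩

lemma mem_part_comm : i ∈ P.part j ↔ j ∈ P.part i := by
  simp only [Finpartition.mem_part_iff_exists, and_comm]

lemma part_eq_part_of_mem (h : i ∈ P.part j) : P.part i = P.part j :=
  P.part_eq_of_mem (P.part_mem.mpr (P.part_nonempty.mp ⟨i, h⟩)) h

lemma mem_arcSet : (i, j) ∈ arcSet P ↔ PartArc P i j := by
  simp only [arcSet, Finset.mem_filter, Finset.mem_product, and_iff_right_iff_imp]
  intro h
  obtain ⟨-, hi, -⟩ := partArc_iff.mp h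
  exact ⟨P.part_subset j hi, P.part_nonempty.mp ⟨i, hi⟩⟩

lemma isArcDiagram_arcSet : IsArcDiagram 1 n (arcSet P) where
  le_left h :=
    (Finset.mem_Icc.mp (P.part_subset _ (partArc_iff.mp (mem_arcSet.mp h)).2.1)).1
  lt h := (mem_arcSet.mp h).1
  right_le h :=
    (Finset.mem_Icc.mp (P.part_nonempty.mp ⟨_, (partArc_iff.mp (mem_arcSet.mp h)).2.1⟩)).2
  right_unique {i j j'} h h' := by
    obtain ⟨hij, hi, hb⟩ := partArc_iff.mp (mem_arcSet.mp h)
    obtain ⟨hij', hi', hb'⟩ := partArc_iff.mp (mem_arcSet.mp h')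
    rw [← part_eq_part_of_mem hi] at hb
    rw [← part_eq_part_of_mem hi'] at hb'
    have := hb j' (mem_part_comm.mp hi')
    have := hb' j (mem_part_comm.mp hi)
    omega
  left_unique {i i' j} h h' := by
    obtain ⟨hij, hi, hb⟩ := partArc_iff.mp (mem_arcSet.mp h)
    obtain ⟨hij', hi', hb'⟩ := partArc_iff.mp (mem_arcSet.mp h')
    have := hb i' hi'
    have := hb' i hi
    omega

lemma partAvoids_p312_iff : PartAvoids p312 P ↔ Avoids312 (arcSet P) := by
  constructor
  · intro h a b c x w y hab hbc hcx hxw hwy hax hby hcw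
    refine h ⟨![a, b, c, x, w, y], ?_, ?_⟩
    · rw [Fin.strictMono_iff_lt_succ]
      intro i
      fin_cases i
      exacts [hab, hbc, hcx, hxw, hwy]
    · intro i
      fin_cases i
      exacts [mem_arcSet.mp hax, mem_arcSet.mp hby, mem_arcSet.mp hcw]
  · rintro h ⟨f, hf, harc⟩
    exact h (hf (by decide)) (hf (by decide)) (hf (by decide)) (hf (by decide)) (hf (by decide))
      (mem_arcSet.mpr (harc 0)) (mem_arcSet.mpr (harc 1)) (mem_arcSet.mpr (harc 2))

lemma mem_part_of_arcReachable (hj : j ∈ Finset.Icc 1 n) (h : ArcReachable (arcSet P) i j) :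
    i ∈ P.part j := by
  induction h using Relation.ReflTransGen.head_induction_on with
  | refl => exact P.mem_part hj
  | head harc _ ih =>
    rw [← part_eq_part_of_mem ih]
    exact (partArc_iff.mp (mem_arcSet.mp harc)).2.1

lemma arcReachable_of_mem_part (hij : i ≤ j) (h : i ∈ P.part j) : ArcReachable (arcSet P) i j := by
  induction j using Nat.strong_induction_on with
  | _ j ih =>
    rcases hij.eq_or_lt with rfl | hlt
    · exact .refl
    obtain ⟨k, hk, hmax⟩ := Finset.exists_max_image ((P.part j).filter (· < j)) id
      ⟨i, Finset.mem_filter.mpr ⟨h, hlt⟩⟩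
    obtain ⟨hkj, hklt⟩ := Finset.mem_filter.mp hk
    have harc : PartArc P k j := partArc_iff.mpr ⟨hklt, hkj, fun x hx ⟨hkx, hxj⟩ =>
      (hmax x (Finset.mem_filter.mpr ⟨hx, hxj⟩)).not_gt hkx⟩
    refine .tail (ih k hklt (hmax i (Finset.mem_filter.mpr ⟨h, hlt⟩)) ?_) (mem_arcSet.mpr harc)
    rwa [part_eq_part_of_mem hkj]

lemma part_subset_of_arcSet_subset (h : arcSet P ⊆ arcSet Q) (hj : j ∈ Finset.Icc 1 n) :
    P.part j ⊆ Q.part j := by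
  intro i hi
  rcases le_total i j with hij | hji
  · exact mem_part_of_arcReachable hj
      (Relation.ReflTransGen.mono (fun _ _ harc => h harc) _ _ (arcReachable_of_mem_part hij hi))
  · exact mem_part_comm.mp <| mem_part_of_arcReachable (P.part_subset j hi)
      (Relation.ReflTransGen.mono (fun _ _ harc => h harc) _ _
        (arcReachable_of_mem_part hji (mem_part_comm.mp hi)))

lemma parts_subset_of_arcSet_eq (h : arcSet P = arcSet Q) : P.parts ⊆ Q.parts := by
  intro B hB
  obtain ⟨j, hj⟩ := P.nonempty_of_mem_parts hB
  have hjn := P.le hB hj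
  rw [← P.part_eq_of_mem hB hj, (part_subset_of_arcSet_subset h.subset hjn).antisymm
    (part_subset_of_arcSet_subset h.superset hjn)]
  exact Q.part_mem.mpr hjn

lemma arcSet_injective : Function.Injective (arcSet (n := n)) := fun _ _ h =>
  Finpartition.ext ((parts_subset_of_arcSet_eq h).antisymm (parts_subset_of_arcSet_eq h.symm))

namespace IsArcDiagram

variable {l u : ℕ} {A : Finset (ℕ × ℕ)}

lemma mono {B : Finset (ℕ × ℕ)} (h : IsArcDiagram l u A) (hB : B ⊆ A) : IsArcDiagram l u B where
  le_left hij := h.le_left (hB hij)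
  lt hij := h.lt (hB hij)
  right_le hij := h.right_le (hB hij)
  right_unique hij hij' := h.right_unique (hB hij) (hB hij')
  left_unique hij hij' := h.left_unique (hB hij) (hB hij')

lemma insert_arc (h : IsArcDiagram l u A) (hi : l ≤ i) (hij : i < j) (hj : j ≤ u)
    (hl : ∀ k, (i, k) ∉ A) (hr : ∀ k, (k, j) ∉ A) : IsArcDiagram l u (insert (i, j) A) := by
  constructor <;> grind [IsArcDiagram]

lemma le_of_arcReachable (h : IsArcDiagram l u A) (hij : ArcReachable A i j) : i ≤ j := by
  induction hij with
  | refl => exact le_rfl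
  | tail _ harc ih => exact ih.trans (h.lt harc).le

lemma arcReachable_total_of_left (h : IsArcDiagram l u A) (hij : ArcReachable A i j)
    (hik : ArcReachable A i k) : ArcReachable A j k ∨ ArcReachable A k j :=
  hij.total_of_right_unique (fun _ _ _ => h.right_unique) hik

lemma arcReachable_total_of_right (h : IsArcDiagram l u A) (hik : ArcReachable A i k)
    (hjk : ArcReachable A j k) : ArcReachable A i j ∨ ArcReachable A j i := by
  have hU : Relator.RightUnique (Function.swap fun i j => (i, j) ∈ A) := fun _ _ _ => h.left_unique
  exact (Relation.ReflTransGen.total_of_right_unique hU (Relation.reflTransGen_swap.mpr hjk)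
    (Relation.reflTransGen_swap.mpr hik)).imp Relation.reflTransGen_swap.mp
      Relation.reflTransGen_swap.mp

/-- Two points are equivalent when one is reached from the other along arcs. -/
def setoid (h : IsArcDiagram l u A) : Setoid ℕ where
  r i j := ArcReachable A i j ∨ ArcReachable A j i
  iseqv :=
    { refl := fun _ => .inl .refl
      symm := Or.symm
      trans := by
        rintro i j k (hij | hji) (hjk | hkj)
        · exact .inl (hij.trans hjk)
        · exact h.arcReachable_total_of_right hij hkj
        · exact h.arcReachable_total_of_left hji hjk
        · exact .inr (hkj.trans hji) }

open Classical in
/-- The set partition of `[n]` with arc set `A`. -/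
noncomputable def partition (h : IsArcDiagram l u A) (n : ℕ) : Finpartition (Finset.Icc 1 n) :=
  .ofSetSetoid h.setoid (Finset.Icc 1 n)

lemma mem_part_partition (h : IsArcDiagram l u A) (hij : i ≤ j) :
    i ∈ (h.partition n).part j ↔
      i ∈ Finset.Icc 1 n ∧ j ∈ Finset.Icc 1 n ∧ ArcReachable A i j := by
  have hji : ArcReachable A j i → ArcReachable A i j := fun hji =>
    hij.antisymm (h.le_of_arcReachable hji) ▸ .refl
  classical
  rw [partition, mem_part_comm, Finpartition.mem_part_ofSetSetoid_iff_rel]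
  exact and_congr_right fun _ => and_congr_right fun _ => or_iff_left_of_imp hji

lemma arcSet_partition (h : IsArcDiagram 1 n A) : arcSet (h.partition n) = A := by
  ext ⟨i, j⟩
  rw [mem_arcSet, partArc_iff]
  constructor
  · rintro ⟨hlt, hi, hb⟩
    obtain ⟨-, hj, hij⟩ := (h.mem_part_partition hlt.le).mp hi
    obtain rfl | ⟨k, hik, hkj⟩ := hij.cases_head
    · exact absurd hlt (lt_irrefl _)
    have hle := h.le_of_arcReachable hkj
    have hk : k ∈ Finset.Icc 1 n := by
      have := h.le_left hik; have := h.lt hik; have := h.right_le hik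
      exact Finset.mem_Icc.mpr (by omega)
    have := hb k ((h.mem_part_partition hle).mpr ⟨hk, hj, hkj⟩)
    obtain rfl : k = j := by have := h.lt hik; omega
    exact hik
  · intro hij
    have hlt := h.lt hij
    have := h.le_left hij
    have := h.right_le hij
    refine ⟨hlt, (h.mem_part_partition hlt.le).mpr
      ⟨Finset.mem_Icc.mpr (by omega), Finset.mem_Icc.mpr (by omega), .single hij⟩, ?_⟩
    rintro x hx ⟨hix, hxj⟩
    obtain ⟨-, -, hxj'⟩ := (h.mem_part_partition hxj.le).mp hx
    obtain rfl | ⟨k, hxk, hkj⟩ := hxj'.cases_tail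
    · exact absurd hxj (lt_irrefl _)
    · obtain rfl := h.left_unique hij hkj
      exact hix.not_ge (h.le_of_arcReachable hxk)

end IsArcDiagram

lemma pcount_p312 (n : ℕ) :
    pcount p312 n = Nat.card {A : Finset (ℕ × ℕ) // IsArcDiagram 1 n A ∧ Avoids312 A} :=
  Nat.card_congr <| Equiv.ofBijective
    (fun P => ⟨arcSet P.1, isArcDiagram_arcSet, partAvoids_p312_iff.mp P.2⟩)
    ⟨fun _ _ h => Subtype.ext (arcSet_injective (congrArg Subtype.val h)),
      fun ⟨_, hA, hav⟩ =>
        ⟨⟨hA.partition n, partAvoids_p312_iff.mpr (hA.arcSet_partition.symm ▸ hav)⟩,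
          Subtype.ext hA.arcSet_partition⟩⟩

end ArcDiagrams

section Operators

open Finset.HasAntidiagonal (antidiagonal mem_antidiagonal)

/-- The weight concentrated at the shape `S`. A shape records the stack of queues of pending
openers, top queue first, a queue of `c + 1` openers being written as `c`. -/
def pointWeight (S : List ℕ) : List ℕ → ℚ := Pi.single S 1

/-- The sum of a weight over the shapes that remain possible once it is decided whether the scanned
point opens an arc. -/
def openSum : (List ℕ → ℚ) →ₗ[ℚ] (List ℕ → ℚ) :=
  LinearMap.pi fun S => .proj S + .proj (0 :: S)

/-- The weight of the shape left when the oldest opener of the top queue is closed. -/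
def popSum : (List ℕ → ℚ) →ₗ[ℚ] (List ℕ → ℚ) :=
  LinearMap.pi fun
    | [] => 0
    | 0 :: S => .proj S
    | (c + 1) :: S => .proj (c :: S)

/-- The value of `mergeSum` at a shape, by recursion on the number of queues: merging queues of
`a + 1` and `b + 1` openers gives one of `(a + b + 1) + 1`. -/
def mergeSumAt : List ℕ → (List ℕ → ℚ) →ₗ[ℚ] ℚ
  | [] => 0
  | [a] => .proj [a]
  | a :: b :: S => .proj (a :: b :: S) + mergeSumAt ((a + b + 1) :: S)
termination_by S => S.length

/-- The sum of a weight over the shapes obtained from a nonempty shape by merging any positive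
number of its top queues into one. -/
def mergeSum : (List ℕ → ℚ) →ₗ[ℚ] (List ℕ → ℚ) := LinearMap.pi mergeSumAt

/-- The sum of a weight over the shapes that remain possible once it is decided whether the scanned
point closes an arc and which one: closing the oldest opener of a queue merges all queues above
that queue into it. -/
def closeSum : (List ℕ → ℚ) →ₗ[ℚ] (List ℕ → ℚ) := 1 + mergeSum ∘ₗ popSum

variable (w : List ℕ → ℚ)

@[simp] lemma openSum_apply (S : List ℕ) : openSum w S = w S + w (0 :: S) := rfl
@[simp] lemma popSum_nil : popSum w [] = 0 := rfl
@[simp] lemma popSum_zero_cons (S : List ℕ) : popSum w (0 :: S) = w S := rfl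
@[simp] lemma popSum_succ_cons (c : ℕ) (S : List ℕ) : popSum w ((c + 1) :: S) = w (c :: S) := rfl
@[simp] lemma mergeSum_nil : mergeSum w [] = 0 := by simp [mergeSum, mergeSumAt]
@[simp] lemma mergeSum_singleton (a : ℕ) : mergeSum w [a] = w [a] := by simp [mergeSum, mergeSumAt]
@[simp] lemma mergeSum_cons_cons (a b : ℕ) (S : List ℕ) :
    mergeSum w (a :: b :: S) = w (a :: b :: S) + mergeSum w ((a + b + 1) :: S) := by
  simp [mergeSum, mergeSumAt]

lemma closeSum_apply : closeSum w = w + mergeSum (popSum w) := rfl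

lemma openSum_pointWeight_nil : openSum (pointWeight []) = pointWeight [] := by
  ext T
  simp [pointWeight]

lemma openSum_pointWeight_zero_cons (S : List ℕ) :
    openSum (pointWeight (0 :: S)) = pointWeight (0 :: S) + pointWeight S := by
  ext T
  simp [pointWeight, Pi.single_apply]

lemma openSum_pointWeight_succ_cons (c : ℕ) (S : List ℕ) :
    openSum (pointWeight ((c + 1) :: S)) = pointWeight ((c + 1) :: S) := by
  ext T
  simp [pointWeight]

lemma popSum_pointWeight_nil : popSum (pointWeight []) = pointWeight [0] := by
  ext (_ | ⟨_ | c, T⟩) <;> simp [pointWeight, Pi.single_apply]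

lemma popSum_pointWeight_cons (c : ℕ) (S : List ℕ) :
    popSum (pointWeight (c :: S)) = pointWeight (0 :: c :: S) + pointWeight ((c + 1) :: S) := by
  ext (_ | ⟨_ | d, T⟩) <;> simp [pointWeight, Pi.single_apply]

lemma mergeSum_pointWeight_zero_cons (S : List ℕ) :
    mergeSum (pointWeight (0 :: S)) = pointWeight (0 :: S) := by
  ext T
  induction T using mergeSumAt.induct with
  | case1 => simp [pointWeight]
  | case2 a => simp
  | case3 a b T ih => rw [mergeSum_cons_cons, ih]; simp [pointWeight]

lemma mergeSum_pointWeight_succ_cons (c : ℕ) (S : List ℕ) :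
    mergeSum (pointWeight ((c + 1) :: S)) = pointWeight ((c + 1) :: S) +
      ∑ p ∈ antidiagonal c, mergeSum (pointWeight (p.1 :: p.2 :: S)) := by
  ext T
  induction T using mergeSumAt.induct with
  | case1 => simp [pointWeight]
  | case2 a => simp [pointWeight]
  | case3 a b T ih =>
    have hsum : ∑ p ∈ antidiagonal c, pointWeight (p.1 :: p.2 :: S) (a :: b :: T) =
        pointWeight ((c + 1) :: S) ((a + b + 1) :: T) := by
      have hsplit (p : ℕ × ℕ) : pointWeight (p.1 :: p.2 :: S) (a :: b :: T) =
          if (a, b) = p then pointWeight S T else 0 := by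
        simp [pointWeight, Pi.single_apply, Prod.ext_iff, ite_and]
      simp only [hsplit, Finset.sum_ite_eq, mem_antidiagonal]
      simp [pointWeight, Pi.single_apply, ite_and]
    simp only [mergeSum_cons_cons, ih, Pi.add_apply, Finset.sum_apply, Finset.sum_add_distrib, hsum]

end Operators

section WalkSeries

open PowerSeries
open Finset.HasAntidiagonal (antidiagonal mem_antidiagonal)

/-- The transfer operator of the scan: a point first may close an arc and then may open one. -/
def step : (List ℕ → ℚ) →ₗ[ℚ] (List ℕ → ℚ) := closeSum ∘ₗ openSum

/-- The generating function, by the number of scanned points, of the scans that start from the empty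
shape, each weighted by the shape it ends in. -/
noncomputable def walkSeries : (List ℕ → ℚ) →ₗ[ℚ] ℚ⟦X⟧ where
  toFun w := mk fun n => (step ^ n) w []
  map_add' v w := by ext; simp
  map_smul' a w := by ext; simp

lemma walkSeries_eq (w : List ℕ → ℚ) :
    walkSeries w = C (w []) + X * walkSeries (step w) := by
  ext (_ | n)
  · simp [walkSeries]
  · simp [walkSeries, coeff_succ_X_mul, pow_succ]

/-- The generating function of the scans that end in the shape `S`. -/
noncomputable def shapeSeries (S : List ℕ) : ℚ⟦X⟧ := walkSeries (pointWeight S)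

/-- The generating function of the scans that reach `S` halfway through a point, after the choice of
what it closes and before the choice of whether it opens an arc. -/
noncomputable def closeSeries (S : List ℕ) : ℚ⟦X⟧ := walkSeries (closeSum (pointWeight S))

/-- The generating function of the scans followed by a merging, as in `mergeSum`, that
yields `S`. -/
noncomputable def mergeSeries (S : List ℕ) : ℚ⟦X⟧ := walkSeries (mergeSum (pointWeight S))

lemma shapeSeries_nil : shapeSeries [] = 1 + X * closeSeries [] := by
  rw [shapeSeries, walkSeries_eq, step, LinearMap.comp_apply, openSum_pointWeight_nil]
  simp [closeSeries, pointWeight]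

lemma closeSeries_nil : closeSeries [] = shapeSeries [] + mergeSeries [0] := by
  simp only [closeSeries, closeSum_apply, popSum_pointWeight_nil, map_add, shapeSeries, mergeSeries]

lemma eq_zero_of_forall_X_pow_dvd {A : Type*} [CommRing A] {f : A⟦X⟧} (h : ∀ n, X ^ (n + 1) ∣ f) :
    f = 0 := by
  ext n
  exact X_pow_dvd_iff.mp (h n) n n.lt_succ_self

/-- The linear recursion satisfied by `shapeSeries`, `mergeSeries` and `closeSeries` (here `R`, `M`
and `V`) above the empty shape. It only ever looks at the top of a shape, so appending a fixed list
below all shapes gives another solution. -/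
structure IsStackSystem {A : Type*} [CommRing A] (R M V : List ℕ → A⟦X⟧) : Prop where
  open_zero (S : List ℕ) : R (0 :: S) = X * (V (0 :: S) + V S)
  open_succ (c : ℕ) (S : List ℕ) : R ((c + 1) :: S) = X * V ((c + 1) :: S)
  merge_zero (S : List ℕ) : M (0 :: S) = R (0 :: S)
  merge_succ (c : ℕ) (S : List ℕ) :
    M ((c + 1) :: S) = R ((c + 1) :: S) + ∑ p ∈ antidiagonal c, M (p.1 :: p.2 :: S)
  close_cons (c : ℕ) (S : List ℕ) :
    V (c :: S) = R (c :: S) + (M (0 :: c :: S) + M ((c + 1) :: S))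

lemma isStackSystem_shapeSeries : IsStackSystem shapeSeries mergeSeries closeSeries where
  open_zero S := by
    rw [shapeSeries, walkSeries_eq, step, LinearMap.comp_apply, openSum_pointWeight_zero_cons]
    simp [closeSeries, pointWeight]
  open_succ c S := by
    rw [shapeSeries, walkSeries_eq, step, LinearMap.comp_apply, openSum_pointWeight_succ_cons]
    simp [closeSeries, pointWeight]
  merge_zero S := by rw [mergeSeries, mergeSum_pointWeight_zero_cons, shapeSeries]
  merge_succ c S := by
    simp only [mergeSeries, mergeSum_pointWeight_succ_cons, map_add, map_sum, shapeSeries]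
  close_cons c S := by
    simp only [closeSeries, closeSum_apply, popSum_pointWeight_cons, map_add, shapeSeries,
      mergeSeries]

namespace IsStackSystem

variable {A : Type*} [CommRing A] {R M V : List ℕ → A⟦X⟧}

lemma append_sub (h : IsStackSystem R M V) (U : List ℕ) (a b : A⟦X⟧) :
    IsStackSystem (fun S => R (S ++ U) * a - R S * b) (fun S => M (S ++ U) * a - M S * b)
      (fun S => V (S ++ U) * a - V S * b) where
  open_zero S := by
    simp only [List.cons_append]
    linear_combination a * h.open_zero (S ++ U) - b * h.open_zero S
  open_succ c S := by
    simp only [List.cons_append]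
    linear_combination a * h.open_succ c (S ++ U) - b * h.open_succ c S
  merge_zero S := by
    simp only [List.cons_append]
    linear_combination a * h.merge_zero (S ++ U) - b * h.merge_zero S
  merge_succ c S := by
    simp only [List.cons_append, Finset.sum_sub_distrib, ← Finset.sum_mul]
    linear_combination a * h.merge_succ c (S ++ U) - b * h.merge_succ c S
  close_cons c S := by
    simp only [List.cons_append]
    linear_combination a * h.close_cons c (S ++ U) - b * h.close_cons c S

variable {n : ℕ}

lemma X_pow_succ_dvd_open (h : IsStackSystem R M V) (hV : ∀ S, X ^ n ∣ V S) (c : ℕ) (S : List ℕ) :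
    X ^ (n + 1) ∣ R (c :: S) := by
  rw [pow_succ']
  cases c with
  | zero => rw [h.open_zero]; exact mul_dvd_mul_left X ((hV _).add (hV _))
  | succ c => rw [h.open_succ]; exact mul_dvd_mul_left X (hV _)

lemma X_pow_succ_dvd_merge (h : IsStackSystem R M V) (hV : ∀ S, X ^ n ∣ V S) (c : ℕ) :
    ∀ S, X ^ (n + 1) ∣ M (c :: S) := by
  induction c using Nat.strong_induction_on with
  | _ c ih =>
    intro S
    cases c with
    | zero => rw [h.merge_zero]; exact h.X_pow_succ_dvd_open hV 0 S
    | succ c =>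
      rw [h.merge_succ]
      refine (h.X_pow_succ_dvd_open hV _ S).add (Finset.dvd_sum fun p hp => ih p.1 ?_ _)
      have := mem_antidiagonal.mp hp
      omega

lemma X_pow_dvd_close (h : IsStackSystem R M V) (h0 : V [] = 0) (n : ℕ) : ∀ S, X ^ n ∣ V S := by
  induction n with
  | zero => simp
  | succ n ih =>
    rintro (_ | ⟨c, S⟩)
    · simp [h0]
    · rw [h.close_cons]
      exact (h.X_pow_succ_dvd_open ih c S).add
        ((h.X_pow_succ_dvd_merge ih 0 _).add (h.X_pow_succ_dvd_merge ih _ S))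

/-- Both sides solve the same recursion with the same value at the empty shape, and that value
determines the solution. -/
lemma merge_cons_mul (h : IsStackSystem R M V) (c : ℕ) (S : List ℕ) :
    M (c :: S) * V [] = M [c] * V S := by
  have h' := h.append_sub S (V []) (V S)
  exact sub_eq_zero.mp <| eq_zero_of_forall_X_pow_dvd fun n =>
    h'.X_pow_succ_dvd_merge (h'.X_pow_dvd_close (by simp [mul_comm]) n) c []

/-- The generating function, scaled by `β`, of the values of `F` at the one-queue shapes. -/
noncomputable def singletonSeries (β : A⟦X⟧) (F : List ℕ → A⟦X⟧) : A⟦X⟧⟦X⟧ :=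
  PowerSeries.mk fun c => β * F [c]

@[simp] lemma coeff_singletonSeries (β : A⟦X⟧) (F : List ℕ → A⟦X⟧) (c : ℕ) :
    coeff c (singletonSeries β F) = β * F [c] := coeff_mk c _

variable {β : A⟦X⟧}

lemma singletonSeries_merge (h : IsStackSystem R M V) (hβ : β * V [] = 1) :
    singletonSeries β M = C X * (singletonSeries β V + 1) +
      X * (singletonSeries β M * singletonSeries β V) := by
  ext1 c
  cases c with
  | zero =>
    simp only [map_add, coeff_C_mul, coeff_singletonSeries, coeff_zero_X_mul, coeff_zero_one]
    rw [h.merge_zero, h.open_zero]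
    linear_combination X * hβ
  | succ c =>
    have hprod (p : ℕ × ℕ) : β * M [p.1] * (β * V [p.2]) = β * M [p.1, p.2] := by
      linear_combination β * M [p.1, p.2] * hβ - β ^ 2 * h.merge_cons_mul p.1 [p.2]
    have hconv : coeff c (singletonSeries β M * singletonSeries β V) =
        β * ∑ p ∈ antidiagonal c, M [p.1, p.2] := by
      simp only [coeff_mul, coeff_singletonSeries, hprod, Finset.mul_sum]
    simp only [map_add, coeff_C_mul, coeff_singletonSeries, coeff_succ_X_mul, hconv, coeff_one,
      c.succ_ne_zero, if_false]
    rw [h.merge_succ, h.open_succ]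
    ring

lemma X_mul_singletonSeries_close (h : IsStackSystem R M V) (hβ : β * V [] = 1) :
    X * singletonSeries β V = X * (C X * (singletonSeries β V + 1)) +
      C (β * M [0]) * (X * singletonSeries β V) +
        (singletonSeries β M - C (β * M [0])) := by
  ext1 c
  cases c with
  | zero =>
    simp only [map_add, map_sub, coeff_zero_X_mul, mul_left_comm (C (β * M [0])),
      coeff_singletonSeries, coeff_zero_C]
    ring
  | succ c =>
    have hopen : R [c] = X * (V [c] + V [] * if c = 0 then 1 else 0) := by
      cases c with
      | zero => simp [h.open_zero]
      | succ c => simp [h.open_succ]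
    simp only [map_add, map_sub, coeff_C_mul, coeff_singletonSeries, coeff_succ_X_mul, coeff_one,
      coeff_C, mul_left_comm (C (β * M [0])), c.succ_ne_zero, if_false]
    linear_combination β * h.close_cons c [] + β * hopen
      + β ^ 2 * h.merge_cons_mul 0 [c] - β * M [0, c] * hβ
      + X * (if c = 0 then 1 else 0) * hβ

/-- Eliminating the merge series gives a functional equation for the close series of one-queue
shapes alone. -/
lemma kernel_equation (h : IsStackSystem R M V) (hβ : β * V [] = 1) {q : A⟦X⟧⟦X⟧}
    (hq : q = singletonSeries β V) :
    X * q * (1 - X * q) =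
      C X * (q + 1) * (X * (1 - X * q) + 1) - C (β * M [0]) * (1 - X * q) ^ 2 := by
  have hm := h.singletonSeries_merge hβ
  have hv := h.X_mul_singletonSeries_close hβ
  rw [← hq] at hm hv
  linear_combination (1 - X * q) * hv + hm

end IsStackSystem

end WalkSeries

section Scanning

/-- The openers pending when a left-to-right scan of the points reaches `m`, as a stack of nonempty
queues. The most recent queue is first, and each queue lists its openers from the most recent to
the oldest, so that they decrease throughout. -/
structure IsQueueStack (m : ℕ) (L : List (List ℕ)) : Prop where
  ne_nil : ∀ C ∈ L, C ≠ []
  pairwise : (m :: L.flatten).Pairwise (· > ·)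

/-- The openers in `C` are closed by arcs of `A` in the order in which they were opened. -/
def IsFifo (A : Finset (ℕ × ℕ)) (C : List ℕ) : Prop :=
  ∀ ⦃b⦄, b ∈ C → ∀ ⦃c⦄, c ∈ C → b < c → ∀ ⦃y x⦄, (b, y) ∈ A → (c, x) ∈ A → y < x

/-- `A` is the set of arcs still to be closed in a `312`-avoiding arc diagram on points up to `n`,
after a scan that has left the stack of queues `L`: the openers of `L` have to be closed, new
openers are taken from `o` on, and closers from `c` on. Closing `p` forces the openers pending to
the right of `p` to be closed first in, first out, and those are the queues. -/
structure IsCompletion (o c n : ℕ) (L : List (List ℕ)) (A : Finset (ℕ × ℕ)) : Prop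
    extends IsArcDiagram 0 n A where
  left_mem {i j : ℕ} : (i, j) ∈ A → i ∈ L.flatten ∨ o ≤ i
  le_right {i j : ℕ} : (i, j) ∈ A → c ≤ j
  exists_arc {i : ℕ} : i ∈ L.flatten → ∃ j, (i, j) ∈ A
  fifo {C : List ℕ} : C ∈ L → IsFifo A C
  avoids : Avoids312 A

open Classical in
/-- The finite set of arc sets described by `IsCompletion`. -/
noncomputable def completions (o c n : ℕ) (L : List (List ℕ)) : Finset (Finset (ℕ × ℕ)) :=
  (Finset.range n ×ˢ Finset.range (n + 1)).powerset.filter (IsCompletion o c n L)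

variable {o c m n p q : ℕ} {A B : Finset (ℕ × ℕ)} {C D : List ℕ} {L X : List (List ℕ)}

lemma mem_completions : A ∈ completions o c n L ↔ IsCompletion o c n L A := by
  simp only [completions, Finset.mem_filter, Finset.mem_powerset, and_iff_right_iff_imp]
  rintro h ⟨i, j⟩ hij
  have := h.lt hij
  have := h.right_le hij
  simp only [Finset.mem_product, Finset.mem_range]
  omega

namespace IsQueueStack

lemma lt_of_mem (h : IsQueueStack m L) {i : ℕ} (hi : i ∈ L.flatten) : i < m :=
  (List.pairwise_cons.mp h.pairwise).1 i hi

lemma tail (h : IsQueueStack m (C :: X)) : IsQueueStack m X where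
  ne_nil D hD := h.ne_nil D (List.mem_cons_of_mem _ hD)
  pairwise := h.pairwise.sublist ((List.sublist_append_right C _).cons_cons m)

lemma lt_of_mem_head (h : IsQueueStack m (C :: X)) {b i : ℕ} (hb : b ∈ C) (hi : i ∈ X.flatten) :
    i < b :=
  (List.pairwise_append.mp (List.pairwise_cons.mp h.pairwise).2).2.2 b hb i hi

lemma lt_of_mem_dropLast (h : IsQueueStack m ((C ++ [p]) :: X)) {b : ℕ} (hb : b ∈ C) : p < b :=
  (List.pairwise_append.mp (List.pairwise_append.mp (List.pairwise_cons.mp h.pairwise).2).1).2.2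
    b hb p (List.mem_singleton_self p)

lemma merge (h : IsQueueStack m (C :: D :: X)) : IsQueueStack m ((C ++ D) :: X) where
  ne_nil := by
    have := h.ne_nil
    simp_all
  pairwise := by simpa using h.pairwise

lemma pop (h : IsQueueStack m ((C ++ [p]) :: X)) (hC : C ≠ []) : IsQueueStack m (C :: X) where
  ne_nil := List.forall_mem_cons.mpr ⟨hC, h.tail.ne_nil⟩
  pairwise := h.pairwise.sublist
    (((List.sublist_append_left C [p]).append_right X.flatten).cons_cons m)

lemma succ (h : IsQueueStack m L) : IsQueueStack (m + 1) L where
  ne_nil := h.ne_nil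
  pairwise := List.pairwise_cons.mpr
    ⟨fun _ hi => (h.lt_of_mem hi).trans m.lt_succ_self, (List.pairwise_cons.mp h.pairwise).2⟩

lemma push (h : IsQueueStack m L) : IsQueueStack (m + 1) ([m] :: L) where
  ne_nil := List.forall_mem_cons.mpr ⟨List.cons_ne_nil _ _, h.ne_nil⟩
  pairwise := List.pairwise_cons.mpr
    ⟨List.forall_mem_cons.mpr ⟨m.lt_succ_self, fun _ hi => h.succ.lt_of_mem hi⟩, h.pairwise⟩

end IsQueueStack

lemma Avoids312.mono (h : Avoids312 A) (hB : B ⊆ A) : Avoids312 B :=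
  fun _ _ _ _ _ _ hab hbc hcx hxw hwy hax hby hcw =>
    h hab hbc hcx hxw hwy (hB hax) (hB hby) (hB hcw)

lemma IsFifo.mono (h : IsFifo A C) (hB : B ⊆ A) (hD : D ⊆ C) : IsFifo B D :=
  fun _ hb _ hc hbc _ _ hy hx => h (hD hb) (hD hc) hbc (hB hy) (hB hx)

lemma IsFifo.insert_of_notMem (h : IsFifo A C) (hp : p ∉ C) : IsFifo (insert (p, m) A) C := by
  grind [IsFifo]

lemma IsFifo.insert_of_lt (h : IsFifo A C) (hC : ∀ b ∈ C, p < b) (hp : ∀ j, (p, j) ∉ A)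
    (hm : ∀ {i j}, (i, j) ∈ A → m < j) : IsFifo (insert (p, m) A) (C ++ [p]) := by
  grind [IsFifo]

lemma Avoids312.insert_arc (h : Avoids312 A) (hC : IsFifo A C) (hm : ∀ {i j}, (i, j) ∈ A → m < j)
    (hmem : ∀ {b y}, (b, y) ∈ A → p < b → b < m → b ∈ C) : Avoids312 (insert (p, m) A) := by
  intro a b c x w y hab hbc hcx hxw hwy hax hby hcw
  have old {i j : ℕ} (hmj : m < j) (hij : (i, j) ∈ insert (p, m) A) : (i, j) ∈ A :=
    Finset.mem_of_mem_insert_of_ne hij (by simp [hmj.ne'])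
  obtain hpm | hax := Finset.mem_insert.mp hax
  · obtain ⟨rfl, rfl⟩ := Prod.mk_inj.mp hpm
    replace hby := old (hxw.trans hwy) hby
    replace hcw := old hxw hcw
    exact hwy.not_gt <|
      hC (hmem hby hab (hbc.trans hcx)) (hmem hcw (hab.trans hbc) hcx) hbc hby hcw
  · have hmx := hm hax
    exact h hab hbc hcx hxw hwy hax (old (hmx.trans (hxw.trans hwy)) hby)
      (old (hmx.trans hxw) hcw)

namespace IsCompletion

lemma congr_flatten (h : IsCompletion o c n L A) (hLX : L.flatten = X.flatten)
    (hX : ∀ C ∈ X, IsFifo A C) : IsCompletion o c n X A where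
  toIsArcDiagram := h.toIsArcDiagram
  left_mem := hLX ▸ h.left_mem
  le_right := h.le_right
  exists_arc := hLX ▸ h.exists_arc
  fifo := hX _
  avoids := h.avoids

lemma fifo_of_forall_le (h : IsCompletion o m n L A) (hp : (p, m) ∈ A)
    (hC : ∀ b ∈ C, p ≤ b ∧ b < m) : IsFifo A C := by
  intro b hb c hc hbc y x hy hx
  obtain ⟨hpb, -⟩ := hC b hb
  obtain ⟨-, hcm⟩ := hC c hc
  have hmx : m < x := (h.le_right hx).lt_of_ne fun hmx => by
    have := h.left_unique hp (hmx ▸ hx)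
    omega
  obtain rfl | hpb := hpb.eq_or_lt
  · rwa [h.right_unique hy hp]
  by_contra! hxy
  obtain rfl | hxy := hxy.eq_or_lt
  · exact hbc.ne (h.left_unique hy hx)
  · exact h.avoids hpb hbc hcm hmx hxy hp hy hx

lemma le_of_mem_queue (h : IsCompletion o m n L A) (hp : (p, m) ∈ A) (hD : D ∈ L) (hpD : p ∈ D)
    {d : ℕ} (hd : d ∈ D) : p ≤ d := by
  by_contra! hdp
  obtain ⟨y, hy⟩ := h.exists_arc (List.mem_flatten.mpr ⟨D, hD, hd⟩)
  exact (h.le_right hy).not_gt (h.fifo hD hd hpD hdp hy hp)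

lemma mem_flatten_of_arc (h : IsCompletion m c n L A) (hp : (p, m) ∈ A) : p ∈ L.flatten :=
  (h.left_mem hp).resolve_right (h.lt hp).not_ge

lemma mem_flatten_tail_of_arc (hL : IsQueueStack m ((C ++ [p]) :: X))
    (h : IsCompletion m m n ((C ++ [p]) :: X) A) (hq : (q, m) ∈ A) (hqp : q ≠ p) :
    q ∈ X.flatten := by
  have hmem := h.mem_flatten_of_arc hq
  rw [List.flatten_cons, List.mem_append] at hmem
  refine hmem.resolve_left fun hqC => ?_
  have hle := h.le_of_mem_queue hq List.mem_cons_self hqC (d := p) (by simp)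
  rw [List.mem_append, List.mem_singleton] at hqC
  exact (hL.lt_of_mem_dropLast (hqC.resolve_right hqp)).not_ge hle

lemma merge (hL : IsQueueStack m ((C ++ [p]) :: D :: X))
    (h : IsCompletion m m n ((C ++ [p]) :: D :: X) A) (hq : (q, m) ∈ A) (hqp : q ≠ p) :
    IsCompletion m m n ((C ++ [p] ++ D) :: X) A := by
  have hqX := h.mem_flatten_tail_of_arc hL hq hqp
  have le_of_mem {b : ℕ} (hb : b ∈ C ++ [p] ++ D) : q ≤ b := by
    obtain hb | hb := List.mem_append.mp hb
    · exact (hL.lt_of_mem_head hb hqX).le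
    obtain hqD | hqX := List.mem_append.mp hqX
    · exact h.le_of_mem_queue hq (by simp) hqD hb
    · exact (hL.tail.lt_of_mem_head hb hqX).le
  refine h.congr_flatten (by simp) <| List.forall_mem_cons.mpr
    ⟨h.fifo_of_forall_le hq fun b hb => ⟨le_of_mem hb, hL.lt_of_mem ?_⟩,
      fun E hE => h.fifo (by simp [hE])⟩
  rw [List.flatten_cons, List.flatten_cons, ← List.append_assoc]
  exact List.mem_append_left _ hb

lemma of_merge (h : IsCompletion o c n ((C ++ D) :: X) A) : IsCompletion o c n (C :: D :: X) A := by
  have hCD := h.fifo List.mem_cons_self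
  exact h.congr_flatten (by simp) <| List.forall_mem_cons.mpr
    ⟨hCD.mono subset_rfl (List.subset_append_left _ _), List.forall_mem_cons.mpr
      ⟨hCD.mono subset_rfl (List.subset_append_right _ _),
        fun _ hE => h.fifo (List.mem_cons_of_mem _ hE)⟩⟩

lemma not_arc_of_merge (hL : IsQueueStack m ((C ++ [p]) :: D :: X))
    (h : IsCompletion m m n ((C ++ [p] ++ D) :: X) A) : (p, m) ∉ A := by
  intro hp
  obtain ⟨d, hd⟩ := List.exists_mem_of_ne_nil D (hL.ne_nil D (by simp))
  have hle := h.le_of_mem_queue hp List.mem_cons_self (by simp) (d := d) (by simp [hd])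
  exact (hL.lt_of_mem_head (by simp) (by simp [hd])).not_ge hle

lemma erase_arc (h : IsCompletion m m n ((C ++ [p]) :: X) A) (hL : IsQueueStack m ((C ++ [p]) :: X))
    (hp : (p, m) ∈ A) : IsCompletion m (m + 1) n (C :: X) (A.erase (p, m)) where
  toIsArcDiagram := h.toIsArcDiagram.mono (A.erase_subset _)
  left_mem {i j} hij := by
    obtain ⟨hne, hij'⟩ := Finset.mem_erase.mp hij
    have hip : i ≠ p := by
      rintro rfl
      exact hne (by rw [h.right_unique hij' hp])
    simpa [hip] using h.left_mem hij'
  le_right {i j} hij := by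
    obtain ⟨hne, hij'⟩ := Finset.mem_erase.mp hij
    refine (h.le_right hij').lt_of_ne ?_
    rintro rfl
    exact hne (by rw [h.left_unique hij' hp])
  exists_arc {i} hi := by
    have hpi : i ≠ p := by
      rintro rfl
      obtain hi | hi := List.mem_append.mp hi
      · exact (hL.lt_of_mem_dropLast hi).false
      · exact (hL.lt_of_mem_head (by simp) hi).false
    obtain ⟨j, hij⟩ := h.exists_arc (i := i) (by simp_all)
    exact ⟨j, Finset.mem_erase.mpr ⟨by simp [hpi], hij⟩⟩
  fifo {E} hE := by
    obtain rfl | hE := List.mem_cons.mp hE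
    · exact (h.fifo List.mem_cons_self).mono (A.erase_subset _) (List.subset_append_left _ _)
    · exact (h.fifo (List.mem_cons_of_mem _ hE)).mono (A.erase_subset _) (List.Subset.refl _)
  avoids := h.avoids.mono (A.erase_subset _)

lemma not_arc_of_pop (h : IsCompletion m c n (C :: X) A) (hL : IsQueueStack m ((C ++ [p]) :: X))
    {j : ℕ} : (p, j) ∉ A := by
  intro hp
  obtain hpL | hmp := h.left_mem hp
  · obtain hpC | hpX := List.mem_append.mp hpL
    · exact (hL.lt_of_mem_dropLast hpC).false
    · exact (hL.lt_of_mem_head (by simp) hpX).false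
  · exact (hL.lt_of_mem (by simp)).not_ge hmp

lemma insert_arc (hL : IsQueueStack m ((C ++ [p]) :: X)) (hmn : m ≤ n)
    (h : IsCompletion m (m + 1) n (C :: X) A) :
    IsCompletion m m n ((C ++ [p]) :: X) (insert (p, m) A) where
  toIsArcDiagram :=
    h.toIsArcDiagram.insert_arc p.zero_le (hL.lt_of_mem (by simp)) hmn
      (fun _ => h.not_arc_of_pop hL) fun _ hi => (h.le_right hi).not_gt m.lt_succ_self
  left_mem {i j} hij := by
    obtain hij | hij := Finset.mem_insert.mp hij
    · simp_all
    · exact (h.left_mem hij).imp_left fun hi =>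
        ((List.sublist_append_left C [p]).append_right X.flatten).subset hi
  le_right {i j} hij := by
    obtain hij | hij := Finset.mem_insert.mp hij
    · simp_all
    · exact (Nat.le_succ m).trans (h.le_right hij)
  exists_arc {i} hi := by
    obtain rfl | hip := eq_or_ne i p
    · exact ⟨m, Finset.mem_insert_self _ _⟩
    · obtain ⟨j, hij⟩ := h.exists_arc (i := i) (by simp_all)
      exact ⟨j, Finset.mem_insert_of_mem hij⟩
  fifo {E} hE := by
    obtain rfl | hE := List.mem_cons.mp hE
    · exact (h.fifo List.mem_cons_self).insert_of_lt (fun _ => hL.lt_of_mem_dropLast)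
        (fun _ => h.not_arc_of_pop hL) h.le_right
    · refine (h.fifo (List.mem_cons_of_mem _ hE)).insert_of_notMem fun hpE => ?_
      exact (hL.lt_of_mem_head (by simp) (List.mem_flatten_of_mem hE hpE)).false
  avoids := by
    refine h.avoids.insert_arc (h.fifo List.mem_cons_self) h.le_right fun hby hpb hbm => ?_
    obtain hb | hb := List.mem_append.mp ((h.left_mem hby).resolve_right hbm.not_ge)
    · exact hb
    · exact absurd (hL.lt_of_mem_head (by simp) hb) hpb.not_gt

lemma of_le {o' c' : ℕ} (h : IsCompletion o c n L A) (ho : ∀ {i j}, (i, j) ∈ A → o ≤ i → o' ≤ i)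
    (hc : ∀ {i j}, (i, j) ∈ A → c' ≤ j) : IsCompletion o' c' n L A where
  toIsArcDiagram := h.toIsArcDiagram
  left_mem hij := (h.left_mem hij).imp_right (ho hij)
  le_right := hc
  exists_arc := h.exists_arc
  fifo := h.fifo
  avoids := h.avoids

lemma push (h : IsCompletion m (m + 1) n L A) (hm : ∃ j, (m, j) ∈ A) :
    IsCompletion (m + 1) (m + 1) n ([m] :: L) A where
  toIsArcDiagram := h.toIsArcDiagram
  left_mem {i j} hij := by
    obtain hi | hi := h.left_mem hij
    · exact .inl (List.mem_cons_of_mem _ hi)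
    · exact hi.eq_or_lt.imp_left (by rintro rfl; exact List.mem_cons_self)
  le_right := h.le_right
  exists_arc hi := by
    obtain rfl | hi := List.mem_cons.mp hi
    · exact hm
    · exact h.exists_arc hi
  fifo := List.forall_mem_cons.mpr ⟨by simp [IsFifo], fun _ => h.fifo⟩ _
  avoids := h.avoids

lemma of_push (h : IsCompletion (m + 1) (m + 1) n ([m] :: L) A) :
    IsCompletion m (m + 1) n L A where
  toIsArcDiagram := h.toIsArcDiagram
  left_mem {i j} hij := by
    obtain hi | hi := h.left_mem hij
    · exact (List.mem_cons.mp hi).symm.imp_right Eq.ge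
    · exact .inr ((Nat.le_succ m).trans hi)
  le_right := h.le_right
  exists_arc hi := h.exists_arc (List.mem_cons_of_mem _ hi)
  fifo hC := h.fifo (List.mem_cons_of_mem _ hC)
  avoids := h.avoids

end IsCompletion

lemma isCompletion_nil_iff : IsCompletion m m n [] A ↔ IsArcDiagram m n A ∧ Avoids312 A where
  mp h := ⟨{ h.toIsArcDiagram with
    le_left := fun hij => (h.left_mem hij).resolve_left List.not_mem_nil }, h.avoids⟩
  mpr h :=
    { h.1 with
      le_left := fun _ => Nat.zero_le _
      left_mem := fun hij => .inr (h.1.le_left hij)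
      le_right := fun hij => (h.1.le_left hij).trans (h.1.lt hij).le
      exists_arc := fun hi => absurd hi List.not_mem_nil
      fifo := fun hC => absurd hC List.not_mem_nil
      avoids := h.2 }

lemma isCompletion_nil_cons_iff : IsCompletion o c n ([] :: X) A ↔ IsCompletion o c n X A :=
  ⟨fun h => h.congr_flatten rfl fun _ hC => h.fifo (List.mem_cons_of_mem _ hC),
    fun h => h.congr_flatten rfl <| List.forall_mem_cons.mpr ⟨by simp [IsFifo], fun _ => h.fifo⟩⟩

lemma completions_nil_cons : completions o c n ([] :: X) = completions o c n X := by
  ext A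
  simp only [mem_completions, isCompletion_nil_cons_iff]

open Classical in
/-- The completions in which the point `m`, the next to be scanned, closes an arc. -/
noncomputable def closings (m n : ℕ) (L : List (List ℕ)) : Finset (Finset (ℕ × ℕ)) :=
  (completions m m n L).filter fun A => ∃ q, (q, m) ∈ A

lemma mem_closings : A ∈ closings m n L ↔ IsCompletion m m n L A ∧ ∃ q, (q, m) ∈ A := by
  simp only [closings, Finset.mem_filter, mem_completions]

lemma closings_nil : closings m n [] = ∅ := by
  refine Finset.eq_empty_of_forall_notMem fun A hA => ?_
  obtain ⟨h, q, hq⟩ := mem_closings.mp hA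
  exact List.not_mem_nil (h.mem_flatten_of_arc hq)

lemma card_completions_eq_add_card_closings (m n : ℕ) (L : List (List ℕ)) :
    (completions m m n L).card = (completions m (m + 1) n L).card + (closings m n L).card := by
  classical
  rw [← Finset.card_filter_add_card_filter_not (s := completions m m n L)
    (fun A => ∃ q, (q, m) ∈ A), add_comm, closings]
  congr 2
  · ext A
    rw [Finset.mem_filter, mem_completions, mem_completions]
    refine ⟨fun ⟨h, hm⟩ => h.of_le (fun _ => id) fun {i j} hij => (h.le_right hij).lt_of_ne ?_,
      fun h => ⟨h.of_le (fun _ => id) fun hij => (Nat.le_succ m).trans (h.le_right hij),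
        fun ⟨q, hq⟩ => (h.le_right hq).not_gt m.lt_succ_self⟩⟩
    rintro rfl
    exact hm ⟨i, hij⟩

lemma card_closings_filter_mem (hL : IsQueueStack m ((C ++ [p]) :: X)) (hmn : m ≤ n) :
    ((closings m n ((C ++ [p]) :: X)).filter ((p, m) ∈ ·)).card =
      (completions m (m + 1) n (C :: X)).card := by
  refine Finset.card_nbij' (Finset.erase · (p, m)) (insert (p, m)) ?_ ?_ ?_ ?_
  · intro A hA
    obtain ⟨hA, hp⟩ := Finset.mem_filter.mp hA
    exact mem_completions.mpr ((mem_closings.mp hA).1.erase_arc hL hp)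
  · intro A hA
    have hp := Finset.mem_insert_self (p, m) A
    exact Finset.mem_filter.mpr
      ⟨mem_closings.mpr ⟨(mem_completions.mp hA).insert_arc hL hmn, p, hp⟩, hp⟩
  · exact fun A hA => Finset.insert_erase (Finset.mem_filter.mp hA).2
  · exact fun A hA => Finset.erase_insert ((mem_completions.mp hA).not_arc_of_pop hL)

lemma card_closings_singleton (hL : IsQueueStack m [C ++ [p]]) (hmn : m ≤ n) :
    (closings m n [C ++ [p]]).card = (completions m (m + 1) n [C]).card := by
  rw [← card_closings_filter_mem hL hmn, Finset.filter_true_of_mem]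
  intro A hA
  obtain ⟨h, q, hq⟩ := mem_closings.mp hA
  obtain rfl | hqp := eq_or_ne q p
  · exact hq
  · exact absurd (h.mem_flatten_tail_of_arc hL hq hqp) List.not_mem_nil

lemma card_closings_cons_cons (hL : IsQueueStack m ((C ++ [p]) :: D :: X)) (hmn : m ≤ n) :
    (closings m n ((C ++ [p]) :: D :: X)).card =
      (completions m (m + 1) n (C :: D :: X)).card +
        (closings m n ((C ++ [p] ++ D) :: X)).card := by
  rw [← card_closings_filter_mem hL hmn, ← Finset.card_filter_add_card_filter_not ((p, m) ∈ ·)]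
  congr 2
  ext A
  rw [Finset.mem_filter, mem_closings, mem_closings]
  constructor
  · rintro ⟨⟨h, q, hq⟩, hp⟩
    exact ⟨h.merge hL hq fun hqp => hp (hqp ▸ hq), q, hq⟩
  · rintro ⟨h, hq⟩
    exact ⟨⟨h.of_merge, hq⟩, h.not_arc_of_merge hL⟩

lemma card_completions_eq_add_card_push (hL : IsQueueStack m L) :
    (completions m (m + 1) n L).card = (completions (m + 1) (m + 1) n L).card +
      (completions (m + 1) (m + 1) n ([m] :: L)).card := by
  classical
  rw [← Finset.card_filter_add_card_filter_not (s := completions m (m + 1) n L)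
    (fun A => ∃ j, (m, j) ∈ A), add_comm]
  congr 2
  · ext A
    rw [Finset.mem_filter, mem_completions, mem_completions]
    refine ⟨fun ⟨h, hm⟩ => h.of_le (fun {i j} hij hi => hi.lt_of_ne ?_) h.le_right,
      fun h => ⟨h.of_le (fun _ => (Nat.le_succ m).trans) h.le_right, fun ⟨j, hj⟩ => ?_⟩⟩
    · rintro rfl
      exact hm ⟨j, hij⟩
    · exact (h.left_mem hj).elim (fun hm => (hL.lt_of_mem hm).false) m.lt_succ_self.not_ge
  · ext A
    rw [Finset.mem_filter, mem_completions, mem_completions]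
    exact ⟨fun ⟨h, hm⟩ => h.push hm, fun h => ⟨h.of_push, h.exists_arc List.mem_cons_self⟩⟩

/-- The lengths of the queues; a queue of length `a + 1` is recorded as `a`. -/
def queueShape (L : List (List ℕ)) : List ℕ := L.map fun C => C.length - 1

lemma card_completions_last (hL : IsQueueStack (n + 1) L) :
    ((completions (n + 1) (n + 1) n L).card : ℚ) = pointWeight [] (queueShape L) := by
  have eq_empty (A) (h : IsCompletion (n + 1) (n + 1) n L A) : A = ∅ :=
    Finset.eq_empty_of_forall_notMem fun ⟨_, _⟩ hij =>
      (h.le_right hij).not_gt (Nat.lt_succ_of_le (h.right_le hij))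
  obtain _ | ⟨C, X⟩ := L
  · have : completions (n + 1) (n + 1) n [] = {∅} := by
      ext A
      rw [mem_completions, Finset.mem_singleton]
      refine ⟨eq_empty A, ?_⟩
      rintro rfl
      exact isCompletion_nil_iff.mpr ⟨by constructor <;> simp, by simp [Avoids312]⟩
    simp [this, queueShape, pointWeight]
  · have : completions (n + 1) (n + 1) n (C :: X) = ∅ := by
      refine Finset.eq_empty_of_forall_notMem fun A hA => ?_
      have h := mem_completions.mp hA
      obtain ⟨i, hi⟩ := List.exists_mem_of_ne_nil C (hL.ne_nil C List.mem_cons_self)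
      obtain ⟨j, hj⟩ := h.exists_arc (List.mem_append_left _ hi)
      simp [eq_empty A h] at hj
    simp [this, queueShape, pointWeight]

lemma card_completions_open {w : List ℕ → ℚ} (hL : IsQueueStack m L)
    (hw : ∀ L, IsQueueStack (m + 1) L →
      ((completions (m + 1) (m + 1) n L).card : ℚ) = w (queueShape L)) :
    ((completions m (m + 1) n L).card : ℚ) = openSum w (queueShape L) := by
  rw [card_completions_eq_add_card_push hL, Nat.cast_add, hw L hL.succ, hw _ hL.push]
  rfl

lemma card_completions_pop {w : List ℕ → ℚ} (hL : IsQueueStack m ((C ++ [p]) :: X))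
    (hw : ∀ L, IsQueueStack m L →
      ((completions m (m + 1) n L).card : ℚ) = w (queueShape L)) :
    ((completions m (m + 1) n (C :: X)).card : ℚ) = popSum w (queueShape ((C ++ [p]) :: X)) := by
  obtain _ | ⟨c, C⟩ := C
  · rw [completions_nil_cons, hw X hL.tail]
    rfl
  · rw [hw _ (hL.pop (List.cons_ne_nil _ _))]
    simp [queueShape]

lemma card_closings {w : List ℕ → ℚ} (hmn : m ≤ n)
    (hw : ∀ L, IsQueueStack m L →
      ((completions m (m + 1) n L).card : ℚ) = w (queueShape L)) (hL : IsQueueStack m L) :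
    ((closings m n L).card : ℚ) = mergeSum (popSum w) (queueShape L) := by
  obtain _ | ⟨E, X⟩ := L
  · simp [closings_nil, queueShape]
  obtain ⟨C, p, rfl⟩ := List.eq_nil_or_concat' E |>.resolve_left (hL.ne_nil E List.mem_cons_self)
  induction X generalizing C p with
  | nil =>
    rw [card_closings_singleton hL hmn, card_completions_pop hL hw]
    simp [queueShape]
  | cons D X ih =>
    obtain ⟨D, q, rfl⟩ := List.eq_nil_or_concat' D |>.resolve_left (hL.ne_nil D (by simp))
    have hmerge := hL.merge
    rw [← List.append_assoc] at hmerge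
    rw [card_closings_cons_cons hL hmn, Nat.cast_add, card_completions_pop hL hw,
      ← List.append_assoc, ih _ _ hmerge]
    simp [queueShape, ← add_assoc]

lemma card_completions_step {w : List ℕ → ℚ} (hmn : m ≤ n)
    (hw : ∀ L, IsQueueStack (m + 1) L →
      ((completions (m + 1) (m + 1) n L).card : ℚ) = w (queueShape L)) (hL : IsQueueStack m L) :
    ((completions m m n L).card : ℚ) = step w (queueShape L) := by
  have hopen (L) (hL : IsQueueStack m L) := card_completions_open hL hw
  rw [card_completions_eq_add_card_closings, Nat.cast_add, hopen L hL, card_closings hmn hopen hL]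
  rfl

lemma card_completions (k : ℕ) (hk : m + k = n + 1) (hL : IsQueueStack m L) :
    ((completions m m n L).card : ℚ) = (step ^ k) (pointWeight []) (queueShape L) := by
  induction k generalizing m L with
  | zero =>
    obtain rfl : m = n + 1 := hk
    exact card_completions_last hL
  | succ k ih =>
    rw [pow_succ']
    exact card_completions_step (by omega) (fun L hL => ih (by omega) hL) hL

lemma pcount_p312_eq_card_completions (n : ℕ) : pcount p312 n = (completions 1 1 n []).card := by
  rw [pcount_p312, ← Nat.card_eq_finsetCard]
  simp only [mem_completions, isCompletion_nil_iff]

lemma B312_eq_shapeSeries : B312 = shapeSeries [] := by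
  have hnil : IsQueueStack 1 [] := ⟨by simp, by simp⟩
  ext n
  simp [B312, shapeSeries, walkSeries, pcount_p312_eq_card_completions,
    card_completions n (add_comm 1 n) hnil, queueShape]

end Scanning

section PowerSeriesRoots

open PowerSeries IsLocalRing

variable {A : Type*} [CommRing A]

lemma eq_zero_of_X_sub_C_mul_eq_C {I : Ideal A} [IsHausdorff I A] {U r : A} (hU : U ∈ I)
    {g : A⟦X⟧} (h : (X - C U) * g = C r) : r = 0 := by
  have coeff_eq (n : ℕ) : coeff n g = U * coeff (n + 1) g := by
    have := congrArg (coeff (n + 1)) h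
    rw [sub_mul, map_sub, coeff_succ_X_mul, coeff_C_mul, coeff_C, if_neg n.succ_ne_zero] at this
    exact sub_eq_zero.mp this
  have coeff_mem (k : ℕ) : ∀ n, coeff n g ∈ I ^ k := by
    induction k with
    | zero => simp
    | succ k ih =>
      intro n
      rw [coeff_eq, pow_succ']
      exact Ideal.mul_mem_mul hU (ih _)
  have coeff_zero : coeff 0 g = 0 := by
    refine IsHausdorff.haus ‹_› _ fun k => ?_
    rw [SModEq.zero, smul_eq_mul, Ideal.mul_top]
    exact coeff_mem k 0
  have := congrArg (coeff 0) h
  rw [sub_mul, map_sub, coeff_zero_X_mul, coeff_C_mul, coeff_zero, coeff_zero_C] at this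
  rw [← this, mul_zero, sub_zero]

lemma isRoot_of_X_sub_C_dvd_coe {I : Ideal A} [IsHausdorff I A] {U : A} (hU : U ∈ I)
    {P : Polynomial A} (h : X - C U ∣ (P : A⟦X⟧)) : P.IsRoot U := by
  obtain ⟨g, hg⟩ := h
  obtain ⟨Q, hQ⟩ := Polynomial.X_sub_C_dvd_sub_C_eval (p := P) (a := U)
  refine eq_zero_of_X_sub_C_mul_eq_C hU (g := g - Q) ?_
  have hQ' := congrArg (fun p : Polynomial A => (p : A⟦X⟧)) hQ
  simp only [Polynomial.coe_sub, Polynomial.coe_C, Polynomial.coe_mul, Polynomial.coe_X] at hQ'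
  rw [mul_sub, ← hg, ← hQ', sub_sub_cancel]

lemma isRoot_derivative_of_X_sub_C_dvd {I : Ideal A} [IsHausdorff I A] {U : A} (hU : U ∈ I)
    {P : Polynomial A} {D : A⟦X⟧} (hD : D ^ 2 = P) (h : X - C U ∣ D) :
    P.derivative.IsRoot U := by
  refine isRoot_of_X_sub_C_dvd_coe hU ?_
  rw [← derivative_coe, ← hD, Derivation.leibniz_pow, pow_one, smul_eq_mul, nsmul_eq_mul]
  exact (h.mul_right _).mul_left _

lemma exists_X_sub_C_dvd [IsLocalRing A] [IsAdicComplete (maximalIdeal A) A] {D : A⟦X⟧}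
    (h0 : coeff 0 D ∈ maximalIdeal A) (h1 : IsUnit (coeff 1 D)) :
    ∃ U ∈ maximalIdeal A, X - C U ∣ D := by
  have horder : (D.map (residue A)).order = 1 := by
    refine order_eq_nat.mpr ⟨?_, fun i hi => ?_⟩
    · rw [coeff_map]
      exact (h1.map (residue A)).ne_zero
    · rw [Nat.lt_one_iff.mp hi, coeff_map, residue_eq_zero_iff]
      exact h0
  have hne : D.map (residue A) ≠ 0 := by
    intro h
    simp [h] at horder
  obtain ⟨f, g, hfg⟩ := exists_isWeierstrassFactorization hne
  have hdeg : f.natDegree = 1 := by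
    rw [hfg.natDegree_eq_toNat_order_map, horder, ENat.toNat_one]
  have hf := hfg.isDistinguishedAt
  refine ⟨-f.coeff 0, neg_mem (hf.mem (by omega)), g, ?_⟩
  rw [hfg.eq_mul, Polynomial.Monic.as_sum hf.monic, hdeg]
  simp

/-- Brown's quadratic method. -/
lemma exists_isRoot_isRoot_derivative_of_sq_eq [IsLocalRing A] [IsAdicComplete (maximalIdeal A) A]
    {D : A⟦X⟧} {P : Polynomial A} (hD : D ^ 2 = P) (h0 : coeff 0 D ∈ maximalIdeal A)
    (h0' : coeff 0 D ≠ 0) (h1 : IsUnit (coeff 1 D)) :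
    ∃ u ∈ maximalIdeal A, u ≠ 0 ∧ P.IsRoot u ∧ P.derivative.IsRoot u := by
  obtain ⟨u, hu, hdvd⟩ := exists_X_sub_C_dvd h0 h1
  refine ⟨u, hu, ?_, isRoot_of_X_sub_C_dvd_coe hu (hD ▸ dvd_pow hdvd two_ne_zero),
    isRoot_derivative_of_X_sub_C_dvd hu hD hdvd⟩
  rintro rfl
  rw [map_zero, sub_zero, X_dvd_iff, ← coeff_zero_eq_constantCoeff_apply] at hdvd
  exact h0' hdvd

instance {k : Type*} [Field k] : IsAdicComplete (maximalIdeal k⟦X⟧) k⟦X⟧ := by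
  rw [maximalIdeal_eq_span_X]
  infer_instance

end PowerSeriesRoots

section Elimination

variable {R : Type*} [CommRing R] [IsDomain R] {z β u B : R}

lemma parametrization_of_double_root (h2 : (2 : R) ≠ 0) (hz : z ≠ 0) (hβ : β ≠ 0) (hu : u ≠ 0)
    (hu1 : 1 + u ≠ 0)
    (hroot : (z + (1 - z) * u - z * u ^ 2) ^ 2 = 4 * z * β * u * (1 + u))
    (hroot' : 2 * (z + (1 - z) * u - z * u ^ 2) * (1 - z - 2 * z * u) = 4 * z * β * (1 + 2 * u)) :
    z * ((1 + 2 * u) * (1 + u + u ^ 2)) = u ∧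
      β * ((1 + 2 * u) * (1 + u + u ^ 2)) = (1 + u) * (1 + u ^ 2) ^ 2 := by
  have h4 : (4 : R) ≠ 0 := by
    rw [show (4 : R) = 2 * 2 by norm_num]
    exact mul_ne_zero h2 h2
  set E := z + (1 - z) * u - z * u ^ 2 with hE
  have hE0 : E ≠ 0 := by
    intro h
    rw [h] at hroot
    simp [h4, hz, hβ, hu, hu1] at hroot
  have hzu : z * ((1 + 2 * u) * (1 + u + u ^ 2)) = u := by
    apply mul_left_cancel₀ hE0
    rw [hE] at hroot hroot' ⊢
    linear_combination (1 + 2 * u) * hroot - u * (1 + u) * hroot'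
  refine ⟨hzu, ?_⟩
  have hE' : E * ((1 + 2 * u) * (1 + u + u ^ 2)) = 2 * u * (1 + u) * (1 + u ^ 2) := by
    rw [hE]
    linear_combination (1 - u - u ^ 2) * hzu
  have hne : 4 * u ^ 2 * (1 + u) ≠ 0 := by simp [h4, hu, hu1]
  apply mul_left_cancel₀ hne
  linear_combination (E * ((1 + 2 * u) * (1 + u + u ^ 2)) + 2 * u * (1 + u) * (1 + u ^ 2)) * hE'
    - ((1 + 2 * u) * (1 + u + u ^ 2)) ^ 2 * hroot
    - 4 * β * ((1 + 2 * u) * (1 + u + u ^ 2)) * u * (1 + u) * hzu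

lemma cubic_eq_zero_of_parametrization {d e : R} (hd0 : d ≠ 0) (he0 : e ≠ 0)
    (hd : d = (1 + 2 * u) * (1 + u + u ^ 2)) (he : e = (1 + u) * (1 + u ^ 2) ^ 2)
    (hz : z * d = u) (hB : (B - 1) * e = u) :
    (z - 1) * (5 * z ^ 2 - 2 * z + 1) ^ 2 * B ^ 3 +
      (-9 * z ^ 5 + 54 * z ^ 4 - 85 * z ^ 3 + 59 * z ^ 2 - 14 * z + 3) * B ^ 2 +
      (-9 * z ^ 4 + 60 * z ^ 3 - 64 * z ^ 2 + 13 * z - 3) * B +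
      (-9 * z ^ 3 + 23 * z ^ 2 - 4 * z + 1) = 0 := by
  have hB' : B * e = e + u := by linear_combination hB
  refine (mul_eq_zero.mp ?_).resolve_right (mul_ne_zero (pow_ne_zero 5 hd0) (pow_ne_zero 3 he0))
  calc
    _ = (z * d - d) * (5 * (z * d) ^ 2 - 2 * (z * d) * d + d ^ 2) ^ 2 * (B * e) ^ 3 +
        (-9 * (z * d) ^ 5 + 54 * (z * d) ^ 4 * d - 85 * (z * d) ^ 3 * d ^ 2 +
          59 * (z * d) ^ 2 * d ^ 3 - 14 * (z * d) * d ^ 4 + 3 * d ^ 5) * (B * e) ^ 2 * e +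
        (-9 * (z * d) ^ 4 * d + 60 * (z * d) ^ 3 * d ^ 2 - 64 * (z * d) ^ 2 * d ^ 3 +
          13 * (z * d) * d ^ 4 - 3 * d ^ 5) * (B * e) * e ^ 2 +
        (-9 * (z * d) ^ 3 * d ^ 2 + 23 * (z * d) ^ 2 * d ^ 3 - 4 * (z * d) * d ^ 4 + d ^ 5) *
          e ^ 3 := by ring
    _ = 0 := by rw [hz, hB', hd, he]; ring

end Elimination

section Parametrization

open PowerSeries IsLocalRing

lemma ne_zero_of_constantCoeff {A : Type*} [Semiring A] {f : A⟦X⟧} (hf : constantCoeff f ≠ 0) :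
    f ≠ 0 := by
  rintro rfl
  exact hf (map_zero _)

lemma constantCoeff_closeSeries_nil : constantCoeff (closeSeries []) = 1 := by
  rw [closeSeries_nil, shapeSeries_nil, isStackSystem_shapeSeries.merge_zero,
    isStackSystem_shapeSeries.open_zero]
  simp

lemma sq_eq_of_kernel_equation {A : Type*} [CommRing A] {y z r q : A}
    (h : y * q * (1 - y * q) = z * (q + 1) * (y * (1 - y * q) + 1) - r * (1 - y * q) ^ 2) :
    (y * (2 * (1 - z - r) * (y * q) + (z + 2 * r - 1) - z * y) + z) ^ 2 =
      (z + (1 - z) * y - z * y ^ 2) ^ 2 - 4 * z * (1 - z - r) * (y * (1 + y)) := by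
  linear_combination (-4 * y ^ 2 * (1 - z - r)) * h

lemma exists_double_root_of_kernel_equation {r : ℚ⟦X⟧} (hr : constantCoeff r = 0)
    {q : ℚ⟦X⟧⟦X⟧} (h : X * q * (1 - X * q) =
      C X * (q + 1) * (X * (1 - X * q) + 1) - C r * (1 - X * q) ^ 2) :
    ∃ u : ℚ⟦X⟧, constantCoeff u = 0 ∧ u ≠ 0 ∧
      (X + (1 - X) * u - X * u ^ 2) ^ 2 = 4 * X * (1 - X - r) * u * (1 + u) ∧
      2 * (X + (1 - X) * u - X * u ^ 2) * (1 - X - 2 * X * u) =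
        4 * X * (1 - X - r) * (1 + 2 * u) := by
  let P : Polynomial ℚ⟦X⟧ :=
    (.C X + .C (1 - X) * .X - .C X * .X ^ 2) ^ 2 - .C (4 * X * (1 - X - r)) * (.X * (1 + .X))
  let D : ℚ⟦X⟧⟦X⟧ := X * (C (2 * (1 - X - r)) * (X * q) + C (X + 2 * r - 1) - C X * X) + C X
  have hD : D ^ 2 = (P : ℚ⟦X⟧⟦X⟧) := by
    simpa [D, P, map_ofNat C] using sq_eq_of_kernel_equation h
  have hD0 : coeff 0 D = X := by simp [D]
  have hD1 : constantCoeff (coeff 1 D) = -1 := by simp [D, coeff_succ_X_mul, hr]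
  have mem_maximalIdeal {f : ℚ⟦X⟧} : f ∈ maximalIdeal ℚ⟦X⟧ ↔ constantCoeff f = 0 := by
    rw [maximalIdeal_eq_span_X, Ideal.mem_span_singleton, X_dvd_iff]
  obtain ⟨u, hu, hu0, hroot, hroot'⟩ := exists_isRoot_isRoot_derivative_of_sq_eq hD
    (by simp [mem_maximalIdeal, hD0]) (by simp [hD0, X_ne_zero])
    (by simp [isUnit_iff_constantCoeff, hD1])
  have eval_P : P.eval u = (X + (1 - X) * u - X * u ^ 2) ^ 2 -
      4 * X * (1 - X - r) * (u * (1 + u)) := by simp [P]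
  have eval_derivative_P : P.derivative.eval u =
      2 * (X + (1 - X) * u - X * u ^ 2) * (1 - X - X * (2 * u)) -
        4 * X * (1 - X - r) * (1 + u + u) := by
    simp [P, Polynomial.derivative_sq]
  refine ⟨u, mem_maximalIdeal.mp hu, hu0, ?_, ?_⟩
  · linear_combination eval_P.symm.trans hroot
  · linear_combination eval_derivative_P.symm.trans hroot'

lemma exists_parametrization_shapeSeries_nil :
    ∃ u : ℚ⟦X⟧, constantCoeff u = 0 ∧ X * ((1 + 2 * u) * (1 + u + u ^ 2)) = u ∧
      (shapeSeries [] - 1) * ((1 + u) * (1 + u ^ 2) ^ 2) = u := by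
  have hsys := isStackSystem_shapeSeries
  obtain ⟨β, hβ⟩ : ∃ β, β * closeSeries [] = 1 :=
    ⟨_, PowerSeries.inv_mul_cancel _ (by simp [constantCoeff_closeSeries_nil])⟩
  set r := β * mergeSeries [0] with hr
  have hr0 : constantCoeff r = 0 := by simp [hr, hsys.merge_zero, hsys.open_zero]
  have hβr : 1 - X - r = β := by
    linear_combination hr + (X - 1) * hβ + β * closeSeries_nil + β * shapeSeries_nil
  have hBβ : (shapeSeries [] - 1) * (1 - X - r) = X := by
    rw [hβr]
    linear_combination X * hβ + β * shapeSeries_nil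
  obtain ⟨u, hu, hu0, hroot, hroot'⟩ :=
    exists_double_root_of_kernel_equation hr0 (hsys.kernel_equation hβ rfl)
  obtain ⟨hX, hβu⟩ := parametrization_of_double_root
    (ne_zero_of_constantCoeff (by simp [map_ofNat constantCoeff])) X_ne_zero
    (ne_zero_of_constantCoeff (by simp [hr0])) hu0 (ne_zero_of_constantCoeff (by simp [hu]))
    hroot hroot'
  refine ⟨u, hu, hX, ?_⟩
  rw [← hβu]
  linear_combination ((1 + 2 * u) * (1 + u + u ^ 2)) * hBβ + hX

end Parametrization

/-- `B(z)` is a root of the cubic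
`(z−1)(5z²−2z+1)² B³ + (−9z⁵+54z⁴−85z³+59z²−14z+3) B² + (−9z⁴+60z³−64z²+13z−3) B
  + (−9z³+23z²−4z+1)`. -/
theorem gf_partitions_312_cubic :
    (PowerSeries.X - 1) * (5 * PowerSeries.X ^ 2 - 2 * PowerSeries.X + 1) ^ 2 * B312 ^ 3 +
      (-9 * PowerSeries.X ^ 5 + 54 * PowerSeries.X ^ 4 - 85 * PowerSeries.X ^ 3 +
        59 * PowerSeries.X ^ 2 - 14 * PowerSeries.X + 3) * B312 ^ 2 +
      (-9 * PowerSeries.X ^ 4 + 60 * PowerSeries.X ^ 3 - 64 * PowerSeries.X ^ 2 +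
        13 * PowerSeries.X - 3) * B312 +
      (-9 * PowerSeries.X ^ 3 + 23 * PowerSeries.X ^ 2 - 4 * PowerSeries.X + 1) = 0 := by
  obtain ⟨u, hu, hX, hB⟩ := exists_parametrization_shapeSeries_nil
  rw [← B312_eq_shapeSeries] at hB
  have hd : (1 + 2 * u) * (1 + u + u ^ 2) ≠ 0 := ne_zero_of_constantCoeff (by simp [hu])
  have he : (1 + u) * (1 + u ^ 2) ^ 2 ≠ 0 := ne_zero_of_constantCoeff (by simp [hu])
  exact cubic_eq_zero_of_parametrization hd he rfl rfl hX hB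
end

section
/- Let S(z) = Σ_{n≥0} |S_n(1342)| zⁿ be the generating function (as a formal power series over ℚ) for 1342-avoiding permutations. Then S(z) satisfies the polynomial identity (S(z)(1 + 20z − 8z²) − 32z)² = S(z)² (1 − 8z)³; equivalently, S(z) = 32z / (1 + 20z − 8z² − (1−8z)^{3/2}). -/
/-- The generating function `S(z) = Σ_{n≥0} |S_n(1342)| zⁿ` over `ℚ`. -/
noncomputable def S1342 : PowerSeries ℚ := PowerSeries.mk fun n => (scount p1342 n : ℚ)

/-!
Give a 1342-avoiding word beginning with `x` the weight `z ^ b * u ^ m`, where `b` and `m` count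
its letters below and above `x`, and let `A`, `E`, `T` be the generating functions of all such
words, of those whose second letter is smaller than `x`, and of the skew indecomposable ones.

Suppose the second letter `y` is larger than `x`. Avoidance forces the first skew component of the
subword of letters below `y` to be a contiguous factor of the word, apart from the interposed `y`.
For occurrences of 1342 that also use later letters, only its least letter matters, so the word
splits into this skew indecomposable component and an avoiding word beginning with that letter.
Hence `A = 1 + E + u * T * A`, while `A = T * S` as `y` is no constraint when it is the maximum.
If `y` is smaller than `x`, the letter `x` can be deleted, which gives
`u * E = z * (u * A + E - (S - 1))`.

Eliminating `A` and `E` leaves a quadratic equation for `T`. Its discriminant divided by `S` is a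
cubic polynomial in `u` over `ℚ⟦z⟧`, equal to `S * D ^ 2` for a power series `D`. By Weierstrass
preparation `D` vanishes at some `u = Y` in the maximal ideal, which is thus a double root of the
cubic. Writing `Y = z * t`, the two equations for a double root determine `t` and `S` rationally in
terms of `r = √(1 - 8 * z)`.
-/

namespace Avoiding1342

section Words

open scoped List

variable {α β : Type*}

/-- The word `l` avoids the pattern 1342: it has no subword `a c d b` with `a < b < c < d`. -/
def Avoids1342 [LT α] (l : List α) : Prop :=
  ∀ ⦃a b c d : α⦄, [a, c, d, b] <+ l → a < b → b < c → ¬ c < d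

namespace Avoids1342

theorem sublist [LT α] {l l' : List α} (h : Avoids1342 l) (hl : l' <+ l) : Avoids1342 l' :=
  fun _ _ _ _ h' => h (h'.trans hl)

theorem map_iff [LinearOrder α] [Preorder β] {f : α → β} {l : List α}
    (hf : StrictMonoOn f {x | x ∈ l}) : Avoids1342 (l.map f) ↔ Avoids1342 l := by
  have lt_iff {a b c d i j : α} (h : [a, c, d, b] <+ l) (hi : i ∈ [a, c, d, b])
      (hj : j ∈ [a, c, d, b]) : f i < f j ↔ i < j :=
    hf.lt_iff_lt (h.subset hi) (h.subset hj)
  constructor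
  · intro hl a b c d h hab hbc hcd
    exact hl (h.map f) ((lt_iff h (by simp) (by simp)).2 hab)
      ((lt_iff h (by simp) (by simp)).2 hbc) ((lt_iff h (by simp) (by simp)).2 hcd)
  · intro hl a' b' c' d' h
    obtain ⟨l', h', hmap⟩ := List.sublist_map_iff.1 h
    obtain ⟨a, c, d, b, rfl⟩ : ∃ a c d b, l' = [a, c, d, b] := by
      rw [← List.length_eq_four]
      simpa only [List.length_map, List.length_cons, List.length_nil] using
        congrArg List.length hmap.symm
    simp only [List.map_cons, List.map_nil, List.cons.injEq, and_true] at hmap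
    obtain ⟨rfl, rfl, rfl, rfl⟩ := hmap
    rw [lt_iff h' (by simp) (by simp), lt_iff h' (by simp) (by simp),
      lt_iff h' (by simp) (by simp)]
    exact hl h'

end Avoids1342

theorem avoids1342_cons_iff [LT α] {x : α} {w : List α} :
    Avoids1342 (x :: w) ↔
      Avoids1342 w ∧ ∀ ⦃b c d⦄, [c, d, b] <+ w → x < b → b < c → ¬ c < d := by
  constructor
  · exact fun h => ⟨h.sublist (List.sublist_cons_self x w), fun b c d hw => h (hw.cons_cons x)⟩
  · rintro ⟨hw, hx⟩ a b c d h
    rcases List.cons_sublist_cons'.1 h with hsub | ⟨rfl, hsub⟩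
    · exact hw hsub
    · exact hx hsub

variable [LinearOrder α] {x y : α} {w : List α}

theorem avoids1342_cons_iff_of_forall_le (h : ∀ v ∈ w, v ≤ x) :
    Avoids1342 (x :: w) ↔ Avoids1342 w := by
  refine avoids1342_cons_iff.trans (and_iff_left fun b c d hw hxb => ?_)
  exact absurd hxb (h b (hw.subset (by simp))).not_gt

theorem avoids1342_cons_cons_iff_of_gt (h : y < x) :
    Avoids1342 (x :: y :: w) ↔ Avoids1342 (y :: w) := by
  refine avoids1342_cons_iff.trans (and_iff_left_of_imp fun hyw b c d hw hxb hbc => ?_)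
  rcases List.cons_sublist_cons'.1 hw with hw | ⟨rfl, -⟩
  · exact hyw (hw.cons_cons y) (h.trans hxb) hbc
  · exact absurd (hxb.trans hbc) h.not_gt

theorem avoids1342_cons_cons_iff_of_lt (hxy : x < y) :
    Avoids1342 (x :: y :: w) ↔
      Avoids1342 (x :: w) ∧ ∀ ⦃d b⦄, [d, b] <+ w → x < b → b < y → ¬ y < d := by
  constructor
  · exact fun h => ⟨h.sublist ((List.sublist_cons_self y w).cons_cons x),
      fun d b hw => h ((hw.cons_cons y).cons_cons x)⟩
  · rintro ⟨hxw, hy⟩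
    have hyw : Avoids1342 (y :: w) := avoids1342_cons_iff.2
      ⟨hxw.sublist (List.sublist_cons_self x w),
        fun b c d hw hyb => hxw (hw.cons_cons x) (hxy.trans hyb)⟩
    refine avoids1342_cons_iff.2 ⟨hyw, fun b c d hw hxb => ?_⟩
    rcases List.cons_sublist_cons'.1 hw with hsub | ⟨rfl, hsub⟩
    · exact hxw (hsub.cons_cons x) hxb
    · exact hy hsub hxb

theorem avoids1342_cons_cons_iff_of_forall_le (hxy : x < y) (h : ∀ v ∈ w, v ≤ y) :
    Avoids1342 (x :: y :: w) ↔ Avoids1342 (x :: w) :=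
  (avoids1342_cons_cons_iff_of_lt hxy).trans
    (and_iff_left fun d _ hw _ _ => (h d (hw.subset (by simp))).not_gt)

/-- The word `l` is skew indecomposable: it is not a product of two nonempty words such that
every letter of the first is at least every letter of the second. -/
def SkewIndecomposable (l : List α) : Prop :=
  ∀ ⦃u s⦄, l = u ++ s → u ≠ [] → s ≠ [] → ¬ ∀ z ∈ u, ∀ v ∈ s, v ≤ z

/-- The letters of `s` smaller than `y` are at most all letters of `u`. -/
def Dominates (y : α) (u s : List α) : Prop :=
  ∀ z ∈ u, ∀ v ∈ s, v < y → v ≤ z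

/-- `u` is the first block of the word `x y u s`: all letters of `x u` lie below `y`, and `x u` is
the first skew component of the word formed by the letters of `x u s` below `y`. -/
structure IsFirstBlock (x y : α) (u s : List α) : Prop where
  indecomposable : SkewIndecomposable (x :: u)
  lt : ∀ v ∈ u, v < y
  dominates : Dominates y (x :: u) s

theorem dominates_of_forall_prefix {h : α} {u r : List α}
    (hw : Avoids1342 (x :: y :: (u ++ h :: r))) (hyh : y < h)
    (hnot : ∀ p q, u = p ++ q → q ≠ [] → ¬ Dominates y (x :: p) (q ++ h :: r)) :
    Dominates y (x :: u) (h :: r) := by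
  suffices hr : ∀ p q, u = p ++ q → Dominates y (x :: p) r by
    intro z hz v hv hvy
    rcases List.mem_cons.1 hv with rfl | hv
    · exact absurd hyh hvy.not_gt
    · exact hr u [] (by simp) z hz v hv hvy
  intro p
  induction p using List.reverseRecOn with
  | nil =>
    intro q _ z hz v hv hvy
    obtain rfl := List.mem_singleton.1 hz
    by_contra! hzv
    have hsub : [h, v] <+ u ++ h :: r :=
      ((List.singleton_sublist.2 hv).cons_cons h).trans (List.sublist_append_right _ _)
    exact hw ((hsub.cons_cons y).cons_cons z) hzv hvy hyh
  | append_singleton p a ih =>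
    intro q hu z hz v hv hvy
    have hu' : u = p ++ a :: q := by simpa using hu
    have hp := ih (a :: q) hu'
    rcases (by simpa [or_assoc] using hz : z ∈ x :: p ∨ z = a) with hz | rfl
    · exact hp z hz v hv hvy
    by_contra! hzv
    obtain ⟨z', hz', v', hv', hv'y, hlt⟩ :
        ∃ z' ∈ x :: p, ∃ v' ∈ z :: q ++ h :: r, v' < y ∧ z' < v' := by
      simpa only [Dominates, not_forall, exists_prop, not_le] using hnot p (z :: q) hu' (by simp)
    have hvv' : v < v' := (hp z' hz' v hv hvy).trans_lt hlt
    have hv'q : v' ∈ q := by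
      have hne : v' ∉ r := fun hr => (hp z' hz' v' hr hv'y).not_gt hlt
      simpa [hne, (hv'y.trans hyh).ne, (hzv.trans hvv').ne'] using hv'
    have hsub : [z, v', h, v] <+ u ++ h :: r := by
      rw [hu', List.append_assoc]
      refine .trans ?_ (List.sublist_append_right p _)
      exact ((List.singleton_sublist.2 hv'q).append
        ((List.singleton_sublist.2 hv).cons_cons h)).cons_cons z
    -- Thus `z v' h v` is an occurrence of 1342.
    exact hw (hsub.trans ((List.sublist_cons_self y _).trans (List.sublist_cons_self x _)))
      hzv hvv' (hv'y.trans hyh)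

theorem exists_isFirstBlock (hw : Avoids1342 (x :: y :: w)) (hy : y ∉ w) :
    ∃ u s, w = u ++ s ∧ IsFirstBlock x y u s := by
  classical
  -- Take the shortest prefix `x u` that dominates the remaining letters.
  have hex : ∃ n, ∃ u s, w = u ++ s ∧ u.length = n ∧ Dominates y (x :: u) s :=
    ⟨_, w, [], by simp, rfl, by simp [Dominates]⟩
  obtain ⟨u, s, rfl, hlen, hdom⟩ := Nat.find_spec hex
  have hmin {p q : List α} (hq : u = p ++ q) (hne : q ≠ []) :
      ¬ Dominates y (x :: p) (q ++ s) := fun hp => by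
    refine Nat.find_min hex (m := p.length) ?_ ⟨p, q ++ s, by simp [hq], rfl, hp⟩
    rw [← hlen, hq, List.length_append]
    exact Nat.lt_add_of_pos_right (List.length_pos_iff.2 hne)
  refine ⟨u, s, rfl, ?_, ?_, hdom⟩
  · rintro (_ | ⟨x', p⟩) q hpq hp hq hle
    · exact hp rfl
    obtain ⟨rfl, rfl⟩ := List.cons.inj hpq
    refine hmin rfl hq fun z hz v hv hvy => ?_
    rcases List.mem_append.1 hv with hv | hv
    · exact hle z hz v hv
    · exact hdom z (List.mem_append_left q hz) v hv hvy
  · by_contra! hlarge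
    have hbig : (u.find? (y ≤ ·)).isSome := by simpa using hlarge
    obtain ⟨h, hh⟩ := Option.isSome_iff_exists.1 hbig
    obtain ⟨hyh, p, r, rfl, -⟩ := List.find?_eq_some_iff_append.1 hh
    have hyh : y < h := lt_of_le_of_ne (by simpa using hyh) fun e => hy (by simp [e])
    refine hmin rfl (by simp) (dominates_of_forall_prefix (r := r ++ s) (by simpa using hw) hyh ?_)
    rintro p' q rfl -
    simpa using hmin (List.append_assoc p' q (h :: r)) (by simp)

theorem IsFirstBlock.eq_of_append_eq {u s u' s' : List α} (h : IsFirstBlock x y u s)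
    (h' : IsFirstBlock x y u' s') (heq : u ++ s = u' ++ s') : u = u' ∧ s = s' := by
  have aux {u t s : List α} (h : IsFirstBlock x y u (t ++ s)) (h' : IsFirstBlock x y (u ++ t) s) :
      t = [] := by
    by_contra ht
    exact h'.indecomposable (List.cons_append (a := x)).symm (by simp) ht fun z hz v hv =>
      h.dominates z hz v (List.mem_append_left s hv) (h'.lt v (List.mem_append_right u hv))
  rcases List.append_eq_append_iff.1 heq with ⟨t, rfl, rfl⟩ | ⟨t, rfl, rfl⟩
  · simp [aux h h']
  · simp [aux h' h]

theorem IsFirstBlock.avoids1342_iff {u s : List α} {m : α} (h : IsFirstBlock x y u s)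
    (hxy : x < y) (hm : IsLeast {z | z ∈ x :: u} m) :
    Avoids1342 (x :: y :: (u ++ s)) ↔ Avoids1342 (x :: u) ∧ Avoids1342 (m :: s) := by
  constructor
  · have hsub : (x :: u) ++ s <+ x :: y :: (u ++ s) := (List.sublist_cons_self y _).cons_cons x
    exact fun hw => ⟨hw.sublist ((List.sublist_append_left _ s).trans hsub),
      hw.sublist (((List.singleton_sublist.2 hm.1).append_right s).trans hsub)⟩
  rintro ⟨hu, hs⟩
  have hlt : ∀ v ∈ x :: u, v < y := List.forall_mem_cons.2 ⟨hxy, h.lt⟩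
  refine (avoids1342_cons_cons_iff_of_lt hxy).2 ⟨fun a b c d hacdb hab hbc => ?_, ?_⟩
  · obtain ⟨l, l', hl, hlu, hls⟩ := List.sublist_append_iff.1 (show _ <+ (x :: u) ++ s from hacdb)
    rcases l with _ | ⟨_, _ | ⟨_, l⟩⟩ <;> simp only [List.nil_append, List.cons_append,
      List.cons.injEq] at hl
    · exact hs ((hl ▸ hls).cons m) hab hbc
    · obtain ⟨rfl, rfl⟩ := hl
      exact hs (hls.cons_cons m) ((hm.2 (hlu.subset (by simp))).trans_lt hab) hbc
    · obtain ⟨rfl, rfl, hl⟩ := hl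
      have hbs : b ∉ s := fun hbs => (h.dominates a (hlu.subset (by simp)) b hbs
        (hbc.trans (hlt c (hlu.subset (by simp))))).not_gt hab
      rcases List.eq_nil_or_concat l' with rfl | ⟨l'', b', rfl⟩
      · exact hu (by simpa [hl] using hlu) hab hbc
      · refine absurd (hls.subset ?_) hbs
        simp [show b = b' by simpa using congrArg List.getLast? hl]
  · intro d b hdb hxb hby hyd
    obtain ⟨l, l', hl, hlu, hls⟩ := List.sublist_append_iff.1 hdb
    rcases l with _ | ⟨_, l⟩
    · refine (h.dominates x (by simp) b (hls.subset ?_) hby).not_gt hxb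
      simp [show l' = [d, b] from hl.symm]
    · obtain ⟨rfl, -⟩ := List.cons.inj hl
      exact (h.lt d (hlu.subset (by simp))).not_gt hyd

end Words

section Arrangements

open Finset

variable {α β : Type*}

/-- The words listing every letter of `V` exactly once. -/
def arrangements (V : Finset α) : Finset (List α) :=
  ⟨V.val.lists, Multiset.lists_nodup_finset V⟩

theorem mem_arrangements {V : Finset α} {w : List α} :
    w ∈ arrangements V ↔ w.Nodup ∧ ∀ v, v ∈ w ↔ v ∈ V := by
  have hw : w ∈ arrangements V ↔ V.val = (w : Multiset α) := Multiset.mem_lists_iff _ _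
  rw [hw]
  constructor
  · intro h
    exact ⟨Multiset.coe_nodup.1 (h ▸ V.nodup), fun v => by rw [← mem_val, h, Multiset.mem_coe]⟩
  · rintro ⟨hnd, h⟩
    exact (V.nodup.ext (Multiset.coe_nodup.2 hnd)).2 fun v => (h v).symm

theorem arrangements_empty : arrangements (∅ : Finset α) = {[]} := by
  ext w
  simp +contextual [mem_arrangements, ← List.eq_nil_iff_forall_not_mem]

theorem cons_mem_arrangements [DecidableEq α] {V : Finset α} {x : α} {w : List α} :
    x :: w ∈ arrangements V ↔ x ∈ V ∧ w ∈ arrangements (V.erase x) := by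
  simp only [mem_arrangements, List.nodup_cons, List.mem_cons, mem_erase]
  constructor
  · rintro ⟨⟨hx, hw⟩, h⟩
    exact ⟨(h x).1 (.inl rfl), hw, fun v =>
      ⟨fun hv => ⟨ne_of_mem_of_not_mem hv hx, (h v).1 (.inr hv)⟩,
        fun hv => ((h v).2 hv.2).resolve_left hv.1⟩⟩
  · rintro ⟨hx, hw, h⟩
    refine ⟨⟨fun hxw => ((h x).1 hxw).1 rfl, hw⟩, fun v => ?_⟩
    rw [h]
    by_cases hv : v = x <;> simp [hv, hx]

theorem card_filter_arrangements [DecidableEq α] {V : Finset α} (hV : V.Nonempty)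
    (P : List α → Prop) [DecidablePred P] :
    #{w ∈ arrangements V | P w} = ∑ x ∈ V, #{w ∈ arrangements (V.erase x) | P (x :: w)} := by
  rw [← card_sigma]
  symm
  refine card_nbij (fun xw => xw.1 :: xw.2) ?_ ?_ ?_
  · rintro ⟨x, w⟩ h
    simpa [cons_mem_arrangements, and_assoc] using h
  · rintro ⟨x, w⟩ - ⟨x', w'⟩ - h
    obtain ⟨rfl, rfl⟩ := List.cons.inj h
    rfl
  · rintro (_ | ⟨x, w⟩) h
    · obtain ⟨v, hv⟩ := hV
      exact absurd ((mem_arrangements.1 (mem_filter.1 h).1).2 v) (by simp [hv])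
    · exact ⟨⟨x, w⟩, by simpa [cons_mem_arrangements, and_assoc] using h, rfl⟩

theorem map_mem_arrangements [DecidableEq β] {V : Finset α} {f : α → β} (hf : Set.InjOn f V)
    {w : List α} (hw : w ∈ arrangements V) : w.map f ∈ arrangements (V.image f) := by
  obtain ⟨hnd, hmem⟩ := mem_arrangements.1 hw
  refine mem_arrangements.2 ⟨hnd.map_on fun v hv v' hv' => ?_, by simp [hmem]⟩
  exact hf ((hmem v).1 hv) ((hmem v').1 hv')

theorem exists_map_eq_of_mem_arrangements_image [DecidableEq β] {V : Finset α} {f : α → β}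
    (hf : Set.InjOn f V) {w' : List β} (hw' : w' ∈ arrangements (V.image f)) :
    ∃ w ∈ arrangements V, w.map f = w' := by
  obtain ⟨hnd, hmem⟩ := mem_arrangements.1 hw'
  obtain ⟨w, rfl⟩ : ∃ w : List V, w.map (f ∘ Subtype.val) = w' := by
    rw [← Set.mem_range, Set.range_list_map]
    intro v hv
    obtain ⟨u, hu, rfl⟩ := mem_image.1 ((hmem v).1 hv)
    exact ⟨⟨u, hu⟩, rfl⟩
  rw [← List.map_map] at hnd hmem ⊢
  refine ⟨_, mem_arrangements.2 ⟨hnd.of_map f, fun v => ⟨fun hv => ?_, fun hv => ?_⟩⟩, rfl⟩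
  · obtain ⟨u, -, rfl⟩ := List.mem_map.1 hv
    exact u.2
  · obtain ⟨u, hu, huv⟩ := List.mem_map.1 ((hmem (f v)).2 (mem_image_of_mem f hv))
    rw [← hf ?_ hv huv]
    · exact hu
    · obtain ⟨u, -, rfl⟩ := List.mem_map.1 hu
      exact u.2

theorem card_filter_arrangements_image [DecidableEq β] {V : Finset α} {f : α → β}
    (hf : Set.InjOn f V) {P : List α → Prop} {Q : List β → Prop} [DecidablePred P]
    [DecidablePred Q] (hPQ : ∀ w ∈ arrangements V, Q (w.map f) ↔ P w) :
    #{w ∈ arrangements (V.image f) | Q w} = #{w ∈ arrangements V | P w} := by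
  symm
  refine card_nbij (List.map f) ?_ ?_ ?_
  · intro w hw
    obtain ⟨hw, hP⟩ := mem_filter.1 hw
    exact mem_filter.2 ⟨map_mem_arrangements hf hw, (hPQ w hw).2 hP⟩
  · intro w hw w' hw' h
    lift w to List V using fun v => ((mem_arrangements.1 (mem_filter.1 hw).1).2 v).1
    lift w' to List V using fun v => ((mem_arrangements.1 (mem_filter.1 hw').1).2 v).1
    rw [List.map_map, List.map_map] at h
    rw [List.map_injective_iff.2 hf.injective h]
  · intro w' hw'
    obtain ⟨hw', hQ⟩ := mem_filter.1 hw'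
    obtain ⟨w, hw, rfl⟩ := exists_map_eq_of_mem_arrangements_image hf hw'
    exact ⟨w, mem_filter.2 ⟨hw, (hPQ w hw).1 hQ⟩, rfl⟩

end Arrangements

section Decomposition

open Finset

variable {α : Type*} [LinearOrder α]

open Classical in
/-- The words `w` listing every letter of `V` exactly once such that `x w` avoids 1342. -/
noncomputable def avoidersFrom (x : α) (V : Finset α) : Finset (List α) :=
  {w ∈ arrangements V | Avoids1342 (x :: w)}

open Classical in
/-- The words `w` listing every letter of `V` exactly once such that `x w` avoids 1342 and is skew
indecomposable. -/
noncomputable def indecomposablesFrom (x : α) (V : Finset α) : Finset (List α) :=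
  {w ∈ arrangements V | Avoids1342 (x :: w) ∧ SkewIndecomposable (x :: w)}

variable {x y m : α} {V : Finset α} {u s : List α}

theorem mem_avoidersFrom :
    s ∈ avoidersFrom x V ↔ s ∈ arrangements V ∧ Avoids1342 (x :: s) := by
  classical exact mem_filter

theorem mem_indecomposablesFrom : u ∈ indecomposablesFrom x V ↔
    u ∈ arrangements V ∧ Avoids1342 (x :: u) ∧ SkewIndecomposable (x :: u) := by
  classical exact mem_filter

theorem isLeast_of_mem_arrangements (hxy : x < y) (hm : m ∈ insert x {v ∈ V | v < x})
    (hu : u ∈ arrangements {v ∈ V | m ≤ v ∧ v < y}) : IsLeast {z | z ∈ x :: u} m := by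
  have hu := (mem_arrangements.1 hu).2
  simp only [mem_insert, mem_filter] at hm hu
  refine ⟨?_, fun v hv => ?_⟩
  · rcases hm with rfl | ⟨hmV, hmx⟩
    · exact List.mem_cons_self
    · exact List.mem_cons_of_mem x ((hu m).2 ⟨hmV, le_rfl, hmx.trans hxy⟩)
  · rcases List.mem_cons.1 hv with rfl | hv
    · rcases hm with rfl | ⟨-, hmx⟩
      exacts [le_rfl, hmx.le]
    · exact ((hu v).1 hv).2.1

theorem isFirstBlock_of_mem_arrangements (hm : IsLeast {z | z ∈ x :: u} m)
    (hu : u ∈ arrangements {v ∈ V | m ≤ v ∧ v < y}) (hind : SkewIndecomposable (x :: u))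
    (hs : s ∈ arrangements {v ∈ V | v < m ∨ y < v}) : IsFirstBlock x y u s := by
  have hu := (mem_arrangements.1 hu).2
  have hs := (mem_arrangements.1 hs).2
  simp only [mem_filter] at hu hs
  refine ⟨hind, fun v hv => ((hu v).1 hv).2.2, fun z hz v hv hvy => ?_⟩
  exact (((hs v).1 hv).2.resolve_right hvy.not_gt).le.trans (hm.2 hz)

theorem append_mem_arrangements (hy : y ∉ V)
    (hu : u ∈ arrangements {v ∈ V | m ≤ v ∧ v < y})
    (hs : s ∈ arrangements {v ∈ V | v < m ∨ y < v}) : u ++ s ∈ arrangements V := by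
  obtain ⟨hund, hu⟩ := mem_arrangements.1 hu
  obtain ⟨hsnd, hs⟩ := mem_arrangements.1 hs
  simp only [mem_filter] at hu hs
  refine mem_arrangements.2 ⟨hund.append hsnd fun v hvu hvs => ?_, fun v => ?_⟩
  · obtain ⟨-, hmv, hvy⟩ := (hu v).1 hvu
    exact ((hs v).1 hvs).2.elim hmv.not_gt hvy.not_gt
  · rw [List.mem_append, hu, hs]
    grind

theorem IsFirstBlock.mem_arrangements (hx : x ∉ V) (hy : y ∉ V) (hus : u ++ s ∈ arrangements V)
    (h : IsFirstBlock x y u s) (hm : IsLeast {z | z ∈ x :: u} m) :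
    u ∈ arrangements {v ∈ V | m ≤ v ∧ v < y} ∧ s ∈ arrangements {v ∈ V | v < m ∨ y < v} := by
  obtain ⟨hnd, hV⟩ := Avoiding1342.mem_arrangements.1 hus
  obtain ⟨hund, hsnd, hdisj⟩ := List.nodup_append'.1 hnd
  have hlt := h.lt
  have hmu : m = x ∨ m ∈ u := List.mem_cons.1 hm.1
  have hmle (v) (hv : v ∈ u) : m ≤ v := hm.2 (List.mem_cons_of_mem x hv)
  simp only [← hV, List.mem_append] at hx hy
  simp only [Avoiding1342.mem_arrangements, mem_filter, ← hV, List.mem_append]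
  have hsm (v) (hv : v ∈ s) : v < m ∨ y < v := by
    have hvm : v ≠ m := by
      rintro rfl
      exact hmu.elim (fun h => hx (.inr (h ▸ hv))) fun h => hdisj h hv
    rcases lt_or_gt_of_ne (show v ≠ y from fun h => hy (.inr (h ▸ hv))) with hvy | hvy
    · exact .inl ((h.dominates m hm.1 v hv hvy).lt_of_ne hvm)
    · exact .inr hvy
  grind

theorem isFirstBlock_and_isLeast_of_mem (hxy : x < y) (hm : m ∈ insert x {v ∈ V | v < x})
    (hu : u ∈ indecomposablesFrom x {v ∈ V | m ≤ v ∧ v < y})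
    (hs : s ∈ avoidersFrom m {v ∈ V | v < m ∨ y < v}) :
    IsFirstBlock x y u s ∧ IsLeast {z | z ∈ x :: u} m := by
  obtain ⟨hu, -, hind⟩ := mem_indecomposablesFrom.1 hu
  have hleast := isLeast_of_mem_arrangements hxy hm hu
  exact ⟨isFirstBlock_of_mem_arrangements hleast hu hind (mem_avoidersFrom.1 hs).1, hleast⟩

theorem exists_append_eq_of_avoids1342 (hxy : x < y) (hx : x ∉ V) (hy : y ∉ V) {w : List α}
    (hw : w ∈ arrangements V) (havoid : Avoids1342 (x :: y :: w)) :
    ∃ m ∈ insert x {v ∈ V | v < x}, ∃ u ∈ indecomposablesFrom x {v ∈ V | m ≤ v ∧ v < y},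
      ∃ s ∈ avoidersFrom m {v ∈ V | v < m ∨ y < v}, u ++ s = w := by
  have hmem := (mem_arrangements.1 hw).2
  obtain ⟨u, s, rfl, hblock⟩ := exists_isFirstBlock havoid fun h => hy ((hmem y).1 h)
  obtain ⟨m, hm⟩ : ∃ m, IsLeast {z | z ∈ x :: u} m :=
    ⟨_, by simpa only [List.coe_toFinset] using (x :: u).toFinset.isLeast_min' ⟨x, by simp⟩⟩
  obtain ⟨hux, hsm⟩ := (hblock.avoids1342_iff hxy hm).1 havoid
  obtain ⟨hu, hs⟩ := hblock.mem_arrangements hx hy hw hm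
  have hmV : m ∈ insert x {v ∈ V | v < x} := by
    rcases List.mem_cons.1 hm.1 with rfl | hmu
    · exact mem_insert_self _ _
    · have hmV := (hmem m).1 (List.mem_append_left s hmu)
      exact mem_insert_of_mem (mem_filter.2
        ⟨hmV, (hm.2 List.mem_cons_self).lt_of_ne (ne_of_mem_of_not_mem hmV hx)⟩)
  exact ⟨m, hmV, u, mem_indecomposablesFrom.2 ⟨hu, hux, hblock.indecomposable⟩,
    s, mem_avoidersFrom.2 ⟨hs, hsm⟩, rfl⟩

theorem card_avoiders_cons_cons (hxy : x < y) (hx : x ∉ V) (hy : y ∉ V)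
    [DecidablePred fun w => Avoids1342 (x :: y :: w)] :
    #{w ∈ arrangements V | Avoids1342 (x :: y :: w)} = ∑ m ∈ insert x {v ∈ V | v < x},
      #(indecomposablesFrom x {v ∈ V | m ≤ v ∧ v < y}) *
        #(avoidersFrom m {v ∈ V | v < m ∨ y < v}) := by
  simp_rw [← card_product]
  rw [← card_sigma]
  symm
  refine card_nbij (fun t => t.2.1 ++ t.2.2) ?_ ?_ ?_
  · rintro ⟨m, u, s⟩ h
    simp only [coe_sigma, Set.mem_sigma_iff, mem_coe, mem_product] at h
    obtain ⟨hm, hu, hs⟩ := h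
    obtain ⟨hblock, hleast⟩ := isFirstBlock_and_isLeast_of_mem hxy hm hu hs
    obtain ⟨hu, hux, -⟩ := mem_indecomposablesFrom.1 hu
    obtain ⟨hs, hsm⟩ := mem_avoidersFrom.1 hs
    exact mem_filter.2 ⟨append_mem_arrangements hy hu hs,
      (hblock.avoids1342_iff hxy hleast).2 ⟨hux, hsm⟩⟩
  · rintro ⟨m, u, s⟩ h ⟨m', u', s'⟩ h' heq
    simp only [coe_sigma, Set.mem_sigma_iff, mem_coe, mem_product] at h h'
    obtain ⟨hblock, hleast⟩ := isFirstBlock_and_isLeast_of_mem hxy h.1 h.2.1 h.2.2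
    obtain ⟨hblock', hleast'⟩ := isFirstBlock_and_isLeast_of_mem hxy h'.1 h'.2.1 h'.2.2
    obtain ⟨rfl, rfl⟩ := hblock.eq_of_append_eq hblock' heq
    rw [hleast.unique hleast']
  · intro w hw
    obtain ⟨hw, havoid⟩ := mem_filter.1 hw
    obtain ⟨m, hm, u, hu, s, hs, rfl⟩ := exists_append_eq_of_avoids1342 hxy hx hy hw havoid
    exact ⟨⟨m, u, s⟩, mem_sigma.2 ⟨hm, mem_product.2 ⟨hu, hs⟩⟩, rfl⟩

end Decomposition

section Counting

open Finset

/-- The interval `[-b, m]` of integers without `0`: the letters of a word starting with `0` that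
has `b` letters below and `m` letters above `0`. -/
noncomputable def punctured (b m : ℕ) : Finset ℤ :=
  (Icc (-(b : ℤ)) m).erase 0

theorem mem_punctured {b m : ℕ} {v : ℤ} : v ∈ punctured b m ↔ v ≠ 0 ∧ -(b : ℤ) ≤ v ∧ v ≤ m := by
  rw [punctured, mem_erase, mem_Icc]

theorem card_punctured (b m : ℕ) : #(punctured b m) = b + m := by
  rw [punctured, card_erase_of_mem (by simp), Int.card_Icc]
  omega

theorem sum_punctured {M : Type*} [AddCommMonoid M] (b m : ℕ) (F : ℤ → M) :
    ∑ a ∈ punctured b m, F a =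
      ∑ k ∈ range b, F (-(k + 1)) + ∑ j ∈ range m, F (j + 1) := by
  have hunion : punctured b m = (range b).image (fun k : ℕ => -(k + 1 : ℤ)) ∪
      (range m).image fun j : ℕ => (j + 1 : ℤ) := by
    ext v
    simp only [mem_punctured, mem_union, mem_image, mem_range]
    constructor
    · rintro ⟨h₀, h⟩
      rcases lt_or_gt_of_ne h₀ with hv | hv
      · exact .inl ⟨(-v - 1).toNat, by omega, by omega⟩
      · exact .inr ⟨(v - 1).toNat, by omega, by omega⟩
    · rintro (⟨k, hk, rfl⟩ | ⟨j, hj, rfl⟩) <;> omega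
  rw [hunion, sum_union, sum_image, sum_image]
  · exact fun i _ j _ h => by simpa using h
  · exact fun i _ j _ h => by simpa using h
  · simp only [disjoint_left, mem_image, mem_range]
    rintro _ ⟨k, -, rfl⟩ ⟨j, -, h⟩
    omega

theorem exists_strictMonoOn_image_eq_punctured {α : Type*} [LinearOrder α] {x : α}
    {V : Finset α} (hx : x ∉ V) :
    ∃ f : α → ℤ, StrictMonoOn f (insert x V) ∧ f x = 0 ∧
      V.image f = punctured #{v ∈ V | v < x} #{v ∈ V | x < v} := by
  have hcard : #V = #{v ∈ V | v < x} + #{v ∈ V | x < v} := by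
    rw [← card_filter_add_card_filter_not (s := V) (· < x)]
    congr 2
    exact filter_congr fun v hv => not_lt.trans (ne_of_mem_of_not_mem hv hx).symm.le_iff_lt
  obtain ⟨f, hf⟩ : ∃ f : α → ℤ, ∀ v, f v = #{u ∈ insert x V | u < v} - #{u ∈ V | u < x} :=
    ⟨_, fun _ => rfl⟩
  have hmono : StrictMonoOn f (insert x V) := by
    intro v hv v' _ hlt
    rw [hf, hf, sub_lt_sub_iff_right, Nat.cast_lt]
    refine card_lt_card (ssubset_iff_of_subset
      (monotone_filter_right _ fun u _ (hu : u < v) => hu.trans hlt) |>.2 ⟨v, ?_, ?_⟩)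
    · exact mem_filter.2 ⟨by simpa using hv, hlt⟩
    · simp
  have hfx : f x = 0 := by simp [hf, filter_insert]
  refine ⟨f, hmono, hfx, eq_of_subset_of_card_le (fun i hi => ?_) ?_⟩
  · obtain ⟨v, hv, rfl⟩ := mem_image.1 hi
    have hlt : #{u ∈ insert x V | u < v} < #(insert x V) :=
      card_lt_card (filter_ssubset.2 ⟨v, mem_insert_of_mem hv, lt_irrefl v⟩)
    rw [card_insert_of_notMem hx] at hlt
    refine mem_punctured.2 ⟨?_, ?_, ?_⟩
    · rw [← hfx]
      exact (hmono.injOn.ne_iff (.inr hv) (.inl rfl)).2 (ne_of_mem_of_not_mem hv hx)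
    all_goals rw [hf]; omega
  · rw [card_punctured, card_image_of_injOn (hmono.injOn.mono (Set.subset_insert x _)), hcard]

/-- The number of 1342-avoiding words with a given first letter, `b` smaller and `m` larger
letters. -/
noncomputable def numAvoiders (b m : ℕ) : ℕ :=
  #(avoidersFrom 0 (punctured b m))

/-- The number of skew indecomposable 1342-avoiding words with a given first letter, `b` smaller
and `m` larger letters. -/
noncomputable def numIndecomposables (b m : ℕ) : ℕ :=
  #(indecomposablesFrom 0 (punctured b m))

open Classical in
/-- The number of 1342-avoiding words starting with `0` and `p + 1` whose remaining letters are
`b` letters below `0`, `p` letters between `0` and `p + 1` and `q` letters above `p + 1`. -/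
noncomputable def numAscentAvoiders (b p q : ℕ) : ℕ :=
  #{w ∈ arrangements ((punctured b (p + q + 1)).erase (p + 1)) |
    Avoids1342 (0 :: (p + 1 : ℤ) :: w)}

/-- The number of 1342-avoiding words with a given first letter, `b` smaller and `m` larger
letters, whose second letter is smaller than the first. -/
noncomputable def numDescentAvoiders (b m : ℕ) : ℕ :=
  ∑ k ∈ range b, numAvoiders (b - 1 - k) (m + k)

theorem card_avoidersFrom {α : Type*} [LinearOrder α] {x : α} {V : Finset α} (hx : x ∉ V) :
    #(avoidersFrom x V) = numAvoiders #{v ∈ V | v < x} #{v ∈ V | x < v} := by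
  obtain ⟨f, hmono, hfx, himage⟩ := exists_strictMonoOn_image_eq_punctured hx
  classical
  rw [numAvoiders, ← himage]
  symm
  refine card_filter_arrangements_image (hmono.injOn.mono (Set.subset_insert x _)) fun w hw => ?_
  rw [← hfx, ← List.map_cons, Avoids1342.map_iff]
  refine hmono.mono fun v hv => ?_
  simpa [(mem_arrangements.1 hw).2] using hv

theorem numAvoiders_zero_zero : numAvoiders 0 0 = 1 := by
  refine card_eq_one.2 ⟨[], ?_⟩
  ext w
  rw [mem_avoidersFrom, show punctured 0 0 = ∅ from rfl, arrangements_empty, mem_singleton]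
  refine and_iff_left_of_imp ?_
  rintro rfl a b c d h
  simpa using h.length_le

theorem numAscentAvoiders_zero_right (b p : ℕ) : numAscentAvoiders b p 0 = numAvoiders b p := by
  classical
  have hV : (punctured b (p + 0 + 1)).erase (p + 1) = punctured b p := by
    ext v
    simp only [mem_erase, mem_punctured]
    omega
  rw [numAscentAvoiders, hV]
  refine congrArg card (filter_congr fun w hw => ?_)
  refine avoids1342_cons_cons_iff_of_forall_le (by omega) fun v hv => ?_
  have := mem_punctured.1 (((mem_arrangements.1 hw).2 v).1 hv)
  omega

theorem numAscentAvoiders_eq_sum (b p q : ℕ) :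
    numAscentAvoiders b p q =
      ∑ cd ∈ antidiagonal b, numIndecomposables cd.1 p * numAvoiders cd.2 q := by
  classical
  obtain ⟨V, hV⟩ : ∃ V, V = (punctured b (p + q + 1)).erase (p + 1 : ℤ) := ⟨_, rfl⟩
  have hmem (v : ℤ) : v ∈ V ↔ v ≠ p + 1 ∧ v ≠ 0 ∧ -(b : ℤ) ≤ v ∧ v ≤ p + q + 1 := by
    simp [hV, mem_punctured]
  have hletters : insert 0 {v ∈ V | v < 0} = (range (b + 1)).image fun c : ℕ => -(c : ℤ) := by
    ext v
    simp only [mem_insert, mem_filter, hmem, mem_image, mem_range]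
    constructor
    · exact fun hv => ⟨(-v).toNat, by omega, by omega⟩
    · rintro ⟨c, hc, rfl⟩
      omega
  rw [numAscentAvoiders, ← hV, card_avoiders_cons_cons (by omega) (by simp [hmem])
    (by simp [hmem]), hletters, sum_image fun i _ j _ h => by simpa using h,
    Nat.sum_antidiagonal_eq_sum_range_succ fun c d => numIndecomposables c p * numAvoiders d q]
  refine sum_congr rfl fun c hc => ?_
  have hc : c ≤ b := Nat.lt_succ_iff.1 (mem_range.1 hc)
  obtain ⟨W, hW⟩ : ∃ W, W = {v ∈ V | v < -(c : ℤ) ∨ (p + 1 : ℤ) < v} := ⟨_, rfl⟩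
  have hblock : {v ∈ V | -(c : ℤ) ≤ v ∧ v < p + 1} = punctured c p := by
    ext v
    simp only [mem_filter, hmem, mem_punctured]
    omega
  have hbelow : {v ∈ W | v < -(c : ℤ)} = Ico (-(b : ℤ)) (-c) := by
    ext v
    simp only [hW, mem_filter, hmem, mem_Ico]
    omega
  have habove : {v ∈ W | -(c : ℤ) < v} = Ioc (p + 1 : ℤ) (p + q + 1) := by
    ext v
    simp only [hW, mem_filter, hmem, mem_Ioc]
    omega
  rw [hblock, ← hW, card_avoidersFrom (by rw [hW, mem_filter]; omega), hbelow, habove, Int.card_Ico,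
    Int.card_Ioc, numIndecomposables]
  congr 2 <;> omega

theorem numAvoiders_eq_add {b m : ℕ} (h : b + m ≠ 0) : numAvoiders b m =
    numDescentAvoiders b m + ∑ j ∈ range m, numAscentAvoiders b j (m - 1 - j) := by
  classical
  have hne : (punctured b m).Nonempty := card_pos.1 (by rw [card_punctured]; omega)
  rw [numAvoiders, avoidersFrom, card_filter_arrangements hne, sum_punctured]
  congr 1
  · refine sum_congr rfl fun k hk => ?_
    have hk := mem_range.1 hk
    obtain ⟨V, hV⟩ : ∃ V, V = (punctured b m).erase (-(k + 1 : ℤ)) := ⟨_, rfl⟩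
    have hbelow : {v ∈ V | v < -(k + 1 : ℤ)} = Ico (-(b : ℤ)) (-(k + 1)) := by
      ext v
      simp only [hV, mem_erase, mem_filter, mem_punctured, mem_Ico]
      omega
    have habove : {v ∈ V | -(k + 1 : ℤ) < v} = (Ioc (-(k + 1 : ℤ)) m).erase 0 := by
      ext v
      simp only [hV, mem_erase, mem_filter, mem_punctured, mem_Ioc]
      omega
    have hfrom : {w ∈ arrangements V | Avoids1342 (0 :: -(k + 1 : ℤ) :: w)} =
        avoidersFrom (-(k + 1 : ℤ)) V :=
      filter_congr fun w _ => avoids1342_cons_cons_iff_of_gt (by omega)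
    rw [← hV, hfrom, card_avoidersFrom (by simp [hV]), hbelow, habove,
      card_erase_of_mem (mem_Ioc.2 ⟨by omega, by omega⟩), Int.card_Ico, Int.card_Ioc]
    congr 1
    omega
  · refine sum_congr rfl fun j hj => ?_
    have hj := mem_range.1 hj
    rw [numAscentAvoiders, show j + (m - 1 - j) + 1 = m by omega]

theorem numDescentAvoiders_zero (m : ℕ) : numDescentAvoiders 0 m = 0 :=
  sum_range_zero _

theorem numDescentAvoiders_succ (b m : ℕ) :
    numDescentAvoiders (b + 1) m = numAvoiders b m + numDescentAvoiders b (m + 1) := by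
  rw [numDescentAvoiders, numDescentAvoiders, sum_range_succ', add_comm]
  refine congrArg₂ _ (by simp) (sum_congr rfl fun k _ => congrArg₂ _ (by omega) (by omega))

end Counting

section Permutations

open Finset

open scoped List

theorem ofFn_mem_arrangements {n : ℕ} (π : Equiv.Perm (Fin n)) :
    List.ofFn π ∈ arrangements univ :=
  mem_arrangements.2 ⟨List.nodup_ofFn.2 π.injective, fun v => by
    simpa only [List.mem_ofFn, mem_univ, iff_true] using π.surjective v⟩

theorem exists_ofFn_eq_of_mem_arrangements {n : ℕ} {w : List (Fin n)}
    (hw : w ∈ arrangements univ) : ∃ π : Equiv.Perm (Fin n), List.ofFn π = w := by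
  obtain ⟨hnd, hmem⟩ := mem_arrangements.1 hw
  let e := hnd.getEquivOfForallMemList w fun v => (hmem v).2 (mem_univ v)
  have hlen : n = w.length := by simpa using (Fintype.card_congr e).symm
  exact ⟨(finCongr hlen).trans e, List.ext_getElem (by simpa) (by simp [e])⟩

theorem ofFn_sublist_ofFn_iff {α : Type*} {k n : ℕ} {h : Fin k → α} {g : Fin n → α} :
    List.ofFn h <+ List.ofFn g ↔ ∃ f : Fin k → Fin n, StrictMono f ∧ g ∘ f = h := by
  rw [List.sublist_iff_exists_fin_orderEmbedding_get_eq]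
  constructor
  · rintro ⟨f, hf⟩
    refine ⟨fun i => Fin.cast (by simp) (f (Fin.cast (by simp) i)), fun i j hij => ?_, ?_⟩
    · exact f.strictMono (a := Fin.cast _ i) (b := Fin.cast _ j) hij
    · funext i
      simp only [List.get_ofFn] at hf
      exact (hf (Fin.cast (by simp) i)).symm
  · rintro ⟨f, hf, rfl⟩
    refine ⟨OrderEmbedding.ofStrictMono
      (fun i => Fin.cast (by simp) (f (Fin.cast (by simp) i))) fun i j hij => ?_, fun i => ?_⟩
    · exact hf (a := Fin.cast _ i) (b := Fin.cast _ j) hij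
    · rw [List.get_ofFn, List.get_ofFn]
      rfl

theorem permContains_iff_strictMono {n k : ℕ} {τ : Equiv.Perm (Fin k)} {π : Equiv.Perm (Fin n)} :
    PermContains τ π ↔ ∃ f : Fin k → Fin n, StrictMono f ∧ StrictMono (π ∘ f ∘ τ.symm) := by
  refine exists_congr fun f => and_congr_right fun _ => ?_
  refine ⟨fun h a b hab => h _ _ (by simpa using hab), fun h a b hab => ?_⟩
  simpa using h hab

theorem avoids1342_ofFn_iff {n : ℕ} {π : Equiv.Perm (Fin n)} :
    Avoids1342 (List.ofFn π) ↔ PermAvoids p1342 π := by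
  rw [PermAvoids, permContains_iff_strictMono, Avoids1342]
  have hsub (a b c d : Fin n) : [a, c, d, b] <+ List.ofFn π ↔
      ∃ f : Fin 4 → Fin n, StrictMono f ∧ π ∘ f = ![a, c, d, b] := by
    rw [← ofFn_sublist_ofFn_iff]
    simp [List.ofFn_succ]
  have hmono (a b c d : Fin n) : StrictMono (![a, c, d, b] ∘ p1342.symm) ↔
      a < b ∧ b < c ∧ c < d := by
    rw [Fin.strictMono_iff_lt_succ, Fin.forall_fin_succ, Fin.forall_fin_succ, Fin.forall_fin_one]
    rfl
  constructor
  · rintro h ⟨f, hf, hf'⟩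
    have hfour : π ∘ f = ![π (f 0), π (f 1), π (f 2), π (f 3)] := by
      ext i
      fin_cases i <;> rfl
    rw [← Function.comp_assoc, hfour, hmono] at hf'
    exact h ((hsub _ _ _ _).2 ⟨f, hf, hfour⟩) hf'.1 hf'.2.1 hf'.2.2
  · intro h a b c d hl hab hbc hcd
    obtain ⟨f, hf, hfour⟩ := (hsub a b c d).1 hl
    exact h ⟨f, hf, by rw [← Function.comp_assoc, hfour, hmono]; exact ⟨hab, hbc, hcd⟩⟩

theorem scount_p1342 (n : ℕ) : scount p1342 n = numAvoiders n 0 := by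
  classical
  have hword : scount p1342 n = #{w ∈ arrangements (univ : Finset (Fin n)) | Avoids1342 w} := by
    rw [scount, Nat.card_eq_fintype_card, Fintype.card_subtype]
    refine card_nbij (fun π => List.ofFn π) ?_ ?_ ?_
    · exact fun π hπ => mem_filter.2
        ⟨ofFn_mem_arrangements π, avoids1342_ofFn_iff.2 (mem_filter.1 hπ).2⟩
    · exact fun π _ π' _ h => DFunLike.coe_injective (List.ofFn_injective h)
    · intro w hw
      obtain ⟨hw, havoid⟩ := mem_filter.1 hw
      obtain ⟨π, rfl⟩ := exists_ofFn_eq_of_mem_arrangements hw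
      exact ⟨π, by simpa using avoids1342_ofFn_iff.1 havoid, rfl⟩
  have hmono : StrictMono fun i : Fin n => (i : ℤ) - n :=
    fun i j h => by simpa using h
  have himage : univ.image (fun i : Fin n => (i : ℤ) - n) = punctured n 0 := by
    ext v
    simp only [mem_image, mem_univ, true_and, mem_punctured]
    constructor
    · rintro ⟨i, rfl⟩
      omega
    · exact fun hv => ⟨⟨(v + n).toNat, by omega⟩, by dsimp only; omega⟩
  rw [hword, numAvoiders, ← himage]
  symm
  refine card_filter_arrangements_image hmono.injective.injOn fun w _ => ?_
  rw [avoids1342_cons_iff_of_forall_le, Avoids1342.map_iff (hmono.strictMonoOn _)]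
  simp only [List.mem_map]
  rintro _ ⟨i, -, rfl⟩
  omega

end Permutations

section DoubleRoot

open IsLocalRing PowerSeries
open scoped Polynomial

theorem dvd_of_coe_dvd {R : Type*} [CommRing R] {I : Ideal R} [IsAdicComplete I R]
    {f g : R[X]} (hf : f.IsDistinguishedAt I) (h : (f : R⟦X⟧) ∣ g) : f ∣ g := by
  rw [← Ideal.mem_span_singleton, ← Ideal.Quotient.eq_zero_iff_mem,
    ← EmbeddingLike.map_eq_zero_iff (f := hf.algEquivQuotient)]
  simpa [Ideal.Quotient.eq_zero_iff_mem, Ideal.mem_span_singleton] using h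

theorem isDistinguishedAt_pow {R : Type*} [CommRing R] {I : Ideal R} {f : R[X]}
    (hf : f.IsDistinguishedAt I) (k : ℕ) : (f ^ k).IsDistinguishedAt I := by
  induction k with
  | zero => exact ⟨⟨fun h => by simp at h⟩, Polynomial.monic_one.pow 0⟩
  | succ k ih => exact pow_succ f k ▸ ih.mul hf

variable {R : Type*} [CommRing R] [IsLocalRing R]

theorem order_map_residue_eq_one {D : R⟦X⟧} (h₀ : coeff 0 D ∈ maximalIdeal R)
    (h₁ : IsUnit (coeff 1 D)) : (D.map (residue R)).order = 1 := by
  refine order_eq_nat.2 ⟨?_, fun i hi => ?_⟩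
  · simpa only [coeff_map, residue_ne_zero_iff_isUnit] using h₁
  · rwa [Nat.lt_one_iff.1 hi, coeff_map, residue_eq_zero_iff]

theorem exists_X_sub_C_pow_dvd [IsAdicComplete (maximalIdeal R) R] {D : R⟦X⟧}
    (h₀ : coeff 0 D ∈ maximalIdeal R) (h₁ : IsUnit (coeff 1 D)) {k : ℕ} {Δ : R[X]}
    (hΔ : D ^ k ∣ Δ) : ∃ Y ∈ maximalIdeal R, (Polynomial.X - Polynomial.C Y) ^ k ∣ Δ := by
  have hord := order_map_residue_eq_one h₀ h₁
  have hD : D.map (residue R) ≠ 0 := fun h => by simp [h] at hord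
  obtain ⟨f, g, hfg⟩ := exists_isWeierstrassFactorization hD
  have hdeg : f.natDegree = 1 := by rw [hfg.natDegree_eq_toNat_order_map, hord]; rfl
  have hf : f = Polynomial.X - Polynomial.C (-f.coeff 0) := by
    rw [Polynomial.C_neg, sub_neg_eq_add]
    exact hfg.isDistinguishedAt.monic.eq_X_add_C hdeg
  refine ⟨-f.coeff 0, neg_mem (hfg.isDistinguishedAt.mem (by omega)), hf ▸ ?_⟩
  refine dvd_of_coe_dvd (isDistinguishedAt_pow hfg.isDistinguishedAt k) ((?_ : _ ∣ D ^ k).trans hΔ)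
  rw [Polynomial.coe_pow]
  exact pow_dvd_pow_of_dvd (Dvd.intro _ hfg.eq_mul.symm) k

end DoubleRoot

section Discriminant

open Polynomial

variable {R : Type*} [CommRing R]

/-- The discriminant, divided by `S`, of the quadratic equation for the generating function of skew
indecomposable words, as a polynomial in the variable marking the letters above the first one; `z`
marks the letters below the first one and `S` is the generating function of all 1342-avoiding
permutations. -/
noncomputable def discriminant (z S : R) : R[X] :=
  C S * (C (1 - z) * X - C z) ^ 2 - 4 * X * (X - C z) * (X - C (z * S))

variable [IsDomain R] {S y z : R}

theorem double_root_equations (two_ne : (2 : R) ≠ 0) (hz : z ≠ 0)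
    (h : (X - C (z * y)) ^ 2 ∣ discriminant z S) :
    S * ((1 - z) * y - 1) ^ 2 = 4 * z * y * (y - 1) * (y - S) ∧
      S * ((1 - z) * y - 1) * (1 - z) =
        2 * z * ((y - 1) * (y - S) + y * (y - S) + y * (y - 1)) := by
  obtain ⟨q, hq⟩ := h
  have hroot : (discriminant z S).eval (z * y) = 0 := by simp [hq]
  have hroot' : (derivative (discriminant z S)).eval (z * y) = 0 := by
    simp [hq, derivative_pow]
  simp only [discriminant, derivative_sub, derivative_mul, derivative_pow, derivative_C,
    derivative_X, derivative_ofNat, eval_add, eval_sub, eval_mul, eval_pow, eval_C, eval_X,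
    eval_ofNat, eval_zero, eval_one] at hroot hroot'
  constructor
  · apply mul_left_cancel₀ (pow_ne_zero 2 hz)
    linear_combination hroot
  · apply mul_left_cancel₀ (mul_ne_zero two_ne hz)
    linear_combination hroot'

theorem exists_sqrt_parametrization (two_ne : (2 : R) ≠ 0) (hz : z ≠ 0) (hS : S ≠ 0)
    (h : S * ((1 - z) * y - 1) ^ 2 = 4 * z * y * (y - 1) * (y - S))
    (h' : S * ((1 - z) * y - 1) * (1 - z) =
      2 * z * ((y - 1) * (y - S) + y * (y - S) + y * (y - 1))) :
    ∃ r : R, r ^ 2 = 1 - 8 * z ∧ S * (1 + 20 * z - 8 * z ^ 2 - r ^ 3) = 32 * z := by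
  have cubic : 2 * z * y ^ 3 = S * ((1 + z) * y - 1) := by
    linear_combination h - y * h'
  have hy : y ≠ 0 := by
    rintro rfl
    exact hS (by linear_combination cubic)
  have quadratic : (1 + z) * y ^ 2 = 3 * y - 2 := by
    have : (2 * z * y ^ 2) * ((1 + z) * y ^ 2 - (3 * y - 2)) = 0 := by
      linear_combination h + ((1 + z) * y - 1) * cubic
    have hne : 2 * z * y ^ 2 ≠ 0 := by positivity
    exact sub_eq_zero.1 ((mul_eq_zero.1 this).resolve_left hne)
  obtain ⟨r, hr⟩ : ∃ r, r = 3 - 2 * (1 + z) * y := ⟨_, rfl⟩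
  have hr2 : r ^ 2 = 1 - 8 * z := by
    rw [hr]
    linear_combination 4 * (1 + z) * quadratic
  have hyr : y * (3 + r) = 4 := by
    rw [hr]
    linear_combination -2 * quadratic
  refine ⟨r, hr2, ?_⟩
  have hSr : 4 * z * y ^ 3 = S * (1 - r) := by
    rw [hr]
    linear_combination 2 * cubic
  have hfactor : (1 - r) * (3 + r) ^ 3 = 8 * (1 + 20 * z - 8 * z ^ 2 - r ^ 3) := by
    linear_combination (-r ^ 2 - 19 + 8 * z) * hr2
  have h8 : (2 : R) ^ 3 ≠ 0 := pow_ne_zero 3 two_ne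
  apply mul_left_cancel₀ h8
  linear_combination -S * hfactor - (3 + r) ^ 3 * hSr +
    4 * z * ((y * (3 + r)) ^ 2 + 4 * (y * (3 + r)) + 16) * hyr

end Discriminant

section GeneratingFunctions

open Finset PowerSeries

/-- The generating function of `f` in two variables: the inner variable marks the first argument
of `f` and the outer variable the second. -/
noncomputable def bivariate (f : ℕ → ℕ → ℕ) : ℚ⟦X⟧⟦X⟧ :=
  mk fun m => mk fun b => (f b m : ℚ)

theorem coeff_coeff_bivariate (f : ℕ → ℕ → ℕ) (b m : ℕ) :
    coeff b (coeff m (bivariate f)) = f b m := by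
  rw [bivariate, coeff_mk, coeff_mk]

theorem coeff_zero_bivariate_numAvoiders : coeff 0 (bivariate numAvoiders) = S1342 := by
  ext n
  rw [coeff_coeff_bivariate, S1342, coeff_mk, scount_p1342]

theorem coeff_coeff_indecomposables_mul_avoiders (b m : ℕ) :
    coeff b (coeff m (bivariate numIndecomposables * bivariate numAvoiders)) =
      ∑ j ∈ range (m + 1), (numAscentAvoiders b j (m - j) : ℚ) := by
  simp only [coeff_mul, map_sum, coeff_coeff_bivariate, numAscentAvoiders_eq_sum, Nat.cast_sum,
    Nat.cast_mul, Nat.sum_antidiagonal_eq_sum_range_succ_mk]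

theorem avoiders_eq_indecomposables_mul :
    bivariate numAvoiders = bivariate numIndecomposables * C S1342 := by
  ext m b
  rw [coeff_mul_C, coeff_mul, coeff_coeff_bivariate, ← numAscentAvoiders_zero_right,
    numAscentAvoiders_eq_sum, Nat.cast_sum]
  refine sum_congr rfl fun cd _ => ?_
  rw [coeff_coeff_bivariate, Nat.cast_mul, ← coeff_zero_bivariate_numAvoiders,
    coeff_coeff_bivariate]

theorem avoiders_eq_one_add_descents_add :
    bivariate numAvoiders = 1 + bivariate numDescentAvoiders +
      X * (bivariate numIndecomposables * bivariate numAvoiders) := by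
  ext m b
  rcases m with _ | m
  · rw [map_add, coeff_zero_X_mul, add_zero, map_add, map_add, coeff_coeff_bivariate,
      coeff_coeff_bivariate, coeff_zero_one]
    rcases b with _ | b
    · rw [numAvoiders_zero_zero, numDescentAvoiders_zero, coeff_zero_one, Nat.cast_zero, add_zero,
        Nat.cast_one]
    · rw [numAvoiders_eq_add (by omega), range_zero, sum_empty, add_zero, coeff_one,
        if_neg b.succ_ne_zero, zero_add]
  · rw [map_add, map_add, coeff_succ_X_mul, map_add, map_add, coeff_coeff_bivariate,
      coeff_coeff_bivariate, coeff_coeff_indecomposables_mul_avoiders, coeff_one,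
      if_neg m.succ_ne_zero, map_zero, zero_add, numAvoiders_eq_add (by omega), Nat.cast_add,
      Nat.cast_sum, add_tsub_cancel_right]

theorem X_mul_descents :
    X * bivariate numDescentAvoiders = C X * (X * bivariate numAvoiders +
      bivariate numDescentAvoiders - C (coeff 0 (bivariate numDescentAvoiders))) := by
  ext m b
  rw [coeff_C_mul]
  rcases m with _ | m
  · simp
  · rw [coeff_succ_X_mul, map_sub, map_add, coeff_succ_X_mul, coeff_C, if_neg m.succ_ne_zero,
      sub_zero, coeff_coeff_bivariate]
    rcases b with _ | b
    · rw [numDescentAvoiders_zero, coeff_zero_X_mul, Nat.cast_zero]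
    · rw [coeff_succ_X_mul, map_add, coeff_coeff_bivariate, coeff_coeff_bivariate,
        numDescentAvoiders_succ, Nat.cast_add]

theorem coeff_zero_descents : coeff 0 (bivariate numDescentAvoiders) = S1342 - 1 := by
  have h := congrArg (coeff 0) avoiders_eq_one_add_descents_add
  rw [coeff_zero_bivariate_numAvoiders, map_add, map_add, coeff_zero_X_mul, coeff_zero_one] at h
  linear_combination -h

theorem indecomposables_quadratic :
    C S1342 * (X - C X) * (bivariate numIndecomposables - X * bivariate numIndecomposables ^ 2) =
      X + C X * X * C S1342 * bivariate numIndecomposables - C X * C S1342 := by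
  have hE := X_mul_descents
  rw [coeff_zero_descents, map_sub, map_one] at hE
  have hA := avoiders_eq_one_add_descents_add
  have hT := avoiders_eq_indecomposables_mul
  rw [hT] at hA hE
  linear_combination hE + (X - C X) * hA

theorem coe_discriminant {R : Type*} [CommRing R] (z S : R) : (discriminant z S : R⟦X⟧) =
    C S * ((1 - C z) * X - C z) ^ 2 - 4 * X * (X - C z) * (X - C z * C S) := by
  have four : ((4 : Polynomial R) : R⟦X⟧) = 4 := Polynomial.coe_C 4
  simp only [discriminant, Polynomial.coe_sub, Polynomial.coe_mul, Polynomial.coe_pow,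
    Polynomial.coe_C, Polynomial.coe_X, four, map_sub, map_mul, Polynomial.C_1,
    Polynomial.coe_one]

theorem exists_sq_dvd_discriminant : ∃ D : ℚ⟦X⟧⟦X⟧,
    coeff 0 D ∈ IsLocalRing.maximalIdeal ℚ⟦X⟧ ∧ IsUnit (coeff 1 D) ∧
      D ^ 2 ∣ discriminant X S1342 := by
  refine ⟨X * (1 - C X - 2 * (X - C X) * bivariate numIndecomposables) - C X, ?_, ?_,
    C S1342, ?_⟩
  · rw [maximalIdeal_eq_span_X, Ideal.mem_span_singleton, map_sub, coeff_zero_X_mul, coeff_zero_C,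
      zero_sub, dvd_neg]
  · rw [isUnit_iff_constantCoeff, map_sub, coeff_C, if_neg one_ne_zero, sub_zero,
      show coeff 1 (X * _) = _ from coeff_succ_X_mul 0 _]
    simp
  · rw [coe_discriminant]
    linear_combination (4 * X * (X - C X)) * indecomposables_quadratic

theorem exists_sqrt_one_sub_eight_mul_X :
    ∃ r : ℚ⟦X⟧, r ^ 2 = 1 - 8 * X ∧ S1342 * (1 + 20 * X - 8 * X ^ 2 - r ^ 3) = 32 * X := by
  have two_ne : (2 : ℚ⟦X⟧) ≠ 0 := map_ne_zero_iff C C_injective |>.2 two_ne_zero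
  have S_ne_zero : S1342 ≠ 0 := by
    intro h
    have := congrArg (coeff 0) h
    simp [S1342, scount_p1342, numAvoiders_zero_zero] at this
  have : IsAdicComplete (IsLocalRing.maximalIdeal ℚ⟦X⟧) ℚ⟦X⟧ := by
    rw [maximalIdeal_eq_span_X]
    infer_instance
  obtain ⟨D, h₀, h₁, hD⟩ := exists_sq_dvd_discriminant
  obtain ⟨Y, hY, hdvd⟩ := exists_X_sub_C_pow_dvd h₀ h₁ hD
  rw [maximalIdeal_eq_span_X, Ideal.mem_span_singleton] at hY
  obtain ⟨y, rfl⟩ := hY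
  obtain ⟨h, h'⟩ := double_root_equations two_ne X_ne_zero hdvd
  exact exists_sqrt_parametrization two_ne X_ne_zero S_ne_zero h h'

end GeneratingFunctions

end Avoiding1342

/-- `(S(z)(1+20z−8z²) − 32z)² = S(z)²(1−8z)³`, i.e.
`S(z) = 32z / (1 + 20z − 8z² − (1−8z)^{3/2})`. -/
theorem gf_permutations_1342 :
    (S1342 * (1 + 20 * PowerSeries.X - 8 * PowerSeries.X ^ 2) - 32 * PowerSeries.X) ^ 2 =
      S1342 ^ 2 * (1 - 8 * PowerSeries.X : PowerSeries ℚ) ^ 3 := by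
  obtain ⟨r, hr, hS⟩ := Avoiding1342.exists_sqrt_one_sub_eight_mul_X
  have hcube : S1342 * (1 + 20 * PowerSeries.X - 8 * PowerSeries.X ^ 2) - 32 * PowerSeries.X =
      S1342 * r ^ 3 := by
    linear_combination hS
  rw [hcube, ← hr]
  ring
end
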